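/- arXiv:2303.09578 — 8 statements merged into one kernel-verified Lean document; each statement's English description precedes it below -/
import Mathlib

section
/- For all integers m ≥ 2 and f with 0 ≤ f ≤ m(m−1)/2, there exists a constant c > 0 such that for every n ≥ 1, every graph G on n vertices that contains no induced subgraph on m vertices with exactly f edges has a clique or an independent set of size greater than c · n^{1/(m−1)}. -/
/-!
The proof shows that a graph on at least `k ^ (m - 1)` vertices all of whose homogeneous sets have
fewer than `k` vertices realises *every* edge count `f ≤ m.choose 2` on some `m` vertices.

This goes by induction on `m`, as in the Erdős–Szekeres bound. A maximal independent set has fewer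
than `k` vertices, and the closed neighbourhoods of its vertices cover the graph, so some vertex has
at least `k ^ (m - 1)` neighbours when there are `k ^ m` vertices; by symmetry some vertex has that
many non-neighbours (`exists_large_nbhd`). Given `f ≤ (m + 1).choose 2`, either `f ≤ m.choose 2`,
and a vertex with many non-neighbours is added to an `m`-set with `f` edges among them, or `m ≤ f`,
and a vertex with many neighbours is added to an `m`-set with `f - m` edges (`exists_edgeCount_eq`).

Taking `k = ⌊n ^ (1 / (m - 1))⌋` gives the theorem with `c = 1 / 2`.
-/

/-- The number of edges of `G` induced on `S`, counted as the two-element subsets of `S` that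
are cliques. -/
def edgeCount {V : Type*} [DecidableEq V] (G : SimpleGraph V) [DecidableRel G.Adj]
    (S : Finset V) : ℕ :=
  ((S.powersetCard 2).filter (fun T => ∀ a ∈ T, ∀ b ∈ T, a ≠ b → G.Adj a b)).card

lemma edgeCount_insert {V : Type*} [DecidableEq V] (G : SimpleGraph V) [DecidableRel G.Adj]
    (S : Finset V) (v : V) (hv : v ∉ S) :
    edgeCount G (insert v S) = edgeCount G S + (S.filter (fun w => G.Adj v w)).card := by
  unfold edgeCount
  rw [Finset.powersetCard_succ_insert hv, Finset.filter_union, Finset.card_union_of_disjoint]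
  · congr 1
    symm
    apply Finset.card_bij (fun w _ => ({v, w} : Finset V))
    · intro w hw
      rw [Finset.mem_filter] at hw
      simp only [Finset.mem_filter, Finset.mem_image, Finset.mem_powersetCard]
      refine ⟨⟨{w}, ⟨by simpa using hw.1, by simp⟩, rfl⟩, ?_⟩
      intro a ha b hb hab
      have := hw.2.symm
      grind
    · intro a ha b hb hab
      have h : a ∈ ({v, b} : Finset V) := by rw [← hab]; simp
      grind
    · intro T hT
      simp only [Finset.mem_filter, Finset.mem_image, Finset.mem_powersetCard] at hT
      obtain ⟨⟨U, ⟨hU, hc⟩, rfl⟩, hT⟩ := hT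
      obtain ⟨w, rfl⟩ := Finset.card_eq_one.mp hc
      refine ⟨w, ?_, rfl⟩
      grind
  · rw [Finset.disjoint_left]
    intro T hT hT'
    simp only [Finset.mem_filter, Finset.mem_image, Finset.mem_powersetCard] at hT hT'
    grind

/-- If `r`-independent subsets of `A` have fewer than `k` elements, then some vertex has many
`r`-neighbours in `A`. It is applied with `r` both adjacency and non-adjacency. -/
lemma exists_large_nbhd {V : Type*} [DecidableEq V] (r : V → V → Prop) [DecidableRel r]
    (hr : ∀ a b, r a b → r b a) (A : Finset V) (k m : ℕ)
    (hind : ∀ S ⊆ A, (S : Set V).Pairwise (fun a b => ¬ r a b) → S.card < k)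
    (hA : k ^ (m + 1) ≤ A.card) :
    ∃ v ∈ A, k ^ m ≤ (A.filter (fun w => w ≠ v ∧ r v w)).card := by
  have hk : 0 < k := lt_of_le_of_lt (Nat.zero_le _) (hind ∅ (by simp) (by simp))
  classical
  obtain ⟨I, hI, hmax⟩ := Finset.exists_max_image
    (A.powerset.filter (fun S : Finset V => (S : Set V).Pairwise (fun a b => ¬ r a b)))
    Finset.card
    ⟨∅, by simp⟩
  simp only [Finset.mem_filter, Finset.mem_powerset] at hI hmax
  by_contra! hcon
  have hcover : A ⊆ I.biUnion (fun v => insert v (A.filter (fun w => w ≠ v ∧ r v w))) := by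
    intro w hw
    by_contra hnot
    simp only [Finset.mem_biUnion, Finset.mem_insert, Finset.mem_filter, not_exists, not_and,
      not_or] at hnot
    have hwI : w ∉ I := fun h => (hnot w h).1 rfl
    have hnr : ∀ v ∈ I, ¬ r v w := fun v hv => (hnot v hv).2 hw (hnot v hv).1
    have := hmax (insert w I) ⟨Finset.insert_subset hw hI.1, by
      rw [Finset.coe_insert]
      refine hI.2.insert ?_
      intro b hb _
      exact ⟨fun h => hnr b hb (hr _ _ h), hnr b hb⟩⟩
    rw [Finset.card_insert_of_notMem hwI] at this
    omega
  have h1 := Finset.card_le_card hcover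
  have h2 := Finset.card_biUnion_le_card_mul I
    (fun v => insert v (A.filter (fun w => w ≠ v ∧ r v w))) (k ^ m) (by
      intro v hv
      have := Finset.card_insert_le v (A.filter (fun w => w ≠ v ∧ r v w))
      have := hcon v (hI.1 hv)
      omega)
  have h3 := hind I hI.1 hI.2
  have h4 : I.card * k ^ m < k * k ^ m := Nat.mul_lt_mul_of_pos_right h3 (by positivity)
  rw [pow_succ'] at hA
  omega

/-- Every admissible edge count on `m + 1` vertices is realised inside a set of `k ^ m` vertices
whose homogeneous subsets have fewer than `k` elements. -/
lemma exists_edgeCount_eq {V : Type*} [DecidableEq V] (G : SimpleGraph V) [DecidableRel G.Adj]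
    (k m : ℕ) : ∀ (f : ℕ) (A : Finset V), f ≤ (m + 1).choose 2 →
    (∀ S ⊆ A, (S : Set V).Pairwise G.Adj → S.card < k) →
    (∀ S ⊆ A, (S : Set V).Pairwise (fun a b => ¬ G.Adj a b) → S.card < k) →
    k ^ m ≤ A.card → ∃ S ⊆ A, S.card = m + 1 ∧ edgeCount G S = f := by
  induction m with
  | zero =>
    intro f A hf _ _ hA
    obtain ⟨v, hv⟩ := Finset.card_pos.mp (by simpa using hA : 0 < A.card)
    refine ⟨{v}, by simpa using hv, by simp, ?_⟩
    have : f = 0 := by simpa using hf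
    subst this
    simp [edgeCount, Finset.powersetCard_eq_empty.mpr]
  | succ m ih =>
    intro f A hf hcl hin hA
    have hch : (m + 1 + 1).choose 2 = (m + 1) + (m + 1).choose 2 := by
      rw [Nat.choose_succ_succ' (m + 1) 1, Nat.choose_one_right]
    have hch' : m ≤ (m + 1).choose 2 := by
      rw [Nat.choose_succ_succ' m 1, Nat.choose_one_right]; omega
    by_cases hfm : f ≤ (m + 1).choose 2
    · obtain ⟨v, hv, hc⟩ := exists_large_nbhd (fun a b => ¬ G.Adj a b)
        (fun a b h h' => h h'.symm) A k m (by simpa using hcl) hA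
      obtain ⟨S, hS, hSc, he⟩ := ih f _ hfm
        (fun S hS => hcl S (hS.trans (Finset.filter_subset _ _)))
        (fun S hS => hin S (hS.trans (Finset.filter_subset _ _))) hc
      have hvS : v ∉ S := fun h => by simpa using hS h
      have hfil : S.filter (fun w => G.Adj v w) = ∅ :=
        Finset.filter_eq_empty_iff.mpr fun w hw => (Finset.mem_filter.mp (hS hw)).2.2
      refine ⟨insert v S, Finset.insert_subset hv (hS.trans (Finset.filter_subset _ _)), ?_, ?_⟩
      · rw [Finset.card_insert_of_notMem hvS, hSc]
      · rw [edgeCount_insert G S v hvS, hfil, he]; simp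
    · obtain ⟨v, hv, hc⟩ := exists_large_nbhd G.Adj (fun a b h => h.symm) A k m hin hA
      obtain ⟨S, hS, hSc, he⟩ := ih (f - (m + 1)) _ (by omega)
        (fun S hS => hcl S (hS.trans (Finset.filter_subset _ _)))
        (fun S hS => hin S (hS.trans (Finset.filter_subset _ _))) hc
      have hvS : v ∉ S := fun h => by simpa using hS h
      have hfil : S.filter (fun w => G.Adj v w) = S :=
        Finset.filter_true_of_mem fun w hw => (Finset.mem_filter.mp (hS hw)).2.2
      refine ⟨insert v S, Finset.insert_subset hv (hS.trans (Finset.filter_subset _ _)), ?_, ?_⟩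
      · rw [Finset.card_insert_of_notMem hvS, hSc]
      · rw [edgeCount_insert G S v hvS, hfil, he]; omega


/-- For all integers `m ≥ 2` and `0 ≤ f ≤ m(m-1)/2`, there exists `c > 0` such that for every
`n ≥ 1`, every graph on `n` vertices with no induced subgraph on `m` vertices and exactly `f`
edges has a clique or independent set of size greater than `c * n^(1/(m-1))`. -/
theorem stmt_0 (m : ℕ) (hm : 2 ≤ m) (f : ℕ) (hf : f ≤ m * (m - 1) / 2) :
    ∃ c : ℝ, 0 < c ∧ ∀ n : ℕ, 1 ≤ n → ∀ (G : SimpleGraph (Fin n)) [DecidableRel G.Adj],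
      (∀ S : Finset (Fin n), S.card = m →
        ((S.powersetCard 2).filter (fun T => ∀ a ∈ T, ∀ b ∈ T, a ≠ b → G.Adj a b)).card ≠ f) →
      ∃ S : Finset (Fin n),
        ((S : Set (Fin n)).Pairwise G.Adj ∨ (S : Set (Fin n)).Pairwise (fun a b => ¬ G.Adj a b)) ∧
        c * (n : ℝ) ^ ((1 : ℝ) / ((m : ℝ) - 1)) < (S.card : ℝ) := by
  obtain ⟨d, rfl⟩ : ∃ d, m = d + 1 := ⟨m - 1, by omega⟩
  refine ⟨1 / 2, by norm_num, ?_⟩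
  intro n hn G _ hfree
  have hd : (d : ℝ) ≠ 0 := by
    have : d ≠ 0 := by omega
    exact_mod_cast this
  have hexp : ((d + 1 : ℕ) : ℝ) - 1 = d := by push_cast; ring
  rw [hexp]
  set x : ℝ := (n : ℝ) ^ ((1 : ℝ) / d) with hx
  have hx1 : 1 ≤ x := Real.one_le_rpow (by exact_mod_cast hn) (by positivity)
  have hxd : x ^ d = n := by
    rw [hx, one_div, Real.rpow_inv_natCast_pow (by positivity) (by omega)]
  set k : ℕ := ⌊x⌋₊ with hk
  have hk1 : 1 ≤ k := Nat.le_floor (by exact_mod_cast hx1)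
  have hkx : (k : ℝ) ≤ x := Nat.floor_le (by linarith)
  have hxk : x < k + 1 := Nat.lt_floor_add_one x
  have hkn : k ^ d ≤ n := by
    have : (k : ℝ) ^ d ≤ n := by rw [← hxd]; gcongr
    exact_mod_cast this
  have hk1' : (1 : ℝ) ≤ k := by exact_mod_cast hk1
  by_contra! hcon
  have hlt : ∀ S : Finset (Fin n), ((S : Set (Fin n)).Pairwise G.Adj ∨
      (S : Set (Fin n)).Pairwise (fun a b => ¬ G.Adj a b)) → S.card < k := by
    intro S hS
    have := hcon S hS
    have h : (S.card : ℝ) < k := by linarith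
    exact_mod_cast h
  obtain ⟨S, -, hSc, he⟩ := exists_edgeCount_eq G k d f Finset.univ
    (by rw [Nat.choose_two_right]; exact hf)
    (fun S _ h => hlt S (Or.inl h)) (fun S _ h => hlt S (Or.inr h)) (by simpa using hkn)
  refine hfree S hSc ?_
  unfold edgeCount at he
  convert he
end

section
/- There exists a constant c > 0 such that for all n ≥ 16, every n-vertex 3-graph H in which no 4-element vertex set spans exactly 1 edge satisfies h(H) > c · (log n / log log n)^{1/2}, where log denotes the natural logarithm. -/
/-!
Let `s ≥ 1` and suppose `n ≥ (4 s) ^ (s ^ 2)`; it is shown that a 3-graph without 4-sets spanning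
exactly one edge has a homogeneous set of size `s`, and the bound follows by taking
`s = ⌊√(log n / log log n) / 4⌋`.

The homogeneous set is found greedily. Maintained are a set `R` of representatives, a class
`C r ∋ r` for each `r ∈ R`, and a reservoir `X` of further vertices, such that `R` together with any
`x ∈ X` is a clique and each `C r` together with any `x ∈ X` is a coclique (`State`).
At each step a vertex `v ∈ X` is removed from the reservoir.

* If for some `r ∈ R` at least a fraction `1 / (2 s)` of the remaining `x ∈ X` satisfy `r v x ∉ E`,
  then `v` joins the class of `r` and `X` shrinks to these `x`. For another `u ∈ C r`, none of
  `r u v`, `r u x`, `r v x` is an edge, so `u v x` is not an edge either: otherwise `r, u, v, x`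
  would span exactly one edge (`State.join`).
* Otherwise, as `|R| < s`, at least half of the remaining `x` satisfy `r v x ∈ E` for all `r ∈ R`,
  and `v` becomes a new representative (`State.newRep`).

Each step costs a factor of at most `4 s` in `|X|` and increases `∑ r ∈ R, |C r|` by one. After
`s ^ 2` steps either `R` or some class has at least `s` elements.
-/

section Greedy

variable {V : Type*} [DecidableEq V]

/-- No four vertices span exactly one edge. -/
def FourOneFree (E : Finset (Finset V)) : Prop :=
  ∀ S : Finset V, S.card = 4 → (E.filter (fun e => e ⊆ S)).card ≠ 1

/-- The configuration of the greedy procedure: representatives `R`, the class `C r` of each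
representative `r`, and the reservoir `X`. The values of `C` outside `R` are irrelevant. -/
structure State (E : Finset (Finset V)) (R : Finset V) (C : V → Finset V) (X : Finset V) :
    Prop where
  clique : ∀ T ⊆ R, T.card = 3 → T ∈ E
  clique_ext : ∀ a ∈ R, ∀ b ∈ R, a ≠ b → ∀ x ∈ X, {a, b, x} ∈ E
  self_mem : ∀ r ∈ R, r ∈ C r
  coclique : ∀ r ∈ R, ∀ T ⊆ C r, T.card = 3 → T ∉ E
  coclique_ext : ∀ r ∈ R, ∀ u ∈ C r, ∀ w ∈ C r, u ≠ w → ∀ x ∈ X, {u, w, x} ∉ E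
  disj : ∀ r ∈ R, ∀ u ∈ C r, u ∉ X

theorem triples_insert {P : Finset V → Prop} {S : Finset V} {v : V}
    (h1 : ∀ T ⊆ S, T.card = 3 → P T)
    (h2 : ∀ a ∈ S, ∀ b ∈ S, a ≠ b → P {a, b, v}) :
    ∀ T ⊆ insert v S, T.card = 3 → P T := by
  intro T hT hc
  by_cases hv : v ∈ T
  · have h3 : (T.erase v).card = 2 := by rw [Finset.card_erase_of_mem hv, hc]
    obtain ⟨a, b, hab, h⟩ := Finset.card_eq_two.1 h3
    have hsub : T.erase v ⊆ S := by
      intro x hx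
      have := hT (Finset.mem_of_mem_erase hx)
      rcases Finset.mem_insert.1 this with rfl | h
      · exact absurd rfl (Finset.ne_of_mem_erase hx)
      · exact h
    have hTe : T = {a, b, v} := by
      rw [← Finset.insert_erase hv, h]
      ext x
      simp only [Finset.mem_insert, Finset.mem_singleton]
      tauto
    rw [hTe]
    exact h2 a (hsub (by simp [h])) b (hsub (by simp [h])) hab
  · refine h1 T (fun x hx => ?_) hc
    rcases Finset.mem_insert.1 (hT hx) with rfl | h
    · exact absurd hx hv
    · exact h

theorem FourOneFree.notMem {E : Finset (Finset V)} (h3 : ∀ e ∈ E, e.card = 3)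
    (hE : FourOneFree E) {r u v x : V} (hru : r ≠ u) (hrv : r ≠ v) (hrx : r ≠ x) (huv : u ≠ v)
    (hux : u ≠ x) (hvx : v ≠ x) (h1 : {r, u, v} ∉ E) (h2 : {r, u, x} ∉ E)
    (h4 : {r, v, x} ∉ E) : {u, v, x} ∉ E := by
  intro h
  have hS : ({r, u, v, x} : Finset V).card = 4 := by
    rw [Finset.card_eq_succ]
    refine ⟨r, {u, v, x}, ?_, rfl, h3 _ h⟩
    simp [hru, hrv, hrx]
  apply hE _ hS
  rw [Finset.card_eq_one]
  refine ⟨{u, v, x}, ?_⟩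
  ext e
  simp only [Finset.mem_filter, Finset.mem_singleton]
  constructor
  · rintro ⟨he, hs⟩
    have hc : (({r, u, v, x} : Finset V) \ e).card = 1 := by
      rw [Finset.card_sdiff_of_subset hs, hS, h3 e he]
    obtain ⟨a, ha⟩ := Finset.card_eq_one.1 hc
    have hae : e = ({r, u, v, x} : Finset V) \ {a} := by
      rw [← ha, Finset.sdiff_sdiff_eq_self hs]
    have haS : a ∈ ({r, u, v, x} : Finset V) :=
      (Finset.mem_sdiff.1 (ha ▸ Finset.mem_singleton_self a)).1
    simp only [Finset.mem_insert, Finset.mem_singleton] at haS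
    rcases haS with rfl | rfl | rfl | rfl
    · rw [hae]; ext y; simp only [Finset.mem_sdiff, Finset.mem_insert, Finset.mem_singleton]; grind
    · exfalso; apply h4; convert he using 1; rw [hae]; ext y
      simp only [Finset.mem_sdiff, Finset.mem_insert, Finset.mem_singleton]; grind
    · exfalso; apply h2; convert he using 1; rw [hae]; ext y
      simp only [Finset.mem_sdiff, Finset.mem_insert, Finset.mem_singleton]; grind
    · exfalso; apply h1; convert he using 1; rw [hae]; ext y
      simp only [Finset.mem_sdiff, Finset.mem_insert, Finset.mem_singleton]; grind
  · rintro rfl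
    exact ⟨h, Finset.subset_insert _ _⟩

variable {E : Finset (Finset V)} {R X : Finset V} {C : V → Finset V}

theorem triple_swap (a b c : V) : ({a, b, c} : Finset V) = {b, a, c} :=
  Finset.insert_comm a b {c}

/-- The vertex `v` joins the class of `r`. -/
theorem State.join (h3 : ∀ e ∈ E, e.card = 3) (hE : FourOneFree E) (h : State E R C X) {v r : V}
    (hv : v ∈ X) (hr : r ∈ R) :
    State E R (Function.update C r (insert v (C r)))
      ((X.erase v).filter (fun x => {r, v, x} ∉ E)) := by
  have hrC := h.self_mem r hr
  -- the non-edges `u v x` for `u` in the old class of `r`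
  have key : ∀ u ∈ C r, ∀ x ∈ X, x ≠ v → {r, v, x} ∉ E → {u, v, x} ∉ E := by
    intro u hu x hx hxv hn
    by_cases hru : r = u
    · exact hru ▸ hn
    have huX := h.disj r hr u hu
    have hrX := h.disj r hr r hrC
    exact hE.notMem h3 hru (fun e => hrX (e ▸ hv)) (fun e => hrX (e ▸ hx))
      (fun e => huX (e ▸ hv)) (fun e => huX (e ▸ hx)) hxv.symm
      (h.coclique_ext r hr r hrC u hu hru v hv) (h.coclique_ext r hr r hrC u hu hru x hx) hn
  constructor
  · exact h.clique
  · intro a ha b hb hab x hx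
    simp only [Finset.mem_filter, Finset.mem_erase] at hx
    exact h.clique_ext a ha b hb hab x hx.1.2
  · intro q hq
    by_cases hqr : q = r
    · subst hqr; simp [hrC]
    · simpa [Function.update_of_ne hqr] using h.self_mem q hq
  · intro q hq
    by_cases hqr : q = r
    · subst hqr
      rw [Function.update_self]
      exact triples_insert (P := fun T => T ∉ E) (h.coclique q hq)
        (fun a ha b hb hab => h.coclique_ext q hq a ha b hb hab v hv)
    · rw [Function.update_of_ne hqr]
      exact h.coclique q hq
  · intro q hq u hu w hw huw x hx
    simp only [Finset.mem_filter, Finset.mem_erase] at hx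
    obtain ⟨⟨hxv, hxX⟩, hn⟩ := hx
    by_cases hqr : q = r
    · subst hqr
      rw [Function.update_self, Finset.mem_insert] at hu hw
      rcases hu with rfl | hu <;> rcases hw with rfl | hw
      · exact absurd rfl huw
      · rw [triple_swap]; exact key w hw x hxX hxv hn
      · exact key u hu x hxX hxv hn
      · exact h.coclique_ext q hq u hu w hw huw x hxX
    · rw [Function.update_of_ne hqr] at hu hw
      exact h.coclique_ext q hq u hu w hw huw x hxX
  · intro q hq u hu hx
    simp only [Finset.mem_filter, Finset.mem_erase] at hx
    by_cases hqr : q = r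
    · subst hqr
      rw [Function.update_self, Finset.mem_insert] at hu
      rcases hu with rfl | hu
      · exact hx.1.1 rfl
      · exact h.disj q hq u hu hx.1.2
    · rw [Function.update_of_ne hqr] at hu
      exact h.disj q hq u hu hx.1.2

/-- The vertex `v` becomes a new representative, with class `{v}`. -/
theorem State.newRep (h : State E R C X) {v : V} (hv : v ∈ X) :
    State E (insert v R) (Function.update C v {v})
      ((X.erase v).filter (fun x => ∀ r ∈ R, {r, v, x} ∈ E)) := by
  have hne : ∀ q ∈ R, q ≠ v := fun q hq e => h.disj q hq q (h.self_mem q hq) (e ▸ hv)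
  constructor
  · exact triples_insert h.clique (fun a ha b hb hab => h.clique_ext a ha b hb hab v hv)
  · intro a ha b hb hab x hx
    simp only [Finset.mem_filter, Finset.mem_erase] at hx
    rw [Finset.mem_insert] at ha hb
    rcases ha with rfl | ha <;> rcases hb with rfl | hb
    · exact absurd rfl hab
    · rw [triple_swap]; exact hx.2 b hb
    · exact hx.2 a ha
    · exact h.clique_ext a ha b hb hab x hx.1.2
  · intro q hq
    rcases Finset.mem_insert.1 hq with rfl | hq
    · simp
    · rw [Function.update_of_ne (hne q hq)]; exact h.self_mem q hq
  · intro q hq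
    rcases Finset.mem_insert.1 hq with rfl | hq
    · rw [Function.update_self]
      intro T hT hc
      have := Finset.card_le_card hT
      rw [Finset.card_singleton] at this
      omega
    · rw [Function.update_of_ne (hne q hq)]; exact h.coclique q hq
  · intro q hq u hu w hw huw x hx
    simp only [Finset.mem_filter, Finset.mem_erase] at hx
    rcases Finset.mem_insert.1 hq with rfl | hq
    · rw [Function.update_self, Finset.mem_singleton] at hu hw
      exact absurd (hu.trans hw.symm) huw
    · rw [Function.update_of_ne (hne q hq)] at hu hw
      exact h.coclique_ext q hq u hu w hw huw x hx.1.2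
  · intro q hq u hu hx
    simp only [Finset.mem_filter, Finset.mem_erase] at hx
    rcases Finset.mem_insert.1 hq with rfl | hq
    · rw [Function.update_self, Finset.mem_singleton] at hu
      exact hx.1.1 hu
    · rw [Function.update_of_ne (hne q hq)] at hu
      exact h.disj q hq u hu hx.1.2

/-- One step of the greedy procedure. -/
theorem State.step (h3 : ∀ e ∈ E, e.card = 3) (hE : FourOneFree E) (h : State E R C X) {s N : ℕ}
    (hs : 0 < s) (hR : R.card ≤ s) (hN : 0 < N) (hX : 4 * s * N ≤ X.card) :
    ∃ R' C' X', State E R' C' X' ∧ N ≤ X'.card ∧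
      ∑ r ∈ R', (C' r).card = ∑ r ∈ R, (C r).card + 1 := by
  have hsN : 1 ≤ s * N := Nat.mul_pos hs hN
  obtain ⟨v, hv⟩ : X.Nonempty := by
    rw [← Finset.card_pos]; nlinarith
  have hY : (X.erase v).card = X.card - 1 := Finset.card_erase_of_mem hv
  have hY2 : 2 * (s * N) ≤ (X.erase v).card := by
    rw [hY]; apply Nat.le_sub_of_add_le; nlinarith
  by_cases hcase : ∃ r ∈ R, N ≤ ((X.erase v).filter (fun x => {r, v, x} ∉ E)).card
  · obtain ⟨r, hr, hc⟩ := hcase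
    refine ⟨R, _, _, h.join h3 hE hv hr, hc, ?_⟩
    have hvC : v ∉ C r := fun hm => h.disj r hr v hm hv
    rw [← Finset.add_sum_erase R _ hr, ← Finset.add_sum_erase R (fun r => (C r).card) hr,
      Function.update_self, Finset.card_insert_of_notMem hvC]
    have : ∑ x ∈ R.erase r, (Function.update C r (insert v (C r)) x).card
        = ∑ x ∈ R.erase r, (C x).card :=
      Finset.sum_congr rfl (fun x hx => by
        rw [Function.update_of_ne (Finset.ne_of_mem_erase hx)])
    rw [this]; ring
  · push Not at hcase
    have hne : ∀ q ∈ R, q ≠ v := fun q hq e => h.disj q hq q (h.self_mem q hq) (e ▸ hv)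
    refine ⟨_, _, _, h.newRep hv, ?_, ?_⟩
    · have hcover : X.erase v ⊆ (X.erase v).filter (fun x => ∀ r ∈ R, {r, v, x} ∈ E) ∪
          R.biUnion (fun r => (X.erase v).filter (fun x => {r, v, x} ∉ E)) := by
        intro x hx
        simp only [Finset.mem_union, Finset.mem_filter, Finset.mem_biUnion]
        by_cases hall : ∀ r ∈ R, {r, v, x} ∈ E
        · exact Or.inl ⟨hx, hall⟩
        · push Not at hall
          obtain ⟨r, hr, hn⟩ := hall
          exact Or.inr ⟨r, hr, hx, hn⟩
      have h1 := (Finset.card_le_card hcover).trans (Finset.card_union_le _ _)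
      have h2 := Finset.card_biUnion_le_card_mul R
        (fun r => (X.erase v).filter (fun x => {r, v, x} ∉ E)) N (fun r hr => (hcase r hr).le)
      have h4 : R.card * N ≤ s * N := Nat.mul_le_mul_right N hR
      have h5 : N ≤ s * N := Nat.le_mul_of_pos_left N hs
      omega
    · have hvR : v ∉ R := fun hm => hne v hm rfl
      rw [Finset.sum_insert hvR, Function.update_self, Finset.card_singleton, add_comm]
      congr 1
      exact Finset.sum_congr rfl (fun x hx => by rw [Function.update_of_ne (hne x hx)])

theorem exists_homogeneous [Fintype V] (h3 : ∀ e ∈ E, e.card = 3) (hE : FourOneFree E) {s : ℕ}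
    (hs : 0 < s) (hV : (4 * s) ^ (s ^ 2) ≤ Fintype.card V) :
    ∃ S : Finset V, ((∀ T ⊆ S, T.card = 3 → T ∈ E) ∨ (∀ T ⊆ S, T.card = 3 → T ∉ E)) ∧
      s ≤ S.card := by
  by_contra! hno
  have hRlt : ∀ {R X : Finset V} {C : V → Finset V}, State E R C X → R.card < s :=
    fun h => hno _ (Or.inl h.clique)
  have main : ∀ k ≤ s ^ 2, ∃ R C X, State E R C X ∧ (4 * s) ^ (s ^ 2 - k) ≤ X.card ∧
      ∑ r ∈ R, (C r).card = k := by
    intro k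
    induction k with
    | zero =>
      intro _
      refine ⟨∅, fun _ => ∅, Finset.univ, ?_, by simpa using hV, by simp⟩
      constructor <;> simp
    | succ k ih =>
      intro hk
      obtain ⟨R, C, X, h, hX, hsum⟩ := ih (by omega)
      have hexp : s ^ 2 - k = (s ^ 2 - (k + 1)) + 1 := by omega
      rw [hexp, pow_succ, mul_comm] at hX
      obtain ⟨R', C', X', h', hX', hsum'⟩ :=
        h.step h3 hE hs (hRlt h).le (by positivity) hX
      exact ⟨R', C', X', h', hX', by rw [hsum', hsum]⟩
  obtain ⟨R, C, X, h, -, hsum⟩ := main _ le_rfl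
  have hle : ∑ r ∈ R, (C r).card ≤ R.card * s :=
    (Finset.sum_le_card_nsmul R _ s (fun r hr => (hno _ (Or.inr (h.coclique r hr))).le)).trans_eq
      (smul_eq_mul _ _)
  have := hRlt h
  nlinarith

end Greedy

/-- Every `s ≤ √(log n / log log n) / 4` satisfies the size condition of `exists_homogeneous`. -/
theorem pow_floor_le {n s : ℕ} (hn : 16 ≤ n) (hs : 0 < s)
    (hle : (s : ℝ) ≤ Real.sqrt (Real.log n / Real.log (Real.log n)) / 4) :
    (4 * s) ^ (s ^ 2) ≤ n := by
  have hn' : (16 : ℝ) ≤ n := by exact_mod_cast hn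
  -- `log 16 = 4 log 2 > e`, hence `log log n ≥ 1`
  have hlog16 : Real.exp 1 ≤ Real.log n := by
    have h1 : Real.log 16 ≤ Real.log n := Real.log_le_log (by norm_num) hn'
    have h2 : Real.log 16 = 4 * Real.log 2 := by
      rw [show (16 : ℝ) = 2 ^ 4 by norm_num, Real.log_pow]; norm_num
    linarith [Real.log_two_gt_d9, Real.exp_one_lt_d9]
  have hL : 0 < Real.log n := (Real.exp_pos 1).trans_le hlog16
  have hLL : 1 ≤ Real.log (Real.log n) := (Real.le_log_iff_exp_le hL).2 hlog16
  have hs1 : (1 : ℝ) ≤ s := by exact_mod_cast hs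
  have hy : (4 * (s : ℝ)) ^ 2 ≤ Real.log n / Real.log (Real.log n) := by
    have := Real.sq_sqrt (show 0 ≤ Real.log n / Real.log (Real.log n) by positivity)
    rw [← this]
    gcongr
    linarith
  have hy2 : (4 * (s : ℝ)) ^ 2 * Real.log (Real.log n) ≤ Real.log n :=
    (le_div_iff₀ (by linarith)).1 hy
  have h4s : 4 * (s : ℝ) ≤ Real.log n := by nlinarith
  have hlog : Real.log (4 * s) ≤ Real.log (Real.log n) :=
    Real.log_le_log (by linarith) h4s
  have hfin : Real.log ((4 * (s : ℝ)) ^ (s ^ 2)) ≤ Real.log n := by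
    rw [Real.log_pow]
    push_cast
    have := mul_le_mul_of_nonneg_left hlog (sq_nonneg (s : ℝ))
    nlinarith [mul_nonneg (sq_nonneg (s : ℝ)) (by linarith : 0 ≤ Real.log (Real.log n))]
  have := (Real.log_le_log_iff (by positivity) (by linarith)).1 hfin
  exact_mod_cast this

/-- There is `c > 0` such that for all `n ≥ 16`, every `n`-vertex 3-graph in which no 4-element
vertex set spans exactly 1 edge has a homogeneous set of size greater than
`c * (log n / log log n)^(1/2)`. -/
theorem stmt_1 :
    ∃ c : ℝ, 0 < c ∧ ∀ n : ℕ, 16 ≤ n → ∀ E : Finset (Finset (Fin n)),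
      (∀ e ∈ E, e.card = 3) →
      (∀ S : Finset (Fin n), S.card = 4 → (E.filter (fun e => e ⊆ S)).card ≠ 1) →
      ∃ S : Finset (Fin n),
        ((∀ T ⊆ S, T.card = 3 → T ∈ E) ∨ (∀ T ⊆ S, T.card = 3 → T ∉ E)) ∧
        c * Real.sqrt (Real.log n / Real.log (Real.log n)) < (S.card : ℝ) := by
  refine ⟨1 / 16, by norm_num, fun n hn E h3 hE => ?_⟩
  set y := Real.sqrt (Real.log n / Real.log (Real.log n)) with hy
  have hy0 : 0 ≤ y := Real.sqrt_nonneg _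
  have hfl : ((⌊y / 4⌋₊ : ℕ) : ℝ) ≤ y / 4 := Nat.floor_le (by positivity)
  have hlt : y / 4 < (⌊y / 4⌋₊ : ℕ) + 1 := Nat.lt_floor_add_one _
  rcases Nat.eq_zero_or_pos ⌊y / 4⌋₊ with h0 | hpos
  · -- here `y < 4`, and a single vertex suffices
    refine ⟨{⟨0, by omega⟩}, Or.inr (fun T hT hc => ?_), ?_⟩
    · have := Finset.card_le_card hT
      rw [Finset.card_singleton] at this
      omega
    · rw [h0] at hlt
      push_cast [Finset.card_singleton] at hlt ⊢
      linarith
  · obtain ⟨S, hS, hc⟩ := exists_homogeneous h3 hE hpos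
      (by rw [Fintype.card_fin]; exact pow_floor_le hn hpos hfl)
    refine ⟨S, hS, ?_⟩
    have h1 : (1 : ℝ) ≤ (⌊y / 4⌋₊ : ℕ) := by exact_mod_cast hpos
    have h2 : ((⌊y / 4⌋₊ : ℕ) : ℝ) ≤ S.card := by exact_mod_cast hc
    linarith
end

section
/- For all sufficiently large n, there exists an n-vertex 3-graph H in which every 4-element vertex set spans exactly 0, 1, or 4 edges (so H is (4,2)-free and (4,3)-free), and every clique of H and every coclique of H has size less than n^{1/2} + n^{0.3}. -/
/-!
The 3-graph consists of the collinear triples of a suitable `n`-point subset `X` of an affine plane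
`F × F` over a prime field `F = ZMod p`. Two collinear triples among four points share two points
and so lie on one line; hence four points span 0, 1 or 4 edges (`exists_threeGraph`). Cliques are
collinear sets and cocliques are arcs (sets with no three collinear points).

Taking `p` close to `√n` and nearly all of the plane would require strong bounds on prime gaps.
Instead Bertrand's postulate gives a prime `16k < p ≤ 32k` with `k = ⌊√n⌋ + 1`, and `X` is a random
`n`-subset. Writing `δ = n / p²`, a union bound (`exists_avoiding`) reduces the problem to showing
`|B| δ ^ k < 1` for the family `B` of `k`-arcs and collinear `k`-sets. The collinear sets are easy
to count (`card_collinear_le`).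

Arcs are counted in the style of Kleitman and Winston (`card_arcs_le`). Fix `s` points `S` of an
arc. The rest of the arc is independent in the graph joining two points seen in the same direction
from a point of `S`. By Cauchy–Schwarz over the `p + 1` directions, and because a line meets `S` at
most twice, this graph has a vertex adjacent to a proportion `s / (4(p+1))` of `W` for every set `W`
of more than `2(p+1)` points (`exists_large_degree`). Branching on such vertices bounds the
independence polynomial at `x` by `(1 + p²) ^ t (1 + x) ^ (2(p+1))` for `t` about `(p/s) log p`
(`indepSum_le_of_dense`). With `x = 2δ` and `s = t = ⌈k ^ (3/4)⌉` the expected number of `k`-arcs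
in `X` is at most `2 ^ (-k) exp (k/2 + o(k)) < 1/2`.
-/

/-! ### Collinearity and arcs in the affine plane -/

/-- Three points of the affine plane `F × F` are collinear: the vectors `b - a` and `c - a` have
vanishing determinant. Triples with a repeated point count as collinear. -/
def Col {F : Type*} [Field F] (a b c : F × F) : Prop :=
  (b.1 - a.1) * (c.2 - a.2) = (c.1 - a.1) * (b.2 - a.2)

/-- An arc: a set of points with no three distinct collinear members. -/
def IsArc {F : Type*} [Field F] (A : Finset (F × F)) : Prop :=
  ∀ a ∈ A, ∀ b ∈ A, ∀ c ∈ A, a ≠ b → a ≠ c → b ≠ c → ¬ Col a b c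

/-- A set of points contained in a line. -/
def IsCollinear {F : Type*} [Field F] (A : Finset (F × F)) : Prop :=
  ∀ a ∈ A, ∀ b ∈ A, ∀ c ∈ A, Col a b c

section Plane

variable {F : Type*} [Field F]

/-- Three points on the line through two distinct points `u`, `v` are collinear. -/
lemma col_of_col_pair {u v a b c : F × F} (huv : u ≠ v) (ha : Col a u v) (hb : Col b u v)
    (hc : Col c u v) : Col a b c := by
  unfold Col at *
  have h : v.1 - u.1 ≠ 0 ∨ v.2 - u.2 ≠ 0 := by
    by_contra! h
    exact huv (Prod.ext (sub_eq_zero.1 h.1).symm (sub_eq_zero.1 h.2).symm)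
  rcases h with h | h <;> refine mul_left_cancel₀ h ?_
  · linear_combination (c.1 - b.1) * ha + (a.1 - c.1) * hb + (b.1 - a.1) * hc
  · linear_combination (c.2 - b.2) * ha + (a.2 - c.2) * hb + (b.2 - a.2) * hc

lemma Col.rotate {a b c : F × F} (h : Col a b c) : Col c a b := by
  unfold Col at *
  linear_combination h

/-- The points on the line through two distinct points have pairwise distinct first coordinates or
pairwise distinct second coordinates, so there are at most `|F|` of them. -/
lemma card_le_of_col_pair [Fintype F] {u v : F × F} (huv : u ≠ v) (L : Finset (F × F))
    (hL : ∀ w ∈ L, Col w u v) : L.card ≤ Fintype.card F := by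
  have h : v.1 - u.1 ≠ 0 ∨ v.2 - u.2 ≠ 0 := by
    by_contra! h
    exact huv (Prod.ext (sub_eq_zero.1 h.1).symm (sub_eq_zero.1 h.2).symm)
  unfold Col at hL
  rcases h with h | h
  · refine Finset.card_le_card_of_injOn (t := Finset.univ) Prod.fst
      (fun _ _ => Finset.mem_coe.2 (Finset.mem_univ _)) ?_
    intro x hx y hy hxy
    refine Prod.ext hxy (mul_left_cancel₀ h ?_)
    have hx' := hL x hx
    have hy' := hL y hy
    linear_combination hx' - hy' + (v.2 - u.2) * hxy
  · refine Finset.card_le_card_of_injOn (t := Finset.univ) Prod.snd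
      (fun _ _ => Finset.mem_coe.2 (Finset.mem_univ _)) ?_
    intro x hx y hy hxy
    refine Prod.ext (mul_left_cancel₀ h ?_) hxy
    have hx' := hL x hx
    have hy' := hL y hy
    linear_combination -hx' + hy' + (v.1 - u.1) * hxy

/-- A line through two distinct points meets an arc in at most two points. -/
lemma card_arc_col_le_two [DecidableEq F] {S : Finset (F × F)} (hS : IsArc S) {u v : F × F}
    (huv : u ≠ v) (P : F × F → Prop) [DecidablePred P] (hP : ∀ a, P a → Col a u v) :
    (S.filter P).card ≤ 2 := by
  by_contra! h
  obtain ⟨a, b, c, ha, hb, hc, hab, hac, hbc⟩ := Finset.two_lt_card_iff.1 h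
  simp only [Finset.mem_filter] at ha hb hc
  exact hS a ha.1 b hb.1 c hc.1 hab hac hbc
    (col_of_col_pair huv (hP _ ha.2) (hP _ hb.2) (hP _ hc.2))

open Classical in
/-- The direction of the line from `a` to `u`, as a point of the line at infinity `Option F`;
the vertical direction is `none`. -/
noncomputable def direction (a u : F × F) : Option F :=
  if u.1 = a.1 then none else some ((u.2 - a.2) / (u.1 - a.1))

lemma col_of_direction_eq {a u v : F × F} (h : direction a u = direction a v) : Col a u v := by
  unfold direction at h
  unfold Col
  split_ifs at h with h1 h2 h2
  · rw [h1, h2]; ring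
  · have h1' := sub_ne_zero.2 h1
    have h2' := sub_ne_zero.2 h2
    have h3 := Option.some.inj h
    rw [div_eq_div_iff h1' h2'] at h3
    linear_combination -h3

open Classical in
/-- Cauchy–Schwarz over the `|F| + 1` directions at `a`. -/
lemma sq_card_le_direction [Fintype F] (a : F × F) (W : Finset (F × F)) :
    (W.card : ℝ) ^ 2 ≤ (Fintype.card F + 1) *
      (W.card + (W.offDiag.filter fun z => direction a z.1 = direction a z.2).card) := by
  have h1 : (W.card : ℝ) = ∑ d : Option F, ((W.filter fun u => direction a u = d).card : ℝ) := by
    exact_mod_cast Finset.card_eq_sum_card_fiberwise (f := direction a) (t := Finset.univ)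
      (fun _ _ => Finset.mem_coe.2 (Finset.mem_univ _))
  have h2 := sq_sum_le_card_mul_sum_sq (s := (Finset.univ : Finset (Option F)))
    (f := fun d => ((W.filter fun u => direction a u = d).card : ℝ))
  rw [← h1] at h2
  have h3 : ∑ d : Option F, ((W.filter fun u => direction a u = d).card : ℝ) ^ 2 =
      ((W ×ˢ W).filter fun z => direction a z.1 = direction a z.2).card := by
    rw [Finset.card_eq_sum_card_fiberwise (f := fun z => direction a z.1) (t := Finset.univ)
      (fun _ _ => Finset.mem_coe.2 (Finset.mem_univ _))]
    push_cast
    refine Finset.sum_congr rfl fun d _ => ?_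
    rw [sq, ← Nat.cast_mul, ← Finset.card_product]
    congr 2
    ext z
    simp only [Finset.mem_product, Finset.mem_filter]
    grind
  have h4 : ((W ×ˢ W).filter fun z => direction a z.1 = direction a z.2).card ≤
      W.card + (W.offDiag.filter fun z => direction a z.1 = direction a z.2).card := by
    rw [← Finset.diag_union_offDiag, Finset.filter_union]
    refine (Finset.card_union_le _ _).trans (Nat.add_le_add_right ?_ _)
    exact (Finset.card_filter_le _ _).trans (by simp)
  have h5 : (Finset.univ : Finset (Option F)).card = Fintype.card F + 1 := by simp
  rw [h3, h5] at h2
  push_cast at h2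
  refine h2.trans (mul_le_mul_of_nonneg_left (by exact_mod_cast h4) (by positivity))

/-- Two points are joined when they are in the same direction from some point of `S`. -/
def secAdj (S : Finset (F × F)) (u v : F × F) : Prop :=
  ∃ a ∈ S, direction a u = direction a v

open Classical in
/-- The graph `secAdj S` of an arc `S` is dense on every set `W` of more than `2(|F|+1)` points:
some point of `W` is joined to a `|S| / (4(|F|+1))` proportion of `W`. The pairs of `W` seen in
one direction from `a` are counted by Cauchy–Schwarz, and each pair is seen in one direction by at
most two points `a ∈ S` because `S` is an arc. -/
lemma exists_large_degree [Fintype F] {S : Finset (F × F)} (hS : IsArc S) (W : Finset (F × F))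
    (hW : 2 * (Fintype.card F + 1) < W.card) :
    ∃ w ∈ W, ((W.filter fun v => v ≠ w ∧ ¬ secAdj S w v).card : ℝ) ≤
      (1 - S.card / (4 * (Fintype.card F + 1))) * W.card := by
  set q : ℝ := (Fintype.card F : ℝ) + 1 with hq
  have hq0 : 0 < q := by positivity
  have hWq : 2 * q < W.card := by rw [hq]; exact_mod_cast hW
  have hW0 : (0 : ℝ) < W.card := by linarith
  have hpairs : (S.card : ℝ) * ((W.card : ℝ) ^ 2 / (2 * q)) ≤
      2 * (W.offDiag.filter fun z => secAdj S z.1 z.2).card := by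
    have h1 : ∀ a ∈ S, (W.card : ℝ) ^ 2 / (2 * q) ≤
        ((W.offDiag.filter fun z => direction a z.1 = direction a z.2).card : ℝ) := by
      intro a _
      have := sq_card_le_direction a W
      rw [← hq] at this
      rw [div_le_iff₀ (by positivity)]
      nlinarith
    have h2 := Finset.card_nsmul_le_sum S _ _ h1
    rw [nsmul_eq_mul] at h2
    refine h2.trans ?_
    have h3 : ∑ a ∈ S, (W.offDiag.filter fun z => direction a z.1 = direction a z.2).card =
        ∑ z ∈ W.offDiag, (S.filter fun a => direction a z.1 = direction a z.2).card :=
      Finset.sum_card_bipartiteAbove_eq_sum_card_bipartiteBelow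
        (fun a (z : (F × F) × (F × F)) => direction a z.1 = direction a z.2)
    have h4 : ∑ z ∈ W.offDiag, (S.filter fun a => direction a z.1 = direction a z.2).card ≤
        ∑ z ∈ W.offDiag, if secAdj S z.1 z.2 then 2 else 0 := by
      refine Finset.sum_le_sum fun z hz => ?_
      split_ifs with h
      · exact card_arc_col_le_two hS (Finset.mem_offDiag.1 hz).2.2 _
          (fun a ha => col_of_direction_eq ha)
      · rw [Nat.le_zero, Finset.card_eq_zero, Finset.filter_eq_empty_iff]
        exact fun a ha hd => h ⟨a, ha, hd⟩
    rw [← Finset.sum_filter, Finset.sum_const, smul_eq_mul, ← h3] at h4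
    have : ((∑ a ∈ S, (W.offDiag.filter fun z => direction a z.1 = direction a z.2).card : ℕ) : ℝ)
      ≤ ((W.offDiag.filter fun z => secAdj S z.1 z.2).card * 2 : ℕ) := by exact_mod_cast h4
    push_cast at this
    linarith
  have hdeg : (W.offDiag.filter fun z => secAdj S z.1 z.2).card =
      ∑ w ∈ W, (W.filter fun v => v ≠ w ∧ secAdj S w v).card := by
    rw [Finset.card_eq_sum_card_fiberwise (f := Prod.fst) (t := W)
      (fun z hz => (Finset.mem_offDiag.1 (Finset.mem_filter.1 hz).1).1)]
    refine Finset.sum_congr rfl fun w hw => ?_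
    refine Finset.card_bij' (fun z _ => z.2) (fun v _ => (w, v)) ?_ ?_ ?_ ?_
    · simp only [Finset.mem_filter, Finset.mem_offDiag]; grind
    · simp only [Finset.mem_filter, Finset.mem_offDiag]; grind
    · simp only [Finset.mem_filter, Finset.mem_offDiag]; grind
    · simp
  have hne : W.Nonempty := Finset.card_pos.1 (by exact_mod_cast hW0)
  obtain ⟨w, hw, hle⟩ := Finset.exists_le_of_sum_le hne
    (f := fun _ => (S.card : ℝ) / (4 * q) * W.card)
    (g := fun w => ((W.filter fun v => v ≠ w ∧ secAdj S w v).card : ℝ)) (by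
      rw [Finset.sum_const, nsmul_eq_mul, ← Nat.cast_sum, ← hdeg]
      have : (W.card : ℝ) * ((S.card : ℝ) / (4 * q) * W.card) =
        (S.card : ℝ) * ((W.card : ℝ) ^ 2 / (2 * q)) / 2 := by field_simp; ring
      linarith)
  refine ⟨w, hw, ?_⟩
  have hsum : (W.filter fun v => v ≠ w ∧ ¬ secAdj S w v).card +
      (W.filter fun v => v ≠ w ∧ secAdj S w v).card ≤ W.card := by
    rw [← Finset.card_union_of_disjoint]
    · exact Finset.card_le_card (by intro v; simp only [Finset.mem_union, Finset.mem_filter]; grind)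
    · rw [Finset.disjoint_filter]; grind
  have hsum' : ((W.filter fun v => v ≠ w ∧ ¬ secAdj S w v).card : ℝ) +
      (W.filter fun v => v ≠ w ∧ secAdj S w v).card ≤ W.card := by exact_mod_cast hsum
  linarith

end Plane

/-! ### Counting independent sets in locally dense graphs -/

section Containers

variable {V : Type*}

/-- Independent sets of a relation `adj`, which need not be symmetric. -/
def Indep (adj : V → V → Prop) (I : Finset V) : Prop :=
  ∀ u ∈ I, ∀ v ∈ I, u ≠ v → ¬ adj u v

open Classical in
/-- The independence polynomial of `adj` restricted to `W`, evaluated at `x`. -/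
noncomputable def indepSum (adj : V → V → Prop) (x : ℝ) (W : Finset V) : ℝ :=
  ∑ I ∈ W.powerset.filter (Indep adj), x ^ I.card

lemma sum_powerset_pow (W : Finset V) (x : ℝ) :
    ∑ I ∈ W.powerset, x ^ I.card = (1 + x) ^ W.card := by
  have := Finset.sum_pow_mul_eq_add_pow x 1 W
  simp only [one_pow, mul_one] at this
  rw [this, add_comm]

open Classical in
lemma indepSum_le_pow (adj : V → V → Prop) {x : ℝ} (hx : 0 ≤ x) (W : Finset V) :
    indepSum adj x W ≤ (1 + x) ^ W.card := by
  rw [← sum_powerset_pow]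
  exact Finset.sum_le_sum_of_subset_of_nonneg (Finset.filter_subset _ _)
    (fun _ _ _ => by positivity)

open Classical in
/-- Independent sets either avoid `w`, or consist of `w` and an independent set of
non-neighbours of `w`. -/
lemma indepSum_le_split (adj : V → V → Prop) {x : ℝ} (hx : 0 ≤ x) (W : Finset V) (w : V) :
    indepSum adj x W ≤ indepSum adj x (W.erase w) +
      x * indepSum adj x (W.filter fun v => v ≠ w ∧ ¬ adj w v) := by
  unfold indepSum
  rw [← Finset.sum_filter_not_add_sum_filter _ (fun I => w ∈ I)]
  refine add_le_add ?_ ?_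
  · refine Finset.sum_le_sum_of_subset_of_nonneg ?_ (fun _ _ _ => by positivity)
    intro I hI
    simp only [Finset.mem_filter, Finset.mem_powerset] at hI ⊢
    exact ⟨Finset.subset_erase.2 ⟨hI.1.1, hI.2⟩, hI.1.2⟩
  · set B := (W.powerset.filter (Indep adj)).filter (fun I => w ∈ I) with hB
    have hinj : Set.InjOn (fun I : Finset V => I.erase w) B := by
      intro I hI J hJ h
      have hI' := (Finset.mem_filter.1 hI).2
      have hJ' := (Finset.mem_filter.1 hJ).2
      simp only at h
      rw [← Finset.insert_erase hI', ← Finset.insert_erase hJ', h]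
    have h1 : ∑ I ∈ B, x ^ I.card = x * ∑ J ∈ B.image (fun I => I.erase w), x ^ J.card := by
      rw [Finset.sum_image hinj, Finset.mul_sum]
      refine Finset.sum_congr rfl fun I hI => ?_
      rw [← Finset.card_erase_add_one (Finset.mem_filter.1 hI).2, pow_succ']
    rw [h1]
    refine mul_le_mul_of_nonneg_left ?_ hx
    refine Finset.sum_le_sum_of_subset_of_nonneg ?_ (fun _ _ _ => by positivity)
    intro J hJ
    obtain ⟨I, hI, rfl⟩ := Finset.mem_image.1 hJ
    simp only [hB, Finset.mem_filter, Finset.mem_powerset] at hI ⊢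
    obtain ⟨⟨hIW, hind⟩, hwI⟩ := hI
    refine ⟨?_, ?_⟩
    · intro v hv
      obtain ⟨hvw, hvI⟩ := Finset.mem_erase.1 hv
      exact Finset.mem_filter.2 ⟨hIW hvI, hvw, hind w hwI v hvI (Ne.symm hvw)⟩
    · exact fun u hu v hv => hind u (Finset.mem_of_mem_erase hu) v (Finset.mem_of_mem_erase hv)

open Classical in
/-- Kleitman–Winston bound: if every set `W` of more than `R` vertices has a vertex with at most
`γ|W|` non-neighbours in `W`, then branching on such vertices selects at most `t` of them
before at most `R` vertices are left, where `|W| γ ^ t ≤ R`. -/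
lemma indepSum_le_of_dense (adj : V → V → Prop) {x γ : ℝ} (hx : 0 ≤ x) (hx1 : x ≤ 1) (hγ : 0 ≤ γ)
    (R : ℕ)
    (hdeg : ∀ W : Finset V, R < W.card →
      ∃ w ∈ W, ((W.filter fun v => v ≠ w ∧ ¬ adj w v).card : ℝ) ≤ γ * W.card)
    (W : Finset V) : ∀ t : ℕ, (W.card : ℝ) * γ ^ t ≤ R →
      indepSum adj x W ≤ (1 + (W.card : ℝ)) ^ t * (1 + x) ^ R := by
  induction W using Finset.strongInduction with
  | H W ih =>
  intro t ht
  have hY : (0 : ℝ) ≤ (1 + x) ^ R := by positivity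
  by_cases hWR : W.card ≤ R
  · refine (indepSum_le_pow adj hx W).trans ?_
    refine (pow_le_pow_right₀ (by linarith) hWR).trans ?_
    refine le_mul_of_one_le_left hY (one_le_pow₀ ?_)
    have : (0 : ℝ) ≤ W.card := by positivity
    linarith
  · push Not at hWR
    obtain ⟨w, hw, hle⟩ := hdeg W hWR
    cases t with
    | zero =>
      rw [pow_zero, mul_one] at ht
      exact absurd hWR (not_lt.2 (by exact_mod_cast ht))
    | succ t =>
      set W' := W.filter fun v => v ≠ w ∧ ¬ adj w v with hW'
      have hss : W' ⊆ W.erase w := by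
        intro v hv
        have := Finset.mem_filter.1 hv
        exact Finset.mem_erase.2 ⟨this.2.1, this.1⟩
      have hssW : W.erase w ⊂ W := Finset.erase_ssubset hw
      have hc : ((W.erase w).card : ℝ) + 1 = W.card := by
        exact_mod_cast Finset.card_erase_add_one hw
      have h1 := ih _ hssW (t + 1) (le_trans (by gcongr) ht)
      have h2 := ih W' (hss.trans_ssubset hssW) t (by
        refine le_trans ?_ ht
        rw [pow_succ']
        have : (0 : ℝ) ≤ γ ^ t := by positivity
        nlinarith)
      have hc' : (1 : ℝ) + W'.card ≤ W.card := by
        have : (W'.card : ℝ) ≤ (W.erase w).card := by exact_mod_cast Finset.card_le_card hss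
        linarith
      have h3 : (1 + (W'.card : ℝ)) ^ t ≤ (W.card : ℝ) ^ t := by gcongr
      rw [add_comm 1 ((W.erase w).card : ℝ), hc] at h1
      refine (indepSum_le_split adj hx W w).trans ?_
      rw [← hW']
      have h4 : indepSum adj x W' ≤ (W.card : ℝ) ^ t * (1 + x) ^ R :=
        h2.trans (mul_le_mul_of_nonneg_right h3 hY)
      have h5 : x * indepSum adj x W' ≤ 1 * ((W.card : ℝ) ^ t * (1 + x) ^ R) :=
        (mul_le_mul_of_nonneg_left h4 hx).trans
          (mul_le_mul_of_nonneg_right hx1 (by positivity))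
      have h6 : (W.card : ℝ) ^ t ≤ (1 + (W.card : ℝ)) ^ t := by gcongr; linarith
      calc _ ≤ (W.card : ℝ) ^ (t + 1) * (1 + x) ^ R + 1 * ((W.card : ℝ) ^ t * (1 + x) ^ R) :=
            add_le_add h1 h5
        _ = (W.card : ℝ) ^ t * ((1 + W.card) * (1 + x) ^ R) := by ring
        _ ≤ (1 + (W.card : ℝ)) ^ t * ((1 + W.card) * (1 + x) ^ R) := by gcongr
        _ = _ := by ring

end Containers

/-! ### Random subsets of fixed size -/

section Sampling

/-- Falling factorials satisfy `(n)_k / (N)_k ≤ (n / N) ^ k`. The left side is the probability that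
a random `n`-subset of an `N`-set contains a given `k`-set. -/
lemma descFactorial_mul_pow_le {n N : ℕ} (h : n ≤ N) (k : ℕ) :
    n.descFactorial k * N ^ k ≤ N.descFactorial k * n ^ k := by
  induction k with
  | zero => simp
  | succ k ih =>
    rw [Nat.descFactorial_succ, Nat.descFactorial_succ, pow_succ, pow_succ]
    have : (n - k) * N ≤ (N - k) * n := by
      rw [Nat.sub_mul, Nat.sub_mul, mul_comm N n]
      exact Nat.sub_le_sub_left (Nat.mul_le_mul_left k h) _
    calc _ = ((n - k) * N) * (n.descFactorial k * N ^ k) := by ring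
      _ ≤ ((N - k) * n) * (N.descFactorial k * n ^ k) := Nat.mul_le_mul this ih
      _ = _ := by ring

/-- If the family `B` of `k`-sets has expected number of members inside a random `n`-set below one,
some `n`-set contains no member of `B`. -/
lemma exists_avoiding {V : Type*} [Fintype V] [DecidableEq V] {n k : ℕ} (hkn : k ≤ n)
    (hnN : n ≤ Fintype.card V) (hn : 0 < n) (B : Finset (Finset V)) (hB : ∀ A ∈ B, A.card = k)
    (hlt : (B.card : ℝ) * ((n : ℝ) / Fintype.card V) ^ k < 1) :
    ∃ X : Finset V, X.card = n ∧ ∀ A ∈ B, ¬ A ⊆ X := by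
  classical
  set N := Fintype.card V with hN
  by_contra! hcon
  have hN0 : (0 : ℝ) < N := by exact_mod_cast hn.trans_le hnN
  have hcov : (Finset.univ : Finset V).powersetCard n ⊆
      B.biUnion fun A => ((Finset.univ : Finset V).powersetCard n).filter fun X => A ⊆ X := by
    intro X hX
    obtain ⟨A, hA, hAX⟩ := hcon X (Finset.mem_powersetCard.1 hX).2
    exact Finset.mem_biUnion.2 ⟨A, hA, Finset.mem_filter.2 ⟨hX, hAX⟩⟩
  have hsup : ∀ A ∈ B, (((Finset.univ : Finset V).powersetCard n).filter fun X => A ⊆ X).card ≤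
      (N - k).choose (n - k) := by
    intro A hA
    have hc : (Aᶜ.powersetCard (n - k)).card = (N - k).choose (n - k) := by
      rw [Finset.card_powersetCard, Finset.card_compl, hB A hA]
    rw [← hc]
    refine Finset.card_le_card_of_injOn (fun X => X \ A) ?_ ?_
    · intro X hX
      have hX' := Finset.mem_filter.1 hX
      refine Finset.mem_coe.2 (Finset.mem_powersetCard.2 ⟨?_, ?_⟩)
      · intro v hv
        exact Finset.mem_compl.2 (Finset.mem_sdiff.1 hv).2
      · simp only
        rw [Finset.card_sdiff_of_subset hX'.2, hB A hA, (Finset.mem_powersetCard.1 hX'.1).2]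
    · intro X hX Y hY h
      have hX' := (Finset.mem_filter.1 hX).2
      have hY' := (Finset.mem_filter.1 hY).2
      simp only at h
      rw [← Finset.sdiff_union_of_subset hX', ← Finset.sdiff_union_of_subset hY', h]
  have h1 : N.choose n ≤ B.card * (N - k).choose (n - k) := by
    have := (Finset.card_le_card hcov).trans Finset.card_biUnion_le
    rw [Finset.card_powersetCard, Finset.card_univ] at this
    exact this.trans (by simpa using Finset.sum_le_card_nsmul B _ _ hsup)
  have h2 : (N - k).choose (n - k) * N ^ k ≤ N.choose n * n ^ k := by
    have h := Nat.choose_mul (n := N) hkn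
    have h' := descFactorial_mul_pow_le hnN k
    rw [Nat.descFactorial_eq_factorial_mul_choose, Nat.descFactorial_eq_factorial_mul_choose,
      mul_assoc, mul_assoc] at h'
    have h'' := Nat.le_of_mul_le_mul_left h' (Nat.factorial_pos k)
    have hpos : 0 < N.choose k := Nat.choose_pos (hkn.trans hnN)
    refine Nat.le_of_mul_le_mul_left ?_ hpos
    calc N.choose k * ((N - k).choose (n - k) * N ^ k)
        = N.choose n * (n.choose k * N ^ k) := by rw [← mul_assoc, ← h, mul_assoc]
      _ ≤ N.choose n * (N.choose k * n ^ k) := Nat.mul_le_mul_left _ h''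
      _ = _ := by ring
  have h3 : (N.choose n : ℝ) ≤ B.card * (N - k).choose (n - k) := by exact_mod_cast h1
  have h4 : ((N - k).choose (n - k) : ℝ) ≤ N.choose n * ((n : ℝ) / N) ^ k := by
    rw [div_pow, ← mul_div_assoc, le_div_iff₀ (by positivity)]
    exact_mod_cast h2
  have h5 : (0 : ℝ) < N.choose n := by exact_mod_cast Nat.choose_pos hnN
  have h6 : (N.choose n : ℝ) ≤ B.card * (N.choose n * ((n : ℝ) / N) ^ k) :=
    h3.trans (mul_le_mul_of_nonneg_left h4 (by positivity))
  nlinarith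

end Sampling

/-! ### Counting arcs and collinear sets -/

section Counting

variable {F : Type*} [Field F] [Fintype F]

open Classical in
/-- A `k`-arc consists of an `s`-arc `S` and a set that is independent in `secAdj S`. Doubling the
weight `δ` turns the restriction to sets of size `k - s` into the factor `2 ^ (-(k - s))`. -/
lemma card_arcs_le {s k t : ℕ} (hsk : s ≤ k) {δ : ℝ} (hδ : 0 ≤ δ) (hδ1 : 2 * δ ≤ 1)
    (hs : (s : ℝ) ≤ 4 * (Fintype.card F + 1))
    (ht : (Fintype.card (F × F) : ℝ) * (1 - s / (4 * (Fintype.card F + 1))) ^ t ≤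
      2 * (Fintype.card F + 1)) :
    (((Finset.univ : Finset (Finset (F × F))).filter
        fun A => A.card = k ∧ IsArc A).card : ℝ) * δ ^ k ≤
      (Fintype.card (F × F) : ℝ) ^ s * ((1 / 2 : ℝ) ^ (k - s) *
        ((1 + (Fintype.card (F × F) : ℝ)) ^ t * (1 + 2 * δ) ^ (2 * (Fintype.card F + 1)))) := by
  set N := Fintype.card (F × F) with hN
  set Y : ℝ := (1 + (N : ℝ)) ^ t * (1 + 2 * δ) ^ (2 * (Fintype.card F + 1)) with hY
  set SS := (Finset.univ.powersetCard s : Finset (Finset (F × F))).filter IsArc with hSS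
  set J : Finset (F × F) → Finset (Finset (F × F)) := fun S =>
    (Finset.univ.powerset.filter (Indep (secAdj S))).filter fun I => I.card = k - s with hJ
  have hcov : (Finset.univ : Finset (Finset (F × F))).filter (fun A => A.card = k ∧ IsArc A) ⊆
      SS.biUnion fun S => (J S).image fun I => S ∪ I := by
    intro A hA
    obtain ⟨-, hAk, hA⟩ := Finset.mem_filter.1 hA
    obtain ⟨S, hSA, hSs⟩ := Finset.exists_subset_card_eq (hAk ▸ hsk)
    refine Finset.mem_biUnion.2 ⟨S, ?_, Finset.mem_image.2 ⟨A \ S, ?_, ?_⟩⟩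
    · refine Finset.mem_filter.2 ⟨Finset.mem_powersetCard.2 ⟨Finset.subset_univ _, hSs⟩, ?_⟩
      exact fun a ha b hb c hc => hA a (hSA ha) b (hSA hb) c (hSA hc)
    · simp only [hJ, Finset.mem_filter, Finset.mem_powerset]
      refine ⟨⟨Finset.subset_univ _, ?_⟩, ?_⟩
      · rintro u hu v hv huv ⟨a, haS, had⟩
        obtain ⟨huA, huS⟩ := Finset.mem_sdiff.1 hu
        obtain ⟨hvA, hvS⟩ := Finset.mem_sdiff.1 hv
        exact hA a (hSA haS) u huA v hvA (fun h => huS (h ▸ haS)) (fun h => hvS (h ▸ haS)) huv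
          (col_of_direction_eq had)
      · rw [Finset.card_sdiff_of_subset hSA, hAk, hSs]
    · exact Finset.union_sdiff_of_subset hSA
  have hJle : ∀ S ∈ SS, ((J S).card : ℝ) * δ ^ (k - s) ≤ (1 / 2 : ℝ) ^ (k - s) * Y := by
    intro S hS
    obtain ⟨hSc, hSarc⟩ := Finset.mem_filter.1 hS
    have hScard := (Finset.mem_powersetCard.1 hSc).2
    have h0 : (0 : ℝ) ≤ 1 - s / (4 * (Fintype.card F + 1)) := by
      rw [sub_nonneg, div_le_one (by positivity)]; exact hs
    have hKW := indepSum_le_of_dense (secAdj S) (x := 2 * δ) (by positivity) hδ1 h0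
      (2 * (Fintype.card F + 1))
      (fun W hW => by
        have := exists_large_degree hSarc W hW
        rw [hScard] at this
        convert this) Finset.univ t
      (by rw [Finset.card_univ]; push_cast; exact ht)
    rw [Finset.card_univ, ← hN, ← hY] at hKW
    have h1 : ((J S).card : ℝ) * (2 * δ) ^ (k - s) ≤ Y := by
      refine le_trans ?_ hKW
      unfold indepSum
      have h2 : ((J S).card : ℝ) * (2 * δ) ^ (k - s) = ∑ I ∈ J S, (2 * δ) ^ I.card := by
        rw [← nsmul_eq_mul, ← Finset.sum_const]
        exact Finset.sum_congr rfl fun I hI => by rw [(Finset.mem_filter.1 hI).2]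
      rw [h2]
      exact Finset.sum_le_sum_of_subset_of_nonneg (Finset.filter_subset _ _)
        (fun _ _ _ => by positivity)
    calc ((J S).card : ℝ) * δ ^ (k - s)
        = (1 / 2 : ℝ) ^ (k - s) * ((J S).card * (2 * δ) ^ (k - s)) := by
          rw [mul_left_comm, ← mul_pow]; ring_nf
      _ ≤ _ := mul_le_mul_of_nonneg_left h1 (by positivity)
  have hcard : (((Finset.univ : Finset (Finset (F × F))).filter
      fun A => A.card = k ∧ IsArc A).card : ℝ) ≤ ∑ S ∈ SS, ((J S).card : ℝ) := by
    have := (Finset.card_le_card hcov).trans (Finset.card_biUnion_le.trans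
      (Finset.sum_le_sum fun S _ => Finset.card_image_le))
    exact_mod_cast this
  have hSScard : (SS.card : ℝ) ≤ (N : ℝ) ^ s := by
    have h : SS.card ≤ N.choose s := by
      rw [hN, ← Finset.card_univ, ← Finset.card_powersetCard]
      exact Finset.card_filter_le _ _
    exact_mod_cast h.trans (Nat.choose_le_pow N s)
  have hY0 : 0 ≤ Y := by positivity
  have hδs : δ ^ k ≤ δ ^ (k - s) := pow_le_pow_of_le_one hδ (by linarith) (Nat.sub_le k s)
  calc _ ≤ (∑ S ∈ SS, ((J S).card : ℝ)) * δ ^ (k - s) :=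
        mul_le_mul hcard hδs (pow_nonneg hδ _) (Finset.sum_nonneg fun _ _ => Nat.cast_nonneg _)
    _ = ∑ S ∈ SS, ((J S).card : ℝ) * δ ^ (k - s) := Finset.sum_mul _ _ _
    _ ≤ ∑ S ∈ SS, (1 / 2 : ℝ) ^ (k - s) * Y := Finset.sum_le_sum hJle
    _ = SS.card * ((1 / 2 : ℝ) ^ (k - s) * Y) := by rw [Finset.sum_const, nsmul_eq_mul]
    _ ≤ _ := mul_le_mul_of_nonneg_right hSScard (by positivity)

open Classical in
lemma card_collinear_le {k : ℕ} (hk : 2 ≤ k) {δ : ℝ} (hδ : 0 ≤ δ) :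
    (((Finset.univ : Finset (Finset (F × F))).filter
        fun A => A.card = k ∧ IsCollinear A).card : ℝ) * δ ^ k ≤
      (Fintype.card (F × F) : ℝ) ^ 2 * ((1 / 2 : ℝ) ^ k *
        (1 + 2 * δ) ^ (2 * (Fintype.card F + 1))) := by
  set N := Fintype.card (F × F) with hN
  set Y : ℝ := (1 + 2 * δ) ^ (2 * (Fintype.card F + 1)) with hY
  set D := (Finset.univ : Finset (F × F)).offDiag with hD
  set J : (F × F) × (F × F) → Finset (Finset (F × F)) := fun z =>
    (Finset.univ.filter fun w => Col w z.1 z.2).powersetCard k with hJ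
  have hcov : (Finset.univ : Finset (Finset (F × F))).filter
      (fun A => A.card = k ∧ IsCollinear A) ⊆ D.biUnion J := by
    intro A hA
    obtain ⟨-, hAk, hA⟩ := Finset.mem_filter.1 hA
    obtain ⟨u, hu, v, hv, huv⟩ := Finset.one_lt_card.1 (by omega : 1 < A.card)
    refine Finset.mem_biUnion.2 ⟨(u, v), by simp [hD, huv], ?_⟩
    refine Finset.mem_powersetCard.2 ⟨fun w hw => ?_, hAk⟩
    exact Finset.mem_filter.2 ⟨Finset.mem_univ _, hA w hw u hu v hv⟩
  have hJle : ∀ z ∈ D, ((J z).card : ℝ) * δ ^ k ≤ (1 / 2 : ℝ) ^ k * Y := by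
    intro z hz
    have hline := card_le_of_col_pair (Finset.mem_offDiag.1 hz).2.2
      (Finset.univ.filter fun w => Col w z.1 z.2) (fun w hw => (Finset.mem_filter.1 hw).2)
    have h1 : ((J z).card : ℝ) * (2 * δ) ^ k ≤ Y := by
      have h2 : ((J z).card : ℝ) * (2 * δ) ^ k = ∑ I ∈ J z, (2 * δ) ^ I.card := by
        rw [← nsmul_eq_mul, ← Finset.sum_const]
        exact Finset.sum_congr rfl fun I hI => by rw [(Finset.mem_powersetCard.1 hI).2]
      rw [h2]
      refine (Finset.sum_le_sum_of_subset_of_nonneg (fun I hI =>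
        Finset.mem_powerset.2 (Finset.mem_powersetCard.1 hI).1)
        (fun _ _ _ => by positivity)).trans ?_
      rw [sum_powerset_pow]
      exact pow_le_pow_right₀ (by linarith) (by omega)
    calc ((J z).card : ℝ) * δ ^ k
        = (1 / 2 : ℝ) ^ k * ((J z).card * (2 * δ) ^ k) := by
          rw [mul_left_comm, ← mul_pow]; ring_nf
      _ ≤ _ := mul_le_mul_of_nonneg_left h1 (by positivity)
  have hcard : (((Finset.univ : Finset (Finset (F × F))).filter
      fun A => A.card = k ∧ IsCollinear A).card : ℝ) ≤ ∑ z ∈ D, ((J z).card : ℝ) := by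
    have := (Finset.card_le_card hcov).trans Finset.card_biUnion_le
    exact_mod_cast this
  have hDcard : (D.card : ℝ) ≤ (N : ℝ) ^ 2 := by
    have h : D.card ≤ N ^ 2 := by
      rw [hD, Finset.offDiag_card, Finset.card_univ, sq]; exact Nat.sub_le _ _
    exact_mod_cast h
  have hY0 : 0 ≤ Y := by positivity
  calc _ ≤ (∑ z ∈ D, ((J z).card : ℝ)) * δ ^ k :=
        mul_le_mul_of_nonneg_right hcard (pow_nonneg hδ _)
    _ = ∑ z ∈ D, ((J z).card : ℝ) * δ ^ k := Finset.sum_mul _ _ _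
    _ ≤ ∑ z ∈ D, (1 / 2 : ℝ) ^ k * Y := Finset.sum_le_sum hJle
    _ = D.card * ((1 / 2 : ℝ) ^ k * Y) := by rw [Finset.sum_const, nsmul_eq_mul]
    _ ≤ _ := mul_le_mul_of_nonneg_right hDcard (by positivity)

end Counting

/-! ### The 3-graph of collinear triples -/

section HyperGraph

variable {F : Type*} [Field F]

/-- The collinear triples of a set `X` of `n` points, transported to `Fin n`, form a 3-graph in
which every four vertices span 0, 1 or 4 edges: two collinear triples among four points share two
points, hence lie on one line. Its cliques are collinear sets and its cocliques are arcs. -/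
lemma exists_threeGraph {n k : ℕ} (X : Finset (F × F)) (hX : X.card = n)
    (harc : ∀ A ⊆ X, A.card = k → ¬ IsArc A) (hcol : ∀ A ⊆ X, A.card = k → ¬ IsCollinear A) :
    ∃ E : Finset (Finset (Fin n)),
      (∀ e ∈ E, e.card = 3) ∧
      (∀ S : Finset (Fin n), S.card = 4 →
        (E.filter (fun e => e ⊆ S)).card = 0 ∨ (E.filter (fun e => e ⊆ S)).card = 1 ∨
          (E.filter (fun e => e ⊆ S)).card = 4) ∧
      (∀ S : Finset (Fin n), (∀ T ⊆ S, T.card = 3 → T ∈ E) → S.card < k) ∧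
      (∀ S : Finset (Fin n), (∀ T ⊆ S, T.card = 3 → T ∉ E) → S.card < k) := by
  classical
  let e : Fin n ≃ X := (X.equivFinOfCardEq hX).symm
  let f : Fin n ↪ F × F := e.toEmbedding.trans (Function.Embedding.subtype _)
  have hfX : ∀ i, f i ∈ X := fun i => (e i).2
  have hmapX : ∀ S : Finset (Fin n), S.map f ⊆ X := by
    intro S x hx
    obtain ⟨i, -, rfl⟩ := Finset.mem_map.1 hx
    exact hfX i
  set E : Finset (Finset (Fin n)) :=
    Finset.univ.filter fun T => T.card = 3 ∧ IsCollinear (T.map f) with hE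
  have hEmem : ∀ T, T ∈ E ↔ T.card = 3 ∧ ∀ a ∈ T, ∀ b ∈ T, ∀ c ∈ T, Col (f a) (f b) (f c) := by
    intro T
    simp [hE, IsCollinear]
  have hrep1 : ∀ a b : F × F, Col a a b := fun a b => by unfold Col; ring
  have hrep2 : ∀ a b : F × F, Col b a b := fun a b => by unfold Col; ring
  have hrep3 : ∀ a b : F × F, Col b a a := fun a b => by unfold Col; ring
  refine ⟨E, fun T hT => ((hEmem T).1 hT).1, ?_, ?_, ?_⟩
  · intro S hS
    by_cases h1 : (E.filter (fun e => e ⊆ S)).card ≤ 1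
    · omega
    right; right
    push Not at h1
    obtain ⟨T₁, hT₁, T₂, hT₂, hne⟩ := Finset.one_lt_card.1 h1
    obtain ⟨hT₁E, hT₁S⟩ := Finset.mem_filter.1 hT₁
    obtain ⟨hT₂E, hT₂S⟩ := Finset.mem_filter.1 hT₂
    obtain ⟨hc₁, hcol₁⟩ := (hEmem _).1 hT₁E
    obtain ⟨hc₂, hcol₂⟩ := (hEmem _).1 hT₂E
    have hlt : T₁ ⊂ T₁ ∪ T₂ := by
      refine Finset.ssubset_iff_subset_ne.2 ⟨Finset.subset_union_left, fun h => hne ?_⟩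
      refine (Finset.eq_of_subset_of_card_le ?_ (by omega)).symm
      rw [h]; exact Finset.subset_union_right
    have hlt' := Finset.card_lt_card hlt
    have hunion : T₁ ∪ T₂ = S :=
      Finset.eq_of_subset_of_card_le (Finset.union_subset hT₁S hT₂S) (by omega)
    have hinter : 1 < (T₁ ∩ T₂).card := by
      have := Finset.card_union_add_card_inter T₁ T₂
      rw [hunion] at this
      omega
    obtain ⟨u, hu, v, hv, huv⟩ := Finset.one_lt_card.1 hinter
    rw [Finset.mem_inter] at hu hv
    have hline : ∀ w ∈ S, Col (f w) (f u) (f v) := by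
      intro w hw
      rw [← hunion, Finset.mem_union] at hw
      rcases hw with hw | hw
      · exact hcol₁ w hw u hu.1 v hv.1
      · exact hcol₂ w hw u hu.2 v hv.2
    have hall : E.filter (fun e => e ⊆ S) = S.powersetCard 3 := by
      ext T
      rw [Finset.mem_filter, Finset.mem_powersetCard, hEmem]
      refine ⟨fun h => ⟨h.2, h.1.1⟩, fun h => ⟨⟨h.2, fun a ha b hb c hc => ?_⟩, h.1⟩⟩
      exact col_of_col_pair (f.injective.ne huv) (hline a (h.1 ha)) (hline b (h.1 hb))
        (hline c (h.1 hc))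
    rw [hall, Finset.card_powersetCard, hS]
    rfl
  · intro S hS
    by_contra! hk
    obtain ⟨K, hKS, hKk⟩ := Finset.exists_subset_card_eq hk
    refine hcol (K.map f) (hmapX K) (by rw [Finset.card_map, hKk]) ?_
    simp only [IsCollinear, Finset.forall_mem_map]
    intro a ha b hb c hc
    by_cases hab : a = b
    · subst hab; exact hrep1 _ _
    by_cases hac : a = c
    · subst hac; exact hrep2 _ _
    by_cases hbc : b = c
    · subst hbc; exact hrep3 _ _
    have hT := hS {a, b, c} (by
      intro x hx
      simp only [Finset.mem_insert, Finset.mem_singleton] at hx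
      rcases hx with rfl | rfl | rfl <;> exact hKS (by assumption))
      (Finset.card_eq_three.2 ⟨a, b, c, hab, hac, hbc, rfl⟩)
    exact ((hEmem _).1 hT).2 a (by simp) b (by simp) c (by simp)
  · intro S hS
    by_contra! hk
    obtain ⟨K, hKS, hKk⟩ := Finset.exists_subset_card_eq hk
    refine harc (K.map f) (hmapX K) (by rw [Finset.card_map, hKk]) ?_
    simp only [IsArc, Finset.forall_mem_map]
    intro a ha b hb c hc hab hac hbc habc
    refine hS {a, b, c} (by
      intro x hx
      simp only [Finset.mem_insert, Finset.mem_singleton] at hx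
      rcases hx with rfl | rfl | rfl <;> exact hKS (by assumption))
      (Finset.card_eq_three.2 ⟨a, b, c, ne_of_apply_ne f hab, ne_of_apply_ne f hac,
        ne_of_apply_ne f hbc, rfl⟩) ?_
    have hline : ∀ w ∈ ({a, b, c} : Finset (Fin n)), Col (f w) (f a) (f b) := by
      intro w hw
      simp only [Finset.mem_insert, Finset.mem_singleton] at hw
      rcases hw with rfl | rfl | rfl
      · exact hrep1 _ _
      · exact hrep2 _ _
      · exact habc.rotate
    exact (hEmem _).2 ⟨Finset.card_eq_three.2 ⟨a, b, c, ne_of_apply_ne f hab,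
      ne_of_apply_ne f hac, ne_of_apply_ne f hbc, rfl⟩, fun x hx y hy z hz =>
        col_of_col_pair hab (hline x hx) (hline y hy) (hline z hz)⟩

end HyperGraph

/-! ### Numerical estimates -/

section Asymptotics

open Filter Asymptotics

lemma eventually_log_le (c : ℝ) (hc : 0 < c) :
    ∀ᶠ x : ℝ in atTop, Real.log (2048 * x ^ 2) ≤ c * x ^ (1 / 8 : ℝ) := by
  have h1 := (isLittleO_log_rpow_atTop (by norm_num : (0 : ℝ) < 1 / 8)).bound
    (by positivity : 0 < c / 4)
  have h2 := (tendsto_rpow_atTop (by norm_num : (0 : ℝ) < 1 / 8)).eventually_ge_atTop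
    (2 * Real.log 2048 / c)
  filter_upwards [h1, h2, eventually_ge_atTop 1] with x h1 h2 hx
  rw [Real.norm_of_nonneg (Real.log_nonneg hx), Real.norm_of_nonneg (by positivity)] at h1
  rw [div_le_iff₀ hc] at h2
  rw [Real.log_mul (by norm_num) (by positivity), Real.log_pow]
  push_cast
  nlinarith

/-- The numerical facts behind the choice `s = t = ⌈k ^ (3/4)⌉`. -/
lemma eventually_parameters : ∀ᶠ k : ℕ in atTop, ∃ s : ℕ, 2 ≤ s ∧ s ≤ k ∧
    Real.log (2048 * (k : ℝ) ^ 2) ≤ (s : ℝ) ^ 2 / (4 * (32 * k + 1)) ∧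
    2 * ((2048 * (k : ℝ) ^ 2) ^ (s + s) * (Real.exp (k / 2) * (1 / 2) ^ k)) < 1 := by
  have h1 := (eventually_log_le (1 / 132) (by norm_num)).natCast_atTop
  have h2 := (eventually_log_le (1 / 100) (by norm_num)).natCast_atTop
  have h3 := ((tendsto_rpow_atTop (by norm_num : (0 : ℝ) < 1 / 8)).eventually_ge_atTop
    2).natCast_atTop
  filter_upwards [h1, h2, h3, eventually_ge_atTop 100] with k h1 h2 h3 hk
  have hkR : (100 : ℝ) ≤ k := by exact_mod_cast hk
  have hk0 : (0 : ℝ) ≤ k := by linarith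
  set y : ℝ := (k : ℝ) ^ (1 / 8 : ℝ) with hy
  have hy8 : y ^ 8 = k := by
    rw [hy, ← Real.rpow_natCast, ← Real.rpow_mul hk0]; norm_num
  have hs1 : y ^ 6 ≤ ⌈y ^ 6⌉₊ := Nat.le_ceil _
  have hs2 : (⌈y ^ 6⌉₊ : ℝ) < y ^ 6 + 1 := Nat.ceil_lt_add_one (by positivity)
  have hy6 : (1 : ℝ) ≤ y ^ 6 := one_le_pow₀ (by linarith)
  have hy6' : (2 : ℝ) ^ 6 ≤ y ^ 6 := by gcongr
  have hy68 : 4 * y ^ 6 ≤ k := by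
    rw [← hy8]; nlinarith [mul_le_mul h3 h3 (by norm_num) (by linarith)]
  have hy67 : y ^ 7 ≤ k / 2 := by
    rw [← hy8]; nlinarith [pow_pos (by linarith : 0 < y) 7]
  have hy7' : (0 : ℝ) ≤ y ^ 7 := by positivity
  refine ⟨⌈y ^ 6⌉₊, ?_, ?_, ?_, ?_⟩
  · have : (2 : ℝ) ≤ ⌈y ^ 6⌉₊ := by linarith
    exact_mod_cast this
  · have : (⌈y ^ 6⌉₊ : ℝ) ≤ k := by linarith
    exact_mod_cast this
  · refine h1.trans ?_
    rw [le_div_iff₀ (by positivity)]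
    have hb : (y ^ 6) ^ 2 ≤ (⌈y ^ 6⌉₊ : ℝ) ^ 2 := by gcongr
    refine le_trans ?_ hb
    have e1 : 1 / 132 * y * (4 * (32 * k + 1)) ≤ y * k := by nlinarith
    refine e1.trans ?_
    rw [← hy8]
    have : (1 : ℝ) ≤ y ^ 3 := one_le_pow₀ (by linarith)
    have h9 : (0 : ℝ) ≤ y ^ 9 := by positivity
    nlinarith
  · have hM : (0 : ℝ) < 2048 * (k : ℝ) ^ 2 := by positivity
    have e1 : (2048 * (k : ℝ) ^ 2) ^ (⌈y ^ 6⌉₊ + ⌈y ^ 6⌉₊) =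
        Real.exp ((⌈y ^ 6⌉₊ + ⌈y ^ 6⌉₊) * Real.log (2048 * (k : ℝ) ^ 2)) := by
      rw [← Nat.cast_add, mul_comm _ (Real.log _), Real.exp_mul, Real.exp_log hM, Real.rpow_natCast]
    have e2 : (1 / 2 : ℝ) ^ k = Real.exp (-(k * Real.log 2)) := by
      rw [Real.exp_neg, mul_comm, Real.exp_mul, Real.exp_log (by norm_num), Real.rpow_natCast]
      simp
    have e3 : (2 : ℝ) = Real.exp (Real.log 2) := (Real.exp_log (by norm_num)).symm
    rw [e1, e2]
    nth_rewrite 1 [e3]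
    rw [← Real.exp_add, ← Real.exp_add, ← Real.exp_add, Real.exp_lt_one_iff]
    have l1 := Real.log_two_gt_d9
    have l2 := Real.log_two_lt_d9
    have e4 : ((⌈y ^ 6⌉₊ : ℝ) + ⌈y ^ 6⌉₊) * Real.log (2048 * (k : ℝ) ^ 2) ≤
        (4 * y ^ 6) * (1 / 100 * y) := by
      refine mul_le_mul (by linarith) h2 (Real.log_nonneg (by nlinarith)) (by positivity)
    have e5 : (4 * y ^ 6) * (1 / 100 * y) = y ^ 7 / 25 := by ring
    nlinarith

end Asymptotics

/-! ### Choice of the point set -/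

/-- In the plane over `ZMod p` with `16k < p ≤ 32k`, some set of `n ≤ k ^ 2` points contains neither
a `k`-arc nor `k` collinear points: a random `n`-set has this property with positive probability. -/
lemma exists_pointSet {n k p s : ℕ} [Fact p.Prime] (hn : 0 < n) (hkn : k ≤ n) (hnk : n ≤ k ^ 2)
    (hp1 : 16 * k < p) (hp2 : p ≤ 32 * k) (hs2 : 2 ≤ s) (hsk : s ≤ k)
    (hlog : Real.log (2048 * (k : ℝ) ^ 2) ≤ (s : ℝ) ^ 2 / (4 * (32 * k + 1)))
    (hsmall : 2 * ((2048 * (k : ℝ) ^ 2) ^ (s + s) * (Real.exp (k / 2) * (1 / 2) ^ k)) < 1) :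
    ∃ X : Finset (ZMod p × ZMod p), X.card = n ∧ (∀ A ⊆ X, A.card = k → ¬ IsArc A) ∧
      (∀ A ⊆ X, A.card = k → ¬ IsCollinear A) := by
  classical
  have hcard : Fintype.card (ZMod p × ZMod p) = p ^ 2 := by
    rw [Fintype.card_prod, ZMod.card, sq]
  have hk0 : (2 : ℝ) ≤ k := by exact_mod_cast hs2.trans hsk
  have hp1' : 16 * (k : ℝ) ≤ p := by exact_mod_cast hp1.le
  have hp2' : (p : ℝ) ≤ 32 * k := by exact_mod_cast hp2
  have hp0 : (1 : ℝ) ≤ p := by linarith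
  have hsk' : (s : ℝ) ≤ k := by exact_mod_cast hsk
  have hp2sq : (p : ℝ) ^ 2 ≤ 1024 * (k : ℝ) ^ 2 := by nlinarith
  have hpsq1 : (1 : ℝ) ≤ (p : ℝ) ^ 2 := one_le_pow₀ hp0
  have hnk' : (n : ℝ) ≤ (k : ℝ) ^ 2 := by exact_mod_cast hnk
  set δ : ℝ := (n : ℝ) / (p : ℝ) ^ 2 with hδdef
  have hδ : 0 ≤ δ := by positivity
  have hδ1 : 2 * δ ≤ 1 := by
    rw [hδdef, ← mul_div_assoc, div_le_one (by positivity)]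
    nlinarith
  have hδp : δ * p ≤ k / 16 := by
    have : δ * p = n / p := by rw [hδdef]; field_simp
    rw [this, div_le_iff₀ (by linarith)]
    nlinarith
  -- `(1 + 2δ) ^ (2(p+1)) ≤ exp (4δ(p+1)) ≤ exp (8δp) ≤ exp (k/2)`
  have hY : (1 + 2 * δ) ^ (2 * (p + 1)) ≤ Real.exp (k / 2) := by
    calc (1 + 2 * δ) ^ (2 * (p + 1)) ≤ (Real.exp (2 * δ)) ^ (2 * (p + 1)) := by
          gcongr; rw [add_comm]; exact Real.add_one_le_exp _
      _ = Real.exp ((2 * (p + 1) : ℕ) * (2 * δ)) := (Real.exp_nat_mul _ _).symm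
      _ ≤ _ := by
          apply Real.exp_le_exp.2
          push_cast
          nlinarith
  have ht : ((p : ℝ) ^ 2) * (1 - s / (4 * (p + 1))) ^ s ≤ 2 * (p + 1) := by
    have h0 : (0 : ℝ) ≤ 1 - s / (4 * (p + 1)) := by
      rw [sub_nonneg, div_le_one (by positivity)]; linarith
    have h1 : (1 - (s : ℝ) / (4 * (p + 1))) ^ s ≤ Real.exp (-Real.log (2048 * (k : ℝ) ^ 2)) := by
      calc (1 - (s : ℝ) / (4 * (p + 1))) ^ s ≤ Real.exp (-(s / (4 * (p + 1)))) ^ s := by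
            gcongr
            have := Real.add_one_le_exp (-((s : ℝ) / (4 * (p + 1))))
            linarith
        _ = Real.exp (s * (-(s / (4 * (p + 1))))) := (Real.exp_nat_mul _ _).symm
        _ ≤ _ := by
            apply Real.exp_le_exp.2
            have : (s : ℝ) ^ 2 / (4 * (32 * k + 1)) ≤ (s : ℝ) ^ 2 / (4 * (p + 1)) := by gcongr
            have h' : (s : ℝ) * (-(s / (4 * (p + 1)))) = -((s : ℝ) ^ 2 / (4 * (p + 1))) := by ring
            linarith
    rw [Real.exp_neg, Real.exp_log (by positivity)] at h1
    calc ((p : ℝ) ^ 2) * (1 - s / (4 * (p + 1))) ^ s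
        ≤ (2048 * (k : ℝ) ^ 2) * (2048 * (k : ℝ) ^ 2)⁻¹ := by gcongr; nlinarith
      _ = 1 := mul_inv_cancel₀ (by positivity)
      _ ≤ _ := by linarith
  have harcs := card_arcs_le (F := ZMod p) (s := s) (k := k) (t := s) hsk hδ hδ1
    (by rw [ZMod.card]; linarith) (by rw [hcard, ZMod.card]; push_cast; exact ht)
  have hcols := card_collinear_le (F := ZMod p) (hs2.trans hsk) hδ
  rw [hcard, ZMod.card] at harcs hcols
  push_cast at harcs hcols
  set B₁ := (Finset.univ : Finset (Finset (ZMod p × ZMod p))).filter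
    (fun A => A.card = k ∧ IsArc A) with hB₁
  set B₂ := (Finset.univ : Finset (Finset (ZMod p × ZMod p))).filter
    (fun A => A.card = k ∧ IsCollinear A) with hB₂
  set M : ℝ := 2048 * (k : ℝ) ^ 2 with hM
  have hM1 : 1 ≤ M := by nlinarith
  have hpow : (1 / 2 : ℝ) ^ (k - s) = 2 ^ s * (1 / 2 : ℝ) ^ k := by
    obtain ⟨d, rfl⟩ := Nat.exists_eq_add_of_le hsk
    rw [Nat.add_sub_cancel_left, pow_add, ← mul_assoc, ← mul_pow]; norm_num
  have h1 : (B₁.card : ℝ) * δ ^ k ≤ M ^ (s + s) * (Real.exp (k / 2) * (1 / 2) ^ k) := by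
    refine harcs.trans ?_
    rw [hpow]
    have e1 : ((p : ℝ) ^ 2 * 2) ^ s ≤ M ^ s := by gcongr; linarith
    have e2 : (1 + (p : ℝ) ^ 2) ^ s ≤ M ^ s := by gcongr; linarith
    calc ((p : ℝ) ^ 2) ^ s * (2 ^ s * (1 / 2) ^ k *
          ((1 + (p : ℝ) ^ 2) ^ s * (1 + 2 * δ) ^ (2 * (p + 1))))
        = ((p : ℝ) ^ 2 * 2) ^ s * (1 + (p : ℝ) ^ 2) ^ s *
          ((1 + 2 * δ) ^ (2 * (p + 1)) * (1 / 2) ^ k) := by rw [mul_pow]; ring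
      _ ≤ M ^ s * M ^ s * (Real.exp (k / 2) * (1 / 2) ^ k) := by gcongr
      _ = _ := by rw [pow_add]
  have h2 : (B₂.card : ℝ) * δ ^ k ≤ M ^ (s + s) * (Real.exp (k / 2) * (1 / 2) ^ k) := by
    refine hcols.trans ?_
    have e1 : ((p : ℝ) ^ 2) ^ 2 ≤ M ^ (s + s) :=
      (pow_le_pow_left₀ (by positivity) (by linarith) 2).trans
        (pow_le_pow_right₀ hM1 (by omega))
    calc ((p : ℝ) ^ 2) ^ 2 * ((1 / 2) ^ k * (1 + 2 * δ) ^ (2 * (p + 1)))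
        = ((p : ℝ) ^ 2) ^ 2 * ((1 + 2 * δ) ^ (2 * (p + 1)) * (1 / 2) ^ k) := by ring
      _ ≤ _ := by gcongr
  have hnN : n ≤ Fintype.card (ZMod p × ZMod p) := by
    rw [hcard]
    exact hnk.trans (Nat.pow_le_pow_left (by omega) 2)
  obtain ⟨X, hX, hXB⟩ := exists_avoiding hkn hnN hn (B₁ ∪ B₂) (by
      intro A hA
      rcases Finset.mem_union.1 hA with h | h <;> exact (Finset.mem_filter.1 h).2.1) (by
      rw [hcard]
      push_cast
      rw [← hδdef]
      have h3 : ((B₁ ∪ B₂).card : ℝ) ≤ B₁.card + B₂.card := by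
        exact_mod_cast Finset.card_union_le _ _
      have h4 := mul_le_mul_of_nonneg_right h3 (pow_nonneg hδ k)
      linarith)
  refine ⟨X, hX, fun A hAX hAk hA => ?_, fun A hAX hAk hA => ?_⟩
  · exact hXB A (Finset.mem_union_left _ (Finset.mem_filter.2 ⟨Finset.mem_univ _, hAk, hA⟩)) hAX
  · exact hXB A (Finset.mem_union_right _ (Finset.mem_filter.2 ⟨Finset.mem_univ _, hAk, hA⟩)) hAX

/-- For all sufficiently large `n` there is an `n`-vertex 3-graph in which every 4-element vertex
set spans exactly 0, 1 or 4 edges, and every clique and every coclique has size less than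
`n^(1/2) + n^(0.3)`. -/
theorem stmt_2 :
    ∃ N : ℕ, ∀ n : ℕ, N ≤ n →
      ∃ E : Finset (Finset (Fin n)),
        (∀ e ∈ E, e.card = 3) ∧
        (∀ S : Finset (Fin n), S.card = 4 →
          (E.filter (fun e => e ⊆ S)).card = 0 ∨ (E.filter (fun e => e ⊆ S)).card = 1 ∨
            (E.filter (fun e => e ⊆ S)).card = 4) ∧
        (∀ S : Finset (Fin n), (∀ T ⊆ S, T.card = 3 → T ∈ E) →
          (S.card : ℝ) < (n : ℝ) ^ ((1 : ℝ) / 2) + (n : ℝ) ^ ((0.3 : ℝ))) ∧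
        (∀ S : Finset (Fin n), (∀ T ⊆ S, T.card = 3 → T ∉ E) →
          (S.card : ℝ) < (n : ℝ) ^ ((1 : ℝ) / 2) + (n : ℝ) ^ ((0.3 : ℝ))) := by
  obtain ⟨K, hK⟩ := Filter.eventually_atTop.1 eventually_parameters
  refine ⟨K ^ 2 + 4, fun n hn => ?_⟩
  set k := Nat.sqrt n + 1 with hk
  have hKk : K ≤ k := by
    have : K ≤ Nat.sqrt n := Nat.le_sqrt'.2 (by omega)
    omega
  have hsq : 2 ≤ Nat.sqrt n := Nat.le_sqrt'.2 (by omega)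
  have hsqn : Nat.sqrt n ^ 2 ≤ n := Nat.sqrt_le' n
  have hkn : k ≤ n := by nlinarith
  have hnk : n ≤ k ^ 2 := (Nat.lt_succ_sqrt' n).le
  obtain ⟨s, hs2, hsk, hlog, hsmall⟩ := hK k hKk
  obtain ⟨p, hp, hp1, hp2⟩ := Nat.exists_prime_lt_and_le_two_mul (16 * k) (by omega)
  have : Fact p.Prime := ⟨hp⟩
  obtain ⟨X, hX, harc, hcol⟩ := exists_pointSet (by omega) hkn hnk hp1 (by omega) hs2 hsk hlog hsmall
  obtain ⟨E, hE3, hE4, hcl, hco⟩ := exists_threeGraph X hX harc hcol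
  have hbound : ∀ m : ℕ, m < k →
      (m : ℝ) < (n : ℝ) ^ ((1 : ℝ) / 2) + (n : ℝ) ^ ((0.3 : ℝ)) := by
    intro m hm
    have hn0 : (0 : ℝ) < n := by exact_mod_cast (by omega : 0 < n)
    have h1 : (m : ℝ) ≤ (n : ℝ) ^ ((1 : ℝ) / 2) := by
      rw [← Real.sqrt_eq_rpow]
      exact (Nat.cast_le.2 (by omega : m ≤ Nat.sqrt n)).trans Real.nat_sqrt_le_real_sqrt
    have h2 : (0 : ℝ) < (n : ℝ) ^ ((0.3 : ℝ)) := Real.rpow_pos_of_pos hn0 _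
    linarith
  exact ⟨E, hE3, hE4, fun S hS => hbound _ (hcl S hS), fun S hS => hbound _ (hco S hS)⟩
end

section
/- There exists a constant c > 0 such that for all n ≥ 1, every n-vertex 3-graph in which no 4-element vertex set spans exactly 0 edges and no 4-element vertex set spans exactly 2 edges has a homogeneous set of size greater than c · n^{1/5}. -/
/-!
Call a triple missing if it is not an edge. In a 4-set with two missing triples, the number of
edges is neither 0 nor 2 and at most 2, so exactly one of the other two triples is missing
(`quad`). For distinct `v`, `x`, let `N(v, x)` be the set of `z` for which `{v, x, z}` is missing.
For `y, z ∈ N(v, x)`, exactly one of `{v, y, z}`, `{x, y, z}` is missing, and applying `quad`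
a few more times shows that every triple inside `N(v, x)` is an edge (`codegree_clique`).

Let `S` be a largest clique and `h` its size. Each vertex outside `S` lies in `N(v, x)` for some
distinct `v, x ∈ S`, and every `N(v, x)` is a clique, so `n ≤ h + h ^ 3 ≤ 2 * h ^ 3`. This bound
`h ≥ (n / 2) ^ (1 / 3)` is stronger than required.
-/

/-- Two missing triples in a 4-set force exactly one of the other two to be missing. -/
lemma quad {n : ℕ} {E : Finset (Finset (Fin n))}
    (hE : ∀ e ∈ E, e.card = 3)
    (h0 : ∀ S : Finset (Fin n), S.card = 4 → (E.filter (fun e => e ⊆ S)).card ≠ 0)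
    (h2 : ∀ S : Finset (Fin n), S.card = 4 → (E.filter (fun e => e ⊆ S)).card ≠ 2)
    {a b c d : Fin n} (hab : a ≠ b) (hac : a ≠ c) (had : a ≠ d) (hbc : b ≠ c) (hbd : b ≠ d)
    (hcd : c ≠ d) (habc : {a, b, c} ∉ E) (habd : {a, b, d} ∉ E) :
    ({a, c, d} ∈ E ↔ {b, c, d} ∉ E) := by
  have hcard : ({a, b, c, d} : Finset (Fin n)).card = 4 := by
    simp [hab, hac, had, hbc, hbd, hcd]
  have hne : ({a, c, d} : Finset (Fin n)) ≠ {b, c, d} := by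
    intro h
    have : a ∈ ({b, c, d} : Finset (Fin n)) := h ▸ by simp
    simp [hab, hac, had] at this
  -- A 3-subset of a 4-set is determined by the vertex it omits.
  have key : E.filter (fun e => e ⊆ {a, b, c, d}) =
      ({{a, c, d}, {b, c, d}} : Finset (Finset (Fin n))).filter (fun e => e ∈ E) := by
    ext e
    simp only [Finset.mem_filter, Finset.mem_insert, Finset.mem_singleton]
    constructor
    · rintro ⟨he, hs⟩
      refine ⟨?_, he⟩
      obtain ⟨w, hw, hwe⟩ : ∃ w ∈ ({a, b, c, d} : Finset (Fin n)), w ∉ e := by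
        by_contra! hcon
        have := Finset.card_le_card (show ({a, b, c, d} : Finset (Fin n)) ⊆ e from hcon)
        have := hE e he
        omega
      have heq : e = ({a, b, c, d} : Finset (Fin n)).erase w := by
        apply Finset.eq_of_subset_of_card_le
        · intro u hu
          exact Finset.mem_erase.2 ⟨fun h => hwe (h ▸ hu), hs hu⟩
        · rw [Finset.card_erase_of_mem hw, hcard, hE e he]
      simp only [Finset.mem_insert, Finset.mem_singleton] at hw
      rcases hw with rfl | rfl | rfl | rfl
      · right
        rw [heq]; ext u; simp; grind
      · left
        rw [heq]; ext u; simp; grind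
      · exact absurd he (by
          have : e = {a, b, d} := by rw [heq]; ext u; simp; grind
          rwa [this])
      · exact absurd he (by
          have : e = {a, b, c} := by rw [heq]; ext u; simp; grind
          rwa [this])
    · rintro ⟨h | h, he⟩ <;> refine ⟨he, ?_⟩ <;> subst h <;> intro u <;> simp <;> tauto
  have hzero := h0 _ hcard
  have htwo := h2 _ hcard
  rw [key] at hzero htwo
  by_cases p : {a, c, d} ∈ E <;> by_cases q : {b, c, d} ∈ E <;>
    simp [Finset.filter_insert, Finset.filter_singleton, p, q, hne] at hzero htwo ⊢

/-- `quad` applied to `{t, y, z, w}`, once for each pair of missing triples. -/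
lemma quad_all {n : ℕ} {E : Finset (Finset (Fin n))}
    (hE : ∀ e ∈ E, e.card = 3)
    (h0 : ∀ S : Finset (Fin n), S.card = 4 → (E.filter (fun e => e ⊆ S)).card ≠ 0)
    (h2 : ∀ S : Finset (Fin n), S.card = 4 → (E.filter (fun e => e ⊆ S)).card ≠ 2)
    {t y z w : Fin n} (hty : t ≠ y) (htz : t ≠ z) (htw : t ≠ w) (hyz : y ≠ z) (hyw : y ≠ w)
    (hzw : z ≠ w) :
    ({t, y, z} ∉ E → {t, y, w} ∉ E → ({t, z, w} ∈ E ↔ {y, z, w} ∉ E)) ∧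
    ({t, y, z} ∉ E → {t, z, w} ∉ E → ({t, y, w} ∈ E ↔ {y, z, w} ∉ E)) ∧
    ({t, y, w} ∉ E → {t, z, w} ∉ E → ({t, y, z} ∈ E ↔ {y, z, w} ∉ E)) ∧
    ({t, y, z} ∉ E → {y, z, w} ∉ E → ({t, y, w} ∈ E ↔ {t, z, w} ∉ E)) ∧
    ({t, y, w} ∉ E → {y, z, w} ∉ E → ({t, y, z} ∈ E ↔ {t, z, w} ∉ E)) ∧
    ({t, z, w} ∉ E → {y, z, w} ∉ E → ({t, y, z} ∈ E ↔ {t, y, w} ∉ E)) := by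
  have s1 : ∀ a b c : Fin n, ({a, b, c} : Finset (Fin n)) = {b, a, c} :=
    fun a b c => Finset.insert_comm a b {c}
  have s2 : ∀ a b c : Fin n, ({a, b, c} : Finset (Fin n)) = {a, c, b} :=
    fun a b c => by rw [Finset.pair_comm b c]
  refine ⟨quad hE h0 h2 hty htz htw hyz hyw hzw, ?_, ?_, ?_, ?_, ?_⟩
  · have := @quad n E hE h0 h2 t z y w htz hty htw hyz.symm hzw hyw
    rwa [s2 t z y, s1 z y w] at this
  · have := @quad n E hE h0 h2 t w y z htw hty htz hyw.symm hzw.symm hyz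
    rwa [s2 t w y, s2 t w z, s1 w y z, s2 y w z] at this
  · have := @quad n E hE h0 h2 y z t w hyz hty.symm hyw htz.symm hzw htw
    rwa [s2 y z t, s1 y t z, s1 y t w, s1 z t w] at this
  · have := @quad n E hE h0 h2 y w t z hyw hty.symm hyz htw.symm hzw.symm htz
    rwa [s2 y w t, s1 y t w, s2 y w z, s1 y t z, s1 w t z, s2 t w z] at this
  · have := @quad n E hE h0 h2 z w t y hzw htz.symm hyz.symm htw.symm hyw.symm hty
    rwa [s2 z w t, s1 z t w, s2 z w y, s1 z y w, s1 z t y, s2 t z y, s1 w t y, s2 t w y] at this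

/-- The vertices forming a missing triple with a given pair span a clique. -/
lemma codegree_clique {n : ℕ} {E : Finset (Finset (Fin n))}
    (hE : ∀ e ∈ E, e.card = 3)
    (h0 : ∀ S : Finset (Fin n), S.card = 4 → (E.filter (fun e => e ⊆ S)).card ≠ 0)
    (h2 : ∀ S : Finset (Fin n), S.card = 4 → (E.filter (fun e => e ⊆ S)).card ≠ 2)
    {v x y z w : Fin n} (hvx : v ≠ x) (hvy : v ≠ y) (hvz : v ≠ z) (hvw : v ≠ w)
    (hxy : x ≠ y) (hxz : x ≠ z) (hxw : x ≠ w) (hyz : y ≠ z) (hyw : y ≠ w) (hzw : z ≠ w)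
    (hy : {v, x, y} ∉ E) (hz : {v, x, z} ∉ E) (hw : {v, x, w} ∉ E) : {y, z, w} ∈ E := by
  have e1 := quad hE h0 h2 hvx hvy hvz hxy hxz hyz hy hz
  have e2 := quad hE h0 h2 hvx hvy hvw hxy hxw hyw hy hw
  have e3 := quad hE h0 h2 hvx hvz hvw hxz hxw hzw hz hw
  have fv := quad_all hE h0 h2 hvy hvz hvw hyz hyw hzw
  have fx := quad_all hE h0 h2 hxy hxz hxw hyz hyw hzw
  clear h0 h2 hE hy hz hw
  generalize ({y, z, w} ∈ E) = q at *
  generalize ({v, y, z} ∈ E) = p1 at *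
  generalize ({v, y, w} ∈ E) = p2 at *
  generalize ({v, z, w} ∈ E) = p3 at *
  by_contra hq
  by_cases h1 : p1 <;> by_cases h2 : p2 <;> by_cases h3 : p3 <;>
    simp only [h1, h2, h3, hq, true_iff, false_iff, not_not, iff_true, iff_false, not_true,
      not_false_iff] at e1 e2 e3 fv fx <;> simp_all

/-- There is `c > 0` such that for all `n ≥ 1`, every `n`-vertex 3-graph in which no 4-element
vertex set spans exactly 0 edges and no 4-element vertex set spans exactly 2 edges has a
homogeneous set of size greater than `c * n^(1/5)`. -/
theorem stmt_3 :
    ∃ c : ℝ, 0 < c ∧ ∀ n : ℕ, 1 ≤ n → ∀ E : Finset (Finset (Fin n)),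
      (∀ e ∈ E, e.card = 3) →
      (∀ S : Finset (Fin n), S.card = 4 → (E.filter (fun e => e ⊆ S)).card ≠ 0) →
      (∀ S : Finset (Fin n), S.card = 4 → (E.filter (fun e => e ⊆ S)).card ≠ 2) →
      ∃ S : Finset (Fin n),
        ((∀ T ⊆ S, T.card = 3 → T ∈ E) ∨ (∀ T ⊆ S, T.card = 3 → T ∉ E)) ∧
        c * (n : ℝ) ^ ((1 : ℝ) / 5) < (S.card : ℝ) := by
  refine ⟨1 / 2, by norm_num, ?_⟩
  intro n hn E hE h0 h2
  obtain ⟨S, hS, hmax⟩ := Finset.exists_max_image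
    (Finset.univ.filter fun S : Finset (Fin n) => ∀ T ⊆ S, T.card = 3 → T ∈ E) Finset.card
    ⟨∅, by
      simp only [Finset.mem_filter, Finset.mem_univ, true_and]
      intro T hT h3
      simp [Finset.subset_empty.1 hT] at h3⟩
  simp only [Finset.mem_filter, Finset.mem_univ, true_and] at hS hmax
  refine ⟨S, Or.inl hS, ?_⟩
  let N : Fin n × Fin n → Finset (Fin n) := fun p =>
    Finset.univ.filter fun z => z ≠ p.1 ∧ z ≠ p.2 ∧ {p.1, p.2, z} ∉ E
  have hN : ∀ p ∈ S.offDiag, (N p).card ≤ S.card := by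
    rintro ⟨v, x⟩ hp
    apply hmax
    intro T hT h3
    obtain ⟨y, z, w, hyz, hyw, hzw, rfl⟩ := Finset.card_eq_three.1 h3
    have hy := hT (show y ∈ _ by simp)
    have hz := hT (show z ∈ _ by simp)
    have hw := hT (show w ∈ _ by simp)
    simp only [N, Finset.mem_filter, Finset.mem_univ, true_and] at hy hz hw
    exact codegree_clique hE h0 h2 (Finset.mem_offDiag.1 hp).2.2 hy.1.symm hz.1.symm hw.1.symm
      hy.2.1.symm hz.2.1.symm hw.2.1.symm hyz hyw hzw hy.2.2 hz.2.2 hw.2.2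
  -- By maximality of `S`, a vertex outside `S` forms a missing triple with two vertices of `S`.
  have hcov : (Finset.univ : Finset (Fin n)) ⊆ S ∪ S.offDiag.biUnion N := by
    intro u _
    by_cases hu : u ∈ S
    · exact Finset.mem_union_left _ hu
    apply Finset.mem_union_right
    by_contra hcon
    have hbig := hmax (insert u S) (by
      intro T hT h3
      by_cases huT : u ∈ T
      · have h2c : (T.erase u).card = 2 := by rw [Finset.card_erase_of_mem huT, h3]
        obtain ⟨v, x, hvx, hTe⟩ := Finset.card_eq_two.1 h2c
        have hmem : ∀ t ∈ T.erase u, t ∈ S := by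
          intro t ht
          have hte := Finset.mem_erase.1 ht
          exact (Finset.mem_insert.1 (hT hte.2)).resolve_left hte.1
        have hv : v ∈ S := hmem v (by rw [hTe]; simp)
        have hx : x ∈ S := hmem x (by rw [hTe]; simp)
        have hTeq : T = {v, x, u} := by
          rw [← Finset.insert_erase huT, hTe]; ext t; simp; tauto
        by_contra hTE
        apply hcon
        refine Finset.mem_biUnion.2 ⟨(v, x), Finset.mem_offDiag.2 ⟨hv, hx, hvx⟩, ?_⟩
        simp only [N, Finset.mem_filter, Finset.mem_univ, true_and]
        exact ⟨fun h => hu (h ▸ hv), fun h => hu (h ▸ hx), hTeq ▸ hTE⟩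
      · exact hS T ((Finset.subset_insert_iff_of_notMem huT).1 hT) h3)
    rw [Finset.card_insert_of_notMem hu] at hbig
    omega
  have hcount : n ≤ S.card + S.card * S.card * S.card := by
    calc n = (Finset.univ : Finset (Fin n)).card := by simp
      _ ≤ (S ∪ S.offDiag.biUnion N).card := Finset.card_le_card hcov
      _ ≤ S.card + (S.offDiag.biUnion N).card := Finset.card_union_le _ _
      _ ≤ S.card + S.offDiag.card * S.card := by
          gcongr; exact Finset.card_biUnion_le_card_mul _ _ _ hN
      _ ≤ S.card + S.card * S.card * S.card := by
          gcongr; rw [Finset.offDiag_card]; omega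
  have hpos : 1 ≤ S.card := by
    by_contra h
    have : S.card = 0 := by omega
    rw [this] at hcount
    omega
  have hlt : n < (2 * S.card) ^ 5 := by
    generalize S.card = h at *
    have h1 : h ≤ h ^ 5 := Nat.le_self_pow (by norm_num) h
    have h3 : h ^ 3 ≤ h ^ 5 := Nat.pow_le_pow_right hpos (by norm_num)
    have : h * h * h = h ^ 3 := by ring
    have : (2 * h) ^ 5 = 32 * h ^ 5 := by ring
    omega
  have hroot : (n : ℝ) ^ ((1 : ℝ) / 5) < 2 * S.card := by
    have hltR : (n : ℝ) < (2 * (S.card : ℝ)) ^ (5 : ℕ) := by exact_mod_cast hlt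
    calc (n : ℝ) ^ ((1 : ℝ) / 5) < ((2 * (S.card : ℝ)) ^ (5 : ℕ)) ^ ((1 : ℝ) / 5) :=
          Real.rpow_lt_rpow (by positivity) hltR (by norm_num)
      _ = 2 * S.card := by
          rw [← Real.rpow_natCast, ← Real.rpow_mul (by positivity)]; norm_num
  linarith
end

section
/- There exists a constant c > 0 such that for all n ≥ 1, every n-vertex 3-graph in which no 4-element vertex set spans exactly 0 edges and no 4-element vertex set spans exactly 3 edges has a homogeneous set of size greater than c · n^{1/3}. -/
/-!
Fix a vertex `v` and let `G` be its link graph on the remaining vertices: `x ~ y` when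
`{v, x, y}` is an edge. The condition on the 4-sets `{v, x, y, z}` says that a triple
`{x, y, z}` spanning 0 or 3 edges of `G` is an edge of the 3-graph, and one spanning exactly 2
edges of `G` is not. Hence cliques and independent sets of `G` are cliques of the 3-graph
(`clique_of_link_homogeneous`), and `G` has no induced 4-cycle, since all four triples of such a
cycle would be non-edges (`link_no_induced_C4`).

Let `h` be the largest size of a clique of the 3-graph, and `I` a maximum independent set of `G`.
Every vertex other than `v` lies in `I`, or has exactly one neighbour in `I`, or is a common
neighbour of two vertices of `I`. The vertices whose only neighbour in `I` is `x` form a clique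
of `G`, for otherwise replacing `x` by two of them enlarges `I`. The common neighbours of two
vertices of `I` form a clique of `G`, because `G` has no induced 4-cycle. So
`n ≤ 1 + h + h² + h³ ≤ 4 h³`, which gives `h > n^(1/3) / 2`.
-/

/-- The number of edges inside `{a, b, c, d}`, expanded over its four triples. -/
lemma card_filter_four {n : ℕ} (E : Finset (Finset (Fin n))) (hE : ∀ e ∈ E, e.card = 3)
    {a b c d : Fin n} (hab : a ≠ b) (hac : a ≠ c) (had : a ≠ d) (hbc : b ≠ c) (hbd : b ≠ d)
    (hcd : c ≠ d) :
    (E.filter (fun e => e ⊆ ({a, b, c, d} : Finset (Fin n)))).card =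
      (if ({a, b, c} : Finset (Fin n)) ∈ E then 1 else 0) +
      (if ({a, b, d} : Finset (Fin n)) ∈ E then 1 else 0) +
      (if ({a, c, d} : Finset (Fin n)) ∈ E then 1 else 0) +
      (if ({b, c, d} : Finset (Fin n)) ∈ E then 1 else 0) := by
  have hcard : ({a, b, c, d} : Finset (Fin n)).card = 4 := by
    simp [hab, hac, had, hbc, hbd, hcd]
  have key : E.filter (fun e => e ⊆ ({a, b, c, d} : Finset (Fin n))) =
      (({{a, b, c}, {a, b, d}, {a, c, d}, {b, c, d}} : Finset (Finset (Fin n)))).filter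
        (fun e => e ∈ E) := by
    ext e
    simp only [Finset.mem_filter, Finset.mem_insert, Finset.mem_singleton]
    constructor
    · rintro ⟨he, hs⟩
      refine ⟨?_, he⟩
      -- a 3-subset of a 4-set is the 4-set with one point erased
      have h1 : (({a, b, c, d} : Finset (Fin n)) \ e).card = 1 := by
        rw [Finset.card_sdiff_of_subset hs, hcard, hE e he]
      obtain ⟨t, ht⟩ := Finset.card_eq_one.1 h1
      have hmem : ∀ y, y ∈ e ↔ y ∈ ({a, b, c, d} : Finset (Fin n)) ∧ y ≠ t := by
        intro y
        have := Finset.ext_iff.1 ht y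
        have h2 := @hs y
        simp only [Finset.mem_sdiff, Finset.mem_singleton] at this
        tauto
      have htm : t ∈ ({a, b, c, d} : Finset (Fin n)) :=
        (Finset.mem_sdiff.1 (ht ▸ Finset.mem_singleton_self t)).1
      simp only [Finset.mem_insert, Finset.mem_singleton] at htm hmem
      rcases htm with rfl | rfl | rfl | rfl
      · right; right; right; ext y; rw [hmem]; simp; grind
      · right; right; left; ext y; rw [hmem]; simp; grind
      · right; left; ext y; rw [hmem]; simp; grind
      · left; ext y; rw [hmem]; simp; grind
    · rintro ⟨h | h | h | h, he⟩ <;> subst h <;> refine ⟨he, ?_⟩ <;> intro y <;> simp <;> tauto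
  have hne : ∀ {s t : Finset (Fin n)} (y : Fin n), y ∈ s → y ∉ t → s ≠ t := by
    rintro s t y hs ht rfl
    exact ht hs
  have n1 : ({a, b, c} : Finset (Fin n)) ≠ {a, b, d} := hne c (by simp) (by simp; grind)
  have n2 : ({a, b, c} : Finset (Fin n)) ≠ {a, c, d} := hne b (by simp) (by simp; grind)
  have n3 : ({a, b, c} : Finset (Fin n)) ≠ {b, c, d} := hne a (by simp) (by simp; grind)
  have n4 : ({a, b, d} : Finset (Fin n)) ≠ {a, c, d} := hne b (by simp) (by simp; grind)
  have n5 : ({a, b, d} : Finset (Fin n)) ≠ {b, c, d} := hne a (by simp) (by simp; grind)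
  have n6 : ({a, c, d} : Finset (Fin n)) ≠ {b, c, d} := hne a (by simp) (by simp; grind)
  rw [key, Finset.card_filter, Finset.sum_insert (by simp [n1, n2, n3]),
    Finset.sum_insert (by simp [n4, n5]), Finset.sum_insert (by simp [n6]),
    Finset.sum_singleton]
  ring

/-- The family of 3-graphs under consideration: every 4-set spans 1, 2 or 4 edges. -/
structure Admissible {n : ℕ} (E : Finset (Finset (Fin n))) : Prop where
  unif : ∀ e ∈ E, e.card = 3
  ne_zero : ∀ S : Finset (Fin n), S.card = 4 → (E.filter (fun e => e ⊆ S)).card ≠ 0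
  ne_three : ∀ S : Finset (Fin n), S.card = 4 → (E.filter (fun e => e ⊆ S)).card ≠ 3

namespace Admissible

variable {n : ℕ} {E : Finset (Finset (Fin n))}

/-- The condition on a 4-set, in terms of the number of its triples that are edges. -/
lemma four (h : Admissible E) {a b c d : Fin n} (hab : a ≠ b) (hac : a ≠ c) (had : a ≠ d)
    (hbc : b ≠ c) (hbd : b ≠ d) (hcd : c ≠ d) :
    (if ({a, b, c} : Finset (Fin n)) ∈ E then 1 else 0) +
      (if ({a, b, d} : Finset (Fin n)) ∈ E then 1 else 0) +
      (if ({a, c, d} : Finset (Fin n)) ∈ E then 1 else 0) +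
      (if ({b, c, d} : Finset (Fin n)) ∈ E then 1 else 0) ≠ 0 ∧
    (if ({a, b, c} : Finset (Fin n)) ∈ E then 1 else 0) +
      (if ({a, b, d} : Finset (Fin n)) ∈ E then 1 else 0) +
      (if ({a, c, d} : Finset (Fin n)) ∈ E then 1 else 0) +
      (if ({b, c, d} : Finset (Fin n)) ∈ E then 1 else 0) ≠ 3 := by
  have hcard : ({a, b, c, d} : Finset (Fin n)).card = 4 := by
    simp [hab, hac, had, hbc, hbd, hcd]
  rw [← card_filter_four E h.unif hab hac had hbc hbd hcd]
  exact ⟨h.ne_zero _ hcard, h.ne_three _ hcard⟩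

lemma clique_of_link_homogeneous (h : Admissible E) {v : Fin n} {S : Finset (Fin n)}
    (hv : v ∉ S)
    (hS : (∀ x ∈ S, ∀ y ∈ S, x ≠ y → {v, x, y} ∈ E) ∨
      (∀ x ∈ S, ∀ y ∈ S, x ≠ y → {v, x, y} ∉ E)) :
    ∀ T ⊆ S, T.card = 3 → T ∈ E := by
  intro T hT hc
  obtain ⟨x, y, z, hxy, hxz, hyz, rfl⟩ := Finset.card_eq_three.1 hc
  have hx : x ∈ S := hT (by simp)
  have hy : y ∈ S := hT (by simp)
  have hz : z ∈ S := hT (by simp)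
  have hf := h.four (a := v) (b := x) (c := y) (d := z) (by grind) (by grind) (by grind)
    hxy hxz hyz
  by_contra hn
  rcases hS with hS | hS
  · simp [hS x hx y hy hxy, hS x hx z hz hxz, hS y hy z hz hyz, hn] at hf
  · simp [hS x hx y hy hxy, hS x hx z hz hxz, hS y hy z hz hyz, hn] at hf

/-- A triple inducing exactly two edges `xy`, `yz` in the link of `v` is not an edge. -/
lemma not_mem_of_cherry (h : Admissible E) {v x y z : Fin n} (hvx : v ≠ x) (hvy : v ≠ y)
    (hvz : v ≠ z) (hxy : x ≠ y) (hxz : x ≠ z) (hyz : y ≠ z) (h1 : {v, x, y} ∈ E)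
    (h2 : {v, y, z} ∈ E) (h3 : {v, x, z} ∉ E) : ({x, y, z} : Finset (Fin n)) ∉ E := by
  intro h4
  have hf := h.four hvx hvy hvz hxy hxz hyz
  simp [h1, h2, h3, h4] at hf

lemma link_no_induced_C4 (h : Admissible E) {v x a y b : Fin n} (hvx : v ≠ x) (hva : v ≠ a)
    (hvy : v ≠ y) (hvb : v ≠ b) (hxa : x ≠ a) (hxy : x ≠ y) (hxb : x ≠ b) (hay : a ≠ y)
    (hab : a ≠ b) (hyb : y ≠ b) (h1 : {v, x, a} ∈ E) (h2 : {v, y, a} ∈ E)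
    (h3 : {v, x, b} ∈ E) (h4 : {v, y, b} ∈ E) (h5 : {v, x, y} ∉ E) : {v, a, b} ∈ E := by
  by_contra h6
  have swap : ∀ p q : Fin n, ({v, p, q} : Finset (Fin n)) = {v, q, p} := fun p q => by
    rw [Finset.pair_comm]
  have t1 : ({x, a, y} : Finset (Fin n)) ∉ E :=
    h.not_mem_of_cherry hvx hva hvy hxa hxy hay h1 (swap y a ▸ h2) h5
  have t2 : ({x, b, y} : Finset (Fin n)) ∉ E :=
    h.not_mem_of_cherry hvx hvb hvy hxb hxy hyb.symm h3 (swap y b ▸ h4) h5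
  have t3 : ({a, x, b} : Finset (Fin n)) ∉ E :=
    h.not_mem_of_cherry hva hvx hvb hxa.symm hab hxb (swap x a ▸ h1) h3 h6
  have t4 : ({a, y, b} : Finset (Fin n)) ∉ E :=
    h.not_mem_of_cherry hva hvy hvb hay hab hyb (swap y a ▸ h2) h4 h6
  rw [Finset.pair_comm] at t2
  rw [Finset.insert_comm] at t3
  have hf := h.four hxa hxy hxb hay hab hyb
  simp [t1, t2, t3, t4] at hf

/-- If every clique has size at most `k`, then there are at most `1 + k + k² + k³` vertices. -/
lemma card_le (h : Admissible E) (v : Fin n) (k : ℕ)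
    (hk : ∀ S : Finset (Fin n), (∀ T ⊆ S, T.card = 3 → T ∈ E) → S.card ≤ k) :
    n ≤ 1 + k + k * k + k * k * k := by
  classical
  have swap : ∀ p q : Fin n, ({v, p, q} : Finset (Fin n)) = {v, q, p} := fun p q => by
    rw [Finset.pair_comm]
  -- a maximum independent set of the link of `v`
  obtain ⟨I, hI, hmax⟩ := Finset.exists_max_image
    (Finset.univ.filter (fun S : Finset (Fin n) =>
      v ∉ S ∧ ∀ x ∈ S, ∀ y ∈ S, x ≠ y → {v, x, y} ∉ E)) Finset.card ⟨∅, by simp⟩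
  simp only [Finset.mem_filter, Finset.mem_univ, true_and] at hI hmax
  obtain ⟨hvI, hind⟩ := hI
  have hIk : I.card ≤ k := hk I (h.clique_of_link_homogeneous hvI (Or.inr hind))
  let P : Fin n → Finset (Fin n) := fun x => Finset.univ.filter (fun w =>
    w ≠ v ∧ w ∉ I ∧ {v, x, w} ∈ E ∧ ∀ y ∈ I, y ≠ x → {v, y, w} ∉ E)
  let C : Fin n × Fin n → Finset (Fin n) := fun p => Finset.univ.filter (fun w =>
    w ≠ v ∧ w ∉ I ∧ {v, p.1, w} ∈ E ∧ {v, p.2, w} ∈ E)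
  have hP : ∀ x ∈ I, (P x).card ≤ k := by
    intro x hx
    refine hk _ (h.clique_of_link_homogeneous (v := v) (by simp [P]) (Or.inl ?_))
    intro a ha b hb hab
    simp only [P, Finset.mem_filter, Finset.mem_univ, true_and] at ha hb
    obtain ⟨hav, haI, -, ha⟩ := ha
    obtain ⟨hbv, hbI, -, hb⟩ := hb
    by_contra hn
    have hle := hmax (insert a (insert b (I.erase x))) (by
      refine ⟨by simp [hav.symm, hbv.symm, hvI], ?_⟩
      intro p hp q hq hpq
      simp only [Finset.mem_insert, Finset.mem_erase] at hp hq
      rcases hp with rfl | rfl | ⟨hpx, hp⟩ <;> rcases hq with rfl | rfl | ⟨hqx, hq⟩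
      · exact absurd rfl hpq
      · exact hn
      · rw [swap]; exact ha q hq hqx
      · rw [swap]; exact hn
      · exact absurd rfl hpq
      · rw [swap]; exact hb q hq hqx
      · exact ha p hp hpx
      · exact hb p hp hpx
      · exact hind p hp q hq hpq)
    rw [Finset.card_insert_of_notMem (by simp [hab, haI]),
      Finset.card_insert_of_notMem (by simp [hbI]), Finset.card_erase_of_mem hx] at hle
    have := Finset.card_pos.2 ⟨x, hx⟩
    omega
  have hC : ∀ p ∈ I.offDiag, (C p).card ≤ k := by
    rintro ⟨x, y⟩ hp
    obtain ⟨hx, hy, hxy⟩ := Finset.mem_offDiag.1 hp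
    refine hk _ (h.clique_of_link_homogeneous (v := v) (by simp [C]) (Or.inl ?_))
    intro a ha b hb hab
    simp only [C, Finset.mem_filter, Finset.mem_univ, true_and] at ha hb
    obtain ⟨hav, haI, ha1, ha2⟩ := ha
    obtain ⟨hbv, hbI, hb1, hb2⟩ := hb
    simp only at hx hy hxy
    exact h.link_no_induced_C4 (x := x) (y := y) (by grind) hav.symm (by grind) hbv.symm
      (by grind) hxy (by grind) (by grind) hab (by grind) ha1 ha2 hb1 hb2 (hind x hx y hy hxy)
  have hcover : (Finset.univ : Finset (Fin n)) ⊆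
      (({v} ∪ I) ∪ I.biUnion P) ∪ I.offDiag.biUnion C := by
    intro w _
    by_contra hw
    simp only [Finset.mem_union, Finset.mem_singleton, Finset.mem_biUnion, not_or, not_exists,
      not_and] at hw
    obtain ⟨⟨⟨hwv, hwI⟩, hwP⟩, hwC⟩ := hw
    have hno : ∀ x ∈ I, {v, x, w} ∉ E := by
      intro x hx hxw
      refine hwP x hx ?_
      simp only [P, Finset.mem_filter, Finset.mem_univ, true_and]
      refine ⟨hwv, hwI, hxw, fun y hy hyx hyw => hwC (x, y) ?_ ?_⟩
      · exact Finset.mem_offDiag.2 ⟨hx, hy, hyx.symm⟩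
      · simp only [C, Finset.mem_filter, Finset.mem_univ, true_and]
        exact ⟨hwv, hwI, hxw, hyw⟩
    -- otherwise `I ∪ {w}` would be a larger independent set
    have hle := hmax (insert w I) (by
      refine ⟨by simp [hvI, Ne.symm hwv], ?_⟩
      intro p hp q hq hpq
      simp only [Finset.mem_insert] at hp hq
      rcases hp with rfl | hp <;> rcases hq with rfl | hq
      · exact absurd rfl hpq
      · rw [swap]; exact hno q hq
      · exact hno p hp
      · exact hind p hp q hq hpq)
    rw [Finset.card_insert_of_notMem hwI] at hle
    omega
  have hcP : (I.biUnion P).card ≤ k * k :=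
    (Finset.card_biUnion_le_card_mul I P k hP).trans (Nat.mul_le_mul_right k hIk)
  have hcD : I.offDiag.card ≤ k * k := by
    rw [Finset.offDiag_card]
    exact (Nat.sub_le _ _).trans (Nat.mul_le_mul hIk hIk)
  have hcC : (I.offDiag.biUnion C).card ≤ k * k * k :=
    (Finset.card_biUnion_le_card_mul _ C k hC).trans (Nat.mul_le_mul_right k hcD)
  have h0 := Finset.card_le_card hcover
  rw [Finset.card_univ, Fintype.card_fin] at h0
  have h1 := Finset.card_union_le (({v} ∪ I) ∪ I.biUnion P) (I.offDiag.biUnion C)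
  have h2 := Finset.card_union_le ({v} ∪ I) (I.biUnion P)
  have h3 := Finset.card_union_le {v} I
  rw [Finset.card_singleton] at h3
  omega

end Admissible

/-- There is `c > 0` such that for all `n ≥ 1`, every `n`-vertex 3-graph in which no 4-element
vertex set spans exactly 0 edges and no 4-element vertex set spans exactly 3 edges has a
homogeneous set of size greater than `c * n^(1/3)`. -/
theorem stmt_4 :
    ∃ c : ℝ, 0 < c ∧ ∀ n : ℕ, 1 ≤ n → ∀ E : Finset (Finset (Fin n)),
      (∀ e ∈ E, e.card = 3) →
      (∀ S : Finset (Fin n), S.card = 4 → (E.filter (fun e => e ⊆ S)).card ≠ 0) →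
      (∀ S : Finset (Fin n), S.card = 4 → (E.filter (fun e => e ⊆ S)).card ≠ 3) →
      ∃ S : Finset (Fin n),
        ((∀ T ⊆ S, T.card = 3 → T ∈ E) ∨ (∀ T ⊆ S, T.card = 3 → T ∉ E)) ∧
        c * (n : ℝ) ^ ((1 : ℝ) / 3) < (S.card : ℝ) := by
  refine ⟨1 / 2, by norm_num, fun n hn E hE h0 h3 => ?_⟩
  classical
  have hadm : Admissible E := ⟨hE, h0, h3⟩
  let v : Fin n := ⟨0, hn⟩
  -- a maximum clique of the 3-graph
  obtain ⟨S, hS, hmax⟩ := Finset.exists_max_image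
    (Finset.univ.filter (fun S : Finset (Fin n) => ∀ T ⊆ S, T.card = 3 → T ∈ E)) Finset.card
    ⟨∅, by
      simp only [Finset.mem_filter, Finset.mem_univ, true_and]
      intro T hT hc
      rw [Finset.subset_empty.1 hT] at hc
      simp at hc⟩
  simp only [Finset.mem_filter, Finset.mem_univ, true_and] at hS hmax
  refine ⟨S, Or.inl hS, ?_⟩
  have hpos : 1 ≤ S.card := by
    have := hmax {v} (by
      intro T hT hc
      have := Finset.card_le_card hT
      rw [Finset.card_singleton] at this
      omega)
    simpa using this
  have hle := hadm.card_le v S.card hmax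
  have hle4 : n ≤ 4 * S.card ^ 3 := by
    have e1 : S.card ≤ S.card ^ 3 := Nat.le_self_pow (by norm_num) _
    have e2 : S.card * S.card ≤ S.card ^ 3 := by
      calc S.card * S.card = S.card ^ 2 := by ring
        _ ≤ S.card ^ 3 := Nat.pow_le_pow_right hpos (by norm_num)
    have e3 : S.card * S.card * S.card = S.card ^ 3 := by ring
    omega
  have hlt : (n : ℝ) < (2 * S.card : ℝ) ^ 3 := by
    have e : (n : ℝ) ≤ 4 * (S.card : ℝ) ^ 3 := by exact_mod_cast hle4
    have p : (0 : ℝ) < (S.card : ℝ) ^ 3 := by positivity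
    calc (n : ℝ) ≤ 4 * (S.card : ℝ) ^ 3 := e
      _ < 8 * (S.card : ℝ) ^ 3 := by linarith
      _ = (2 * S.card : ℝ) ^ 3 := by ring
  have hroot : (n : ℝ) ^ ((1 : ℝ) / 3) < 2 * S.card := by
    calc (n : ℝ) ^ ((1 : ℝ) / 3) < ((2 * S.card : ℝ) ^ 3) ^ ((1 : ℝ) / 3) :=
          Real.rpow_lt_rpow (by positivity) hlt (by norm_num)
      _ = 2 * S.card := by
          rw [← Real.rpow_natCast, ← Real.rpow_mul (by positivity)]
          norm_num
  linarith
end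

section
/- There exists a constant c > 0 such that for all n ≥ 6, every n-vertex 3-graph in which no 4-element vertex set spans exactly 1 edge and no 4-element vertex set spans exactly 2 edges has a homogeneous set of size greater than c · (n · log n)^{1/3}, where log denotes the natural logarithm. -/
/-!
If every 4-set spans 0, 3 or 4 edges, then the non-edges are the collinear triples of a linear
space: two non-edges sharing two vertices force all triples of the four vertices to be non-edges.
Lines are cocliques and sets in general position are cliques. So suppose that all lines and all sets
in general position have at most `s` points; it is to be shown that `s ^ 3` has order at least
`n * log n`.

The proof adapts the method of Shearer and Alon for independent sets in locally sparse graphs.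
Choose a random set `W` containing each point with probability `p`, and then a uniformly random
subset `I` of `W` in general position. For a point `v`, consider the expectation of
`A * 1[v ∈ I] + (number of ordered pairs of I collinear with v)`. Summed over `v` it is at most
`A * s + s ^ 3` (`sum_contrib_le`), since two points lie on a line with at most `s` others. On the
other hand, `p` is so small that with probability at least one half no collinear triple of `W` has
two points in the set `N` of points of `W` collinear with `v` and another point of `W`
(`prob_good`). Then, conditionally on `I \ N` and on `v ∉ I`, the set `I ∩ N` is a random subset of
a cube. If that cube has `m` ordered pairs collinear with `v`, then `I` contains `m / 4` of them on
average, while by the Harris-Kleitman inequality it contains none, so that `v` can be added, with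
probability at least `(3 / 4) ^ m` (`cube_bound`, `local_bound`). Whatever `m` is, one of the two
terms contributes order `log n` (`vertex_bound`). Hence `A * s + s ^ 3` has order at least
`n * log n`, and the parameters can be chosen with `A * s ≤ n` (`large_case`).
-/

open Finset

/-! ### Random subsets of a set with marked pairs -/

open scoped Classical in
/-- At least three quarters of the subsets of `U` miss a point of a given pair. -/
theorem card_avoid_pair {V : Type*} (U : Finset V) (q : V × V) (hq : q.1 ≠ q.2) :
    3 * 2 ^ #U ≤ 4 * #{Y ∈ U.powerset | ¬ (q.1 ∈ Y ∧ q.2 ∈ Y)} := by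
  have h1 := card_filter_add_card_filter_not (s := U.powerset) (fun Y => q.1 ∈ Y ∧ q.2 ∈ Y)
  have h2 : 4 * #{Y ∈ U.powerset | q.1 ∈ Y ∧ q.2 ∈ Y} ≤ 2 ^ #U := by
    by_cases hU : ({q.1, q.2} : Finset V) ⊆ U
    · have : {Y ∈ U.powerset | q.1 ∈ Y ∧ q.2 ∈ Y} = Icc {q.1, q.2} U := by
        ext Y
        simp only [mem_filter, mem_powerset, mem_Icc, insert_subset_iff, singleton_subset_iff]
        tauto
      have hc := card_le_card hU
      rw [this, card_Icc_finset hU]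
      rw [card_pair hq] at hc ⊢
      obtain ⟨k, hk⟩ := Nat.exists_eq_add_of_le hc
      rw [hk]
      simp [pow_add]
    · have : {Y ∈ U.powerset | q.1 ∈ Y ∧ q.2 ∈ Y} = ∅ := by
        ext Y
        simp only [mem_filter, mem_powerset, insert_subset_iff, singleton_subset_iff] at hU ⊢
        grind
      simp [this]
  rw [card_powerset] at h1
  omega

open scoped Classical in
/-- A random subset of `U` contains none of the pairs in `P` with probability at least
`(3 / 4) ^ #P`: each single event is a lower set of probability at least `3 / 4`, and lower sets are
positively correlated by the Harris-Kleitman inequality. -/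
theorem card_avoid_pairs {V : Type*} (U : Finset V) (P : Finset (V × V))
    (hP : ∀ q ∈ P, q.1 ≠ q.2) :
    3 ^ #P * 2 ^ #U ≤ 4 ^ #P * #{Y ∈ U.powerset | ∀ q ∈ P, ¬ (q.1 ∈ Y ∧ q.2 ∈ Y)} := by
  induction P using Finset.induction_on with
  | empty => simp
  | insert q P hqP ih =>
    have hq := card_avoid_pair U q (hP q (mem_insert_self _ _))
    set A : Finset (Finset V) := {Y ∈ U.powerset | ∀ q ∈ P, ¬ (q.1 ∈ Y ∧ q.2 ∈ Y)} with hA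
    set B : Finset (Finset V) := {Y ∈ U.powerset | ¬ (q.1 ∈ Y ∧ q.2 ∈ Y)} with hB
    have ih' : 3 ^ #P * 2 ^ #U ≤ 4 ^ #P * #A := by
      convert ih fun r hr => hP r (mem_insert_of_mem hr)
    have hAB : {Y ∈ U.powerset | ∀ r ∈ insert q P, ¬ (r.1 ∈ Y ∧ r.2 ∈ Y)} = A ∩ B := by
      ext Y
      simp only [hA, hB, mem_filter, mem_inter, mem_insert, forall_eq_or_imp]
      tauto
    have hk : #A * #B ≤ 2 ^ #U * #(A ∩ B) := by
      refine IsLowerSet.le_card_inter_finset' ?_ ?_ ?_ ?_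
      · intro Y Z hZY hY
        simp only [hA, coe_filter, mem_powerset, Set.mem_ofPred_eq] at hY ⊢
        exact ⟨hZY.trans hY.1, fun r hr h => hY.2 r hr ⟨hZY h.1, hZY h.2⟩⟩
      · intro Y Z hZY hY
        simp only [hB, coe_filter, mem_powerset, Set.mem_ofPred_eq] at hY ⊢
        exact ⟨hZY.trans hY.1, fun h => hY.2 ⟨hZY h.1, hZY h.2⟩⟩
      · intro t ht; exact mem_powerset.1 (mem_filter.1 ht).1
      · intro t ht; exact mem_powerset.1 (mem_filter.1 ht).1
    rw [hAB, card_insert_of_notMem hqP]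
    have hpos : 0 < 2 ^ #U := by positivity
    generalize 2 ^ #U = N at *
    generalize #(A ∩ B) = k at *
    generalize #A = x at *
    generalize #B = y at *
    have key : N * (3 ^ (#P + 1) * N) ≤ N * (4 ^ (#P + 1) * k) :=
      calc N * (3 ^ (#P + 1) * N) = (3 ^ #P * N) * (3 * N) := by ring
        _ ≤ (4 ^ #P * x) * (4 * y) := Nat.mul_le_mul ih' hq
        _ = 4 ^ (#P + 1) * (x * y) := by ring
        _ ≤ 4 ^ (#P + 1) * (N * k) := by gcongr
        _ = _ := by ring
    exact le_of_mul_le_mul_left key hpos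

open scoped Classical in
/-- The number of ordered pairs of elements of `Y` that are related by `r`. -/
noncomputable def pairCount {V : Type*} (r : V → V → Prop) (Y : Finset V) : ℕ :=
  #{q ∈ Y ×ˢ Y | r q.1 q.2}

theorem pairCount_eq_zero {V : Type*} {r : V → V → Prop} {Y : Finset V} :
    pairCount r Y = 0 ↔ ∀ a ∈ Y, ∀ b ∈ Y, ¬ r a b := by
  classical
  simp only [pairCount, card_eq_zero, filter_eq_empty_iff, mem_product, Prod.forall]
  grind

open scoped Classical in
/-- A related pair of points of `U` lies in a quarter of the subsets of `U`. -/
theorem sum_card_pairs {V : Type*} (U : Finset V) (r : V → V → Prop) (hr : ∀ a b, r a b → a ≠ b) :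
    4 * ∑ Y ∈ U.powerset, pairCount r Y = 2 ^ #U * pairCount r U := by
  have h1 : ∀ Y ∈ U.powerset, pairCount r Y
      = ∑ q ∈ U ×ˢ U with r q.1 q.2, if q.1 ∈ Y ∧ q.2 ∈ Y then 1 else 0 := by
    intro Y hY
    rw [← card_filter, filter_filter, pairCount]
    congr 1
    ext q
    have := mem_powerset.1 hY
    simp only [mem_filter, mem_product]
    grind
  rw [sum_congr rfl h1, sum_comm, mul_sum, pairCount,
    card_eq_sum_ones {q ∈ U ×ˢ U | r q.1 q.2}, mul_sum]
  refine sum_congr rfl fun q hq => ?_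
  rw [← card_filter]
  simp only [mem_filter, mem_product] at hq
  have hU : ({q.1, q.2} : Finset V) ⊆ U := by
    simp [insert_subset_iff, hq.1]
  have : {Y ∈ U.powerset | q.1 ∈ Y ∧ q.2 ∈ Y} = Icc {q.1, q.2} U := by
    ext Y
    simp only [mem_filter, mem_powerset, mem_Icc, insert_subset_iff, singleton_subset_iff]
    tauto
  have hc := card_le_card hU
  rw [this, card_Icc_finset hU]
  rw [card_pair (hr _ _ hq.2)] at hc ⊢
  obtain ⟨k, hk⟩ := Nat.exists_eq_add_of_le hc
  rw [hk]
  simp [pow_add]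

/-- If `Y` is a random subset of `U` and `m` is the number of related ordered pairs in `U`, then `Y`
has no related pair with probability at least `(3 / 4) ^ m` and `m / 4` related pairs on average.
Hence the average of `B * 1[no pair] + 4 * (number of pairs)` is at least `T`, whatever `m` is. -/
theorem cube_bound {V : Type*} (U : Finset V) (r : V → V → Prop) (hr : ∀ a b, r a b → a ≠ b)
    {B T : ℝ} (hB : 0 ≤ B) (hT : ∀ m : ℕ, T ≤ B * (3 / 4) ^ m + m) :
    T * 2 ^ #U ≤ ∑ Y ∈ U.powerset,
      ((if pairCount r Y = 0 then B else 0) + 4 * (pairCount r Y : ℝ)) := by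
  classical
  set P : Finset (V × V) := {q ∈ U ×ˢ U | r q.1 q.2} with hP
  have h1 := card_avoid_pairs U P fun q hq => hr _ _ (mem_filter.1 hq).2
  have h2 := sum_card_pairs U r hr
  have hPU : pairCount r U = #P := rfl
  rw [sum_add_distrib, ← mul_sum, ← sum_filter, sum_const, nsmul_eq_mul]
  have e : {Y ∈ U.powerset | ∀ q ∈ P, ¬ (q.1 ∈ Y ∧ q.2 ∈ Y)}
      = {Y ∈ U.powerset | pairCount r Y = 0} := by
    ext Y
    simp only [hP, mem_filter, mem_powerset, mem_product, pairCount_eq_zero]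
    refine and_congr_right fun hY => ⟨fun h a ha b hb hab => ?_, fun h q hq hqY => ?_⟩
    · exact h (a, b) ⟨⟨hY ha, hY hb⟩, hab⟩ ⟨ha, hb⟩
    · exact h _ hqY.1 _ hqY.2 hq.2
  rw [e] at h1
  rw [hPU] at h2
  generalize #{Y ∈ U.powerset | pairCount r Y = 0} = c at *
  have h1' : (3 : ℝ) ^ #P * 2 ^ #U ≤ 4 ^ #P * c := by exact_mod_cast h1
  have h2' : 4 * ∑ Y ∈ U.powerset, (pairCount r Y : ℝ) = 2 ^ #U * #P := by
    exact_mod_cast h2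
  have h3 : (3 / 4 : ℝ) ^ #P * 2 ^ #U ≤ c := by
    rw [div_pow, div_mul_eq_mul_div, div_le_iff₀ (by positivity)]
    linarith
  rw [h2']
  calc T * 2 ^ #U ≤ (B * (3 / 4) ^ #P + #P) * 2 ^ #U := by
        gcongr; exact hT _
    _ = B * ((3 / 4) ^ #P * 2 ^ #U) + 2 ^ #U * #P := by ring
    _ ≤ B * c + 2 ^ #U * #P := by gcongr
    _ = _ := by ring

/-! ### Linear spaces and sets in general position -/

/-- The collinearity relation on triples of distinct points of a linear space: a symmetric ternary
relation for which any two distinct points determine the line through them. -/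
structure Collinearity (V : Type*) where
  col : V → V → V → Prop
  ne : ∀ {a b c}, col a b c → a ≠ b
  swap : ∀ {a b c}, col a b c → col b a c
  rot : ∀ {a b c}, col a b c → col a c b
  trans : ∀ {a b c d}, col a b c → col a b d → c ≠ d → col a c d

namespace Collinearity

variable {V : Type*} (C : Collinearity V)

/-- A set in general position: it contains no collinear triple. -/
def Ind (I : Finset V) : Prop := ∀ a ∈ I, ∀ b ∈ I, ∀ c ∈ I, ¬ C.col a b c

variable {C} in
theorem Ind.mono {I J : Finset V} (hJ : C.Ind J) (h : I ⊆ J) : C.Ind I :=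
  fun a ha b hb c hc => hJ a (h ha) b (h hb) c (h hc)

open scoped Classical in
/-- The subsets of `W` in general position. -/
noncomputable def indSets (W : Finset V) : Finset (Finset V) := {I ∈ W.powerset | C.Ind I}

theorem mem_indSets {W I : Finset V} : I ∈ C.indSets W ↔ I ⊆ W ∧ C.Ind I := by
  classical
  simp [indSets]

theorem card_indSets_pos (W : Finset V) : 0 < #(C.indSets W) :=
  card_pos.2 ⟨∅, C.mem_indSets.2 ⟨empty_subset _, by simp [Ind]⟩⟩

/-- `W` is good for `v` if no collinear triple of `W` has two points which are each collinear with
`v` and a further point of `W`. Then, among the points of `W` collinear with `v` and another point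
of `W`, membership in a set in general position is governed by the remaining points alone. -/
def Good (v : V) (W : Finset V) : Prop :=
  ∀ a ∈ W, ∀ c ∈ W, ∀ e ∈ W, ∀ b ∈ W, ∀ d ∈ W, C.col v a b → C.col v c d → ¬ C.col a c e

theorem ne13 {a b c : V} (h : C.col a b c) : a ≠ c := C.ne (C.rot h)

theorem ne23 {a b c : V} (h : C.col a b c) : b ≠ c := C.ne (C.rot (C.swap h))

/-- Let `I` be a uniformly random subset of `W` in general position, and let `W` be good for `v`.
Let `N` be the set of points of `W` collinear with `v` and another point of `W`. Conditionally on
`J = I \ N`, the set `I ∩ N` is a uniformly random subset of the set `U` of those `u ∈ N` for which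
`J ∪ {u}` is in general position, so that `cube_bound` applies. -/
theorem local_bound {v : V} {W : Finset V} (hg : C.Good v W)
    {B T : ℝ} (hB : 0 ≤ B) (hT : ∀ m : ℕ, T ≤ B * (3 / 4) ^ m + m) :
    T * #(C.indSets W) ≤ ∑ I ∈ C.indSets W,
      ((if pairCount (C.col v) I = 0 then B else 0) + 4 * (pairCount (C.col v) I : ℝ)) := by
  classical
  set N : Finset V := {a ∈ W | ∃ b ∈ W, C.col v a b} with hN
  have hNW : N ⊆ W := filter_subset _ _
  have h2 : ∀ a ∈ N, ∀ c ∈ N, ∀ e ∈ W, ¬ C.col a c e := by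
    intro a ha c hc e he
    obtain ⟨haW, b, hb, hab⟩ := mem_filter.1 ha
    obtain ⟨hcW, d, hd, hcd⟩ := mem_filter.1 hc
    exact hg a haW c hcW e he b hb d hd hab hcd
  have hmaps : ∀ I ∈ C.indSets W, I \ N ∈ (C.indSets W).image (· \ N) :=
    fun I hI => mem_image_of_mem _ hI
  rw [← sum_fiberwise_of_maps_to hmaps, card_eq_sum_card_fiberwise hmaps]
  push_cast
  rw [mul_sum]
  refine sum_le_sum fun J hJ => ?_
  obtain ⟨I₀, hI₀, rfl⟩ := mem_image.1 hJ
  obtain ⟨hI₀W, hI₀⟩ := C.mem_indSets.1 hI₀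
  set J := I₀ \ N with hJdef
  have hJW : J ⊆ W := sdiff_subset.trans hI₀W
  have hJN : ∀ a ∈ J, a ∉ N := fun a ha => (mem_sdiff.1 ha).2
  have hJind : C.Ind J := hI₀.mono sdiff_subset
  set U : Finset V := {u ∈ N | C.Ind (insert u J)} with hU
  have hUN : U ⊆ N := filter_subset _ _
  have hfib : {I ∈ C.indSets W | I \ N = J} = U.powerset.image (J ∪ ·) := by
    ext I
    simp only [mem_filter, mem_image, mem_powerset, mem_indSets]
    constructor
    · rintro ⟨⟨hIW, hI⟩, hIJ⟩
      refine ⟨I ∩ N, fun u hu => ?_, ?_⟩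
      · rw [mem_inter] at hu
        refine mem_filter.2 ⟨hu.2, hI.mono (insert_subset hu.1 ?_)⟩
        rw [← hIJ]; exact sdiff_subset
      · rw [← hIJ]; exact sdiff_union_inter I N
    · rintro ⟨Y, hY, rfl⟩
      have hYN := hY.trans hUN
      have hYW := hYN.trans hNW
      refine ⟨⟨union_subset hJW hYW, ?_⟩, ?_⟩
      · have h1 : ∀ u ∈ Y, ∀ a ∈ J, ∀ b ∈ J, ¬ C.col u a b := by
          intro u hu a ha b hb
          exact (mem_filter.1 (hY hu)).2 u (mem_insert_self _ _) a (mem_insert_of_mem ha)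
            b (mem_insert_of_mem hb)
        intro a ha b hb c hc habc
        rcases mem_union.1 ha with ha | ha <;> rcases mem_union.1 hb with hb | hb <;>
          rcases mem_union.1 hc with hc | hc
        · exact hJind a ha b hb c hc habc
        · exact h1 c hc a ha b hb (C.swap (C.rot habc))
        · exact h1 b hb a ha c hc (C.swap habc)
        · exact h2 b (hYN hb) c (hYN hc) a (hJW ha) (C.rot (C.swap habc))
        · exact h1 a ha b hb c hc habc
        · exact h2 a (hYN ha) c (hYN hc) b (hJW hb) (C.rot habc)
        · exact h2 a (hYN ha) b (hYN hb) c (hJW hc) habc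
        · exact h2 a (hYN ha) b (hYN hb) c (hYW hc) habc
      · ext a
        simp only [mem_sdiff, mem_union]
        exact ⟨fun h => h.1.elim id fun h' => absurd (hYN h') h.2, fun h => ⟨Or.inl h, hJN a h⟩⟩
  have hinj : Set.InjOn (J ∪ ·) (U.powerset : Set (Finset V)) := by
    intro Y hY Z hZ hYZ
    have hY' := mem_powerset.1 (mem_coe.1 hY)
    have hZ' := mem_powerset.1 (mem_coe.1 hZ)
    ext a
    have := congrArg (a ∈ ·) hYZ
    simp only [mem_union, eq_iff_iff] at this
    constructor
    · intro h
      exact (this.1 (Or.inr h)).resolve_left fun hj => hJN a hj (hUN (hY' h))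
    · intro h
      exact (this.2 (Or.inr h)).resolve_left fun hj => hJN a hj (hUN (hZ' h))
  rw [hfib, sum_image hinj, card_image_of_injOn hinj, card_powerset]
  have hpc : ∀ Y ∈ U.powerset, pairCount (C.col v) (J ∪ Y) = pairCount (C.col v) Y := by
    intro Y hY
    have hYN := (mem_powerset.1 hY).trans hUN
    unfold pairCount
    congr 1
    ext q
    simp only [mem_filter, mem_product]
    refine and_congr_left fun hq => ⟨fun ⟨hq1, hq2⟩ => ?_, fun ⟨hq1, hq2⟩ =>
      ⟨mem_union_right _ hq1, mem_union_right _ hq2⟩⟩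
    have hW : J ∪ Y ⊆ W := union_subset hJW (hYN.trans hNW)
    have n1 : q.1 ∈ N := mem_filter.2 ⟨hW hq1, q.2, hW hq2, hq⟩
    have n2 : q.2 ∈ N := mem_filter.2 ⟨hW hq2, q.1, hW hq1, C.rot hq⟩
    exact ⟨(mem_union.1 hq1).resolve_left fun h => hJN _ h n1,
      (mem_union.1 hq2).resolve_left fun h => hJN _ h n2⟩
  have hcube := cube_bound U (C.col v) (fun a b h => C.ne23 h) hB hT
  push_cast
  refine hcube.trans (le_of_eq (sum_congr rfl fun Y hY => ?_))
  rw [hpc Y hY]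

/-- A set in general position stays so on adding `v` iff it has no pair collinear with `v`. -/
theorem ind_insert_iff [DecidableEq V] {v : V} {I : Finset V} (hI : C.Ind I) :
    C.Ind (insert v I) ↔ pairCount (C.col v) I = 0 := by
  rw [pairCount_eq_zero]
  constructor
  · intro h a ha b hb
    exact h v (mem_insert_self _ _) a (mem_insert_of_mem ha) b (mem_insert_of_mem hb)
  · intro h a ha b hb c hc habc
    rcases mem_insert.1 ha with ha' | ha' <;> rcases mem_insert.1 hb with hb' | hb' <;>
      rcases mem_insert.1 hc with hc' | hc'
    · exact C.ne habc (ha'.trans hb'.symm)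
    · exact C.ne habc (ha'.trans hb'.symm)
    · exact C.ne13 habc (ha'.trans hc'.symm)
    · exact h b hb' c hc' (ha' ▸ habc)
    · exact C.ne23 habc (hb'.trans hc'.symm)
    · exact h a ha' c hc' (hb' ▸ C.swap habc)
    · exact h a ha' b hb' (hc' ▸ C.swap (C.rot habc))
    · exact hI a ha' b hb' c hc' habc

theorem card_indSets_insert_le [DecidableEq V] (v : V) (W : Finset V) :
    #(C.indSets (insert v W)) ≤ 2 * #(C.indSets W) := by
  have hsub : C.indSets (insert v W) ⊆ C.indSets W ∪ (C.indSets W).image (insert v) := by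
    intro I hI
    obtain ⟨hIW, hI⟩ := C.mem_indSets.1 hI
    by_cases hv : v ∈ I
    · refine mem_union_right _ (mem_image.2 ⟨I.erase v, C.mem_indSets.2 ⟨?_, ?_⟩, insert_erase hv⟩)
      · exact subset_insert_iff.1 hIW
      · exact hI.mono (erase_subset _ _)
    · exact mem_union_left _ (C.mem_indSets.2 ⟨(subset_insert_iff_of_notMem hv).1 hIW, hI⟩)
  have h1 := card_le_card hsub
  have h2 := card_union_le (C.indSets W) ((C.indSets W).image (insert v))
  have h3 : #((C.indSets W).image (insert v)) ≤ #(C.indSets W) := card_image_le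
  omega

theorem card_pairCount_zero_le [DecidableEq V] {v : V} {W : Finset V} (hv : v ∉ W) :
    #{I ∈ C.indSets W | pairCount (C.col v) I = 0} ≤ #{I ∈ C.indSets (insert v W) | v ∈ I} := by
  refine card_le_card_of_injOn (insert v) ?_ ?_
  · intro I hI
    obtain ⟨hI, h0⟩ := mem_filter.1 (mem_coe.1 hI)
    obtain ⟨hIW, hI⟩ := C.mem_indSets.1 hI
    exact mem_coe.2 (mem_filter.2 ⟨C.mem_indSets.2
      ⟨insert_subset_insert _ hIW, (C.ind_insert_iff hI).2 h0⟩, mem_insert_self _ _⟩)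
  · intro I hI J hJ hIJ
    have hvI : v ∉ I := fun h => hv ((C.mem_indSets.1 (mem_filter.1 (mem_coe.1 hI)).1).1 h)
    have hvJ : v ∉ J := fun h => hv ((C.mem_indSets.1 (mem_filter.1 (mem_coe.1 hJ)).1).1 h)
    rw [← erase_insert hvI, ← erase_insert hvJ]
    exact congrArg (fun K => erase K v) hIJ

variable [Fintype V]

/-! ### Random sets of points -/

open scoped Classical in
/-- The probability that the random set containing each point independently with probability `p`
is equal to `W`. -/
noncomputable def wt (p : ℝ) (W : Finset V) : ℝ := p ^ #W * (1 - p) ^ #(Wᶜ)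

theorem wt_nonneg {p : ℝ} (h0 : 0 ≤ p) (h1 : p ≤ 1) (W : Finset V) : 0 ≤ wt p W :=
  mul_nonneg (pow_nonneg h0 _) (pow_nonneg (by linarith) _)

open scoped Classical in
/-- The random set contains `S` with probability `p ^ #S`. -/
theorem sum_wt_superset (p : ℝ) (S : Finset V) :
    ∑ W : Finset V, (if S ⊆ W then wt p W else 0) = p ^ #S := by
  have h := Fintype.prod_add (fun _ : V => p) (fun i => if i ∈ S then 0 else 1 - p)
  have hl : ∀ i : V, p + (if i ∈ S then 0 else 1 - p) = if i ∈ S then p else 1 := by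
    intro i; split_ifs <;> ring
  simp only [hl] at h
  rw [prod_ite_mem, univ_inter, prod_const] at h
  rw [h]
  refine sum_congr rfl fun W _ => ?_
  by_cases hS : S ⊆ W
  · rw [if_pos hS, prod_const, wt]
    congr 1
    rw [← prod_const]
    refine prod_congr rfl fun i hi => ?_
    rw [if_neg fun h => (mem_compl.1 hi) (hS h)]
  · rw [if_neg hS]
    obtain ⟨i, hi, hiW⟩ := not_subset.1 hS
    rw [prod_eq_zero (mem_compl.2 hiW) (by simp [hi]), mul_zero]

theorem sum_wt (p : ℝ) : ∑ W : Finset V, wt p W = 1 := by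
  simpa using sum_wt_superset p (∅ : Finset V)

theorem wt_insert {p : ℝ} (h0 : 0 ≤ p) (h1 : p ≤ 1) [DecidableEq V] {v : V} {W : Finset V}
    (hv : v ∉ W) : p * wt p W ≤ wt p (insert v W) := by
  have hc : #(Wᶜ) = #((insert v W)ᶜ) + 1 := by
    have := card_compl_add_card W
    have := card_compl_add_card (insert v W)
    rw [card_insert_of_notMem hv] at this
    omega
  have e1 : wt p W = p ^ #W * (1 - p) ^ (#((insert v W)ᶜ) + 1) := by
    rw [← hc, wt]; congr!
  have e2 : wt p (insert v W) = p ^ (#W + 1) * (1 - p) ^ #((insert v W)ᶜ) := by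
    rw [← card_insert_of_notMem hv, wt]; congr!
  rw [e1, e2]
  have hq : 0 ≤ 1 - p := by linarith
  calc p * (p ^ #W * (1 - p) ^ (#((insert v W)ᶜ) + 1))
      = (p ^ (#W + 1) * (1 - p) ^ #((insert v W)ᶜ)) * (1 - p) := by ring
    _ ≤ (p ^ (#W + 1) * (1 - p) ^ #((insert v W)ᶜ)) * 1 := by
        gcongr; linarith
    _ = _ := by ring

/-! ### Points for which a random set is good -/

open scoped Classical in
/-- The points collinear with `a` and `b`, that is, the line through `a` and `b` without these two
points (empty if `a = b`). -/
noncomputable def line (a b : V) : Finset V := {c | C.col a b c}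

theorem mem_line {a b c : V} : c ∈ C.line a b ↔ C.col a b c := by simp [line]

open scoped Classical in
/-- The triples of points of a common line through `v`; the filter discards degenerate choices. -/
noncomputable def bad3 (v : V) : Finset (Finset V) :=
  {S ∈ univ.biUnion fun a => (C.line v a ×ˢ C.line v a).image fun q => {a, q.1, q.2} | #S = 3}

open scoped Classical in
/-- The sets `{a, c, b, d, e}` of five points where `b` is collinear with `v, a`, `d` with `v, c`
and `e` with `a, c`; the filter discards degenerate choices. -/
noncomputable def bad5 (v : V) : Finset (Finset V) :=
  {S ∈ univ.biUnion fun a => univ.biUnion fun c =>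
    (C.line v a ×ˢ C.line v c ×ˢ C.line a c).image fun q => {a, c, q.1, q.2.1, q.2.2} | #S = 5}

theorem card_bad3 {s : ℝ} (hs : ∀ a b, (#(C.line a b) : ℝ) ≤ s) (v : V) :
    (#(C.bad3 v) : ℝ) ≤ Fintype.card V * s ^ 2 := by
  classical
  have h : #(C.bad3 v) ≤ ∑ a, #(C.line v a) * #(C.line v a) := by
    refine (card_filter_le _ _).trans (card_biUnion_le.trans (sum_le_sum fun a _ => ?_))
    exact card_image_le.trans (card_product _ _).le
  calc (#(C.bad3 v) : ℝ) ≤ ∑ a, (#(C.line v a) : ℝ) * #(C.line v a) := by exact_mod_cast h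
    _ ≤ ∑ _a : V, s ^ 2 := by
        refine sum_le_sum fun a _ => ?_
        rw [sq]
        have := hs v a
        gcongr
        exact (Nat.cast_nonneg _).trans this
    _ = _ := by simp

theorem card_bad5 {s : ℝ} (hs : ∀ a b, (#(C.line a b) : ℝ) ≤ s) (v : V) :
    (#(C.bad5 v) : ℝ) ≤ (Fintype.card V : ℝ) ^ 2 * s ^ 3 := by
  classical
  have h : #(C.bad5 v) ≤ ∑ a, ∑ c, #(C.line v a) * (#(C.line v c) * #(C.line a c)) := by
    refine (card_filter_le _ _).trans (card_biUnion_le.trans (sum_le_sum fun a _ => ?_))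
    refine card_biUnion_le.trans (sum_le_sum fun c _ => ?_)
    refine card_image_le.trans ?_
    rw [card_product, card_product]
  have h0 : 0 ≤ s := (Nat.cast_nonneg _).trans (hs v v)
  calc (#(C.bad5 v) : ℝ)
      ≤ ∑ a, ∑ c, (#(C.line v a) : ℝ) * (#(C.line v c) * #(C.line a c)) := by exact_mod_cast h
    _ ≤ ∑ _a : V, ∑ _c : V, s * (s * s) := by
        refine sum_le_sum fun a _ => sum_le_sum fun c _ => ?_
        have h1 := hs v a
        have h2 := hs v c
        have h3 := hs a c
        gcongr
    _ = _ := by simp; ring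

/-- A set avoiding `v` that is not good for `v` contains three points of one line through `v`, or
five points of a triangle of lines with apex `v`. -/
theorem exists_bad {v : V} {W : Finset V} (hv : v ∉ W) (hg : ¬ C.Good v W) :
    (∃ S ∈ C.bad3 v, S ⊆ W) ∨ ∃ S ∈ C.bad5 v, S ⊆ W := by
  classical
  unfold Good at hg
  push Not at hg
  obtain ⟨a, ha, c, hc, e, he, b, hb, d, hd, hab, hcd, hace⟩ := hg
  have hve : v ≠ e := fun h => hv (h ▸ he)
  by_cases hac : C.col v a c
  · left
    have hvae : C.col v a e := C.swap (C.trans (C.rot (C.swap hac)) hace hve)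
    refine ⟨{a, c, e}, mem_filter.2 ⟨?_, ?_⟩, ?_⟩
    · exact mem_biUnion.2 ⟨a, mem_univ _, mem_image.2
        ⟨(c, e), mem_product.2 ⟨C.mem_line.2 hac, C.mem_line.2 hvae⟩, rfl⟩⟩
    · exact card_eq_three.2 ⟨a, c, e, C.ne hace, C.ne13 hace, C.ne23 hace, rfl⟩
    · simp [insert_subset_iff, *]
  · right
    have hvc : v ≠ c := C.ne hcd
    have hva : v ≠ a := C.ne hab
    have nac : a ≠ c := C.ne hace
    have nad : a ≠ d := by rintro rfl; exact hac (C.rot hcd)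
    have nbc : b ≠ c := by rintro rfl; exact hac hab
    have nbd : b ≠ d := by rintro rfl; exact hac (C.trans (C.rot hab) (C.rot hcd) nac)
    have nbe : b ≠ e := by
      rintro rfl
      exact hac (C.swap (C.trans (C.rot (C.swap hab)) (C.rot hace) hvc))
    have nde : d ≠ e := by
      rintro rfl
      exact hac (C.rot (C.swap (C.trans (C.rot (C.swap hcd)) (C.rot (C.swap hace)) hva)))
    refine ⟨{a, c, b, d, e}, mem_filter.2 ⟨?_, ?_⟩, ?_⟩
    · exact mem_biUnion.2 ⟨a, mem_univ _, mem_biUnion.2 ⟨c, mem_univ _, mem_image.2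
        ⟨(b, d, e), mem_product.2 ⟨C.mem_line.2 hab, mem_product.2
          ⟨C.mem_line.2 hcd, C.mem_line.2 hace⟩⟩, rfl⟩⟩⟩
    · have n1 := C.ne23 hab
      have n2 := C.ne23 hcd
      have n3 := C.ne13 hace
      have n4 := C.ne23 hace
      rw [card_insert_of_notMem, card_insert_of_notMem, card_insert_of_notMem, card_pair nde]
      all_goals simp [*, nbc.symm]
    · simp [insert_subset_iff, *]

open scoped Classical in
/-- Union bound over `v ∈ W` and over the configurations of `exists_bad`. -/
theorem prob_good {s p : ℝ} (hs : ∀ a b, (#(C.line a b) : ℝ) ≤ s) (h0 : 0 ≤ p) (h1 : p ≤ 1)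
    (v : V) :
    1 - p - Fintype.card V * s ^ 2 * p ^ 3 - (Fintype.card V : ℝ) ^ 2 * s ^ 3 * p ^ 5
      ≤ ∑ W : Finset V with v ∉ W ∧ C.Good v W, wt p W := by
  have hpt : ∀ W : Finset V, wt p W ≤ (if v ∉ W ∧ C.Good v W then wt p W else 0)
      + (if {v} ⊆ W then wt p W else 0) + (∑ S ∈ C.bad3 v, if S ⊆ W then wt p W else 0)
      + ∑ S ∈ C.bad5 v, if S ⊆ W then wt p W else 0 := by
    intro W
    have hw := wt_nonneg h0 h1 W
    have hn : ∀ S : Finset V, 0 ≤ if S ⊆ W then wt p W else 0 := fun S => by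
      split_ifs <;> simp [hw]
    have h3 : 0 ≤ ∑ S ∈ C.bad3 v, if S ⊆ W then wt p W else 0 := sum_nonneg fun S _ => hn S
    have h5 : 0 ≤ ∑ S ∈ C.bad5 v, if S ⊆ W then wt p W else 0 := sum_nonneg fun S _ => hn S
    by_cases hv : v ∈ W
    · simp only [hv, not_true_eq_false, false_and, if_false, singleton_subset_iff, if_true]
      linarith
    by_cases hg : C.Good v W
    · simp only [hv, hg, not_false_eq_true, and_self, if_true, singleton_subset_iff, if_false]
      linarith
    simp only [hv, hg, and_false, singleton_subset_iff, if_false]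
    rcases C.exists_bad hv hg with ⟨S, hS, hSW⟩ | ⟨S, hS, hSW⟩
    · have := single_le_sum (fun S _ => hn S) hS
      rw [if_pos hSW] at this
      linarith
    · have := single_le_sum (fun S _ => hn S) hS
      rw [if_pos hSW] at this
      linarith
  have hsum := sum_le_sum fun W (_ : W ∈ (univ : Finset (Finset V))) => hpt W
  rw [sum_add_distrib, sum_add_distrib, sum_add_distrib, sum_wt, sum_wt_superset, ← sum_filter,
    sum_comm, sum_comm (t := C.bad5 v)] at hsum
  simp only [sum_wt_superset] at hsum
  have e3 : ∑ S ∈ C.bad3 v, p ^ #S = #(C.bad3 v) * p ^ 3 := by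
    rw [sum_congr rfl fun S hS => by rw [(mem_filter.1 hS).2], sum_const, nsmul_eq_mul]
  have e5 : ∑ S ∈ C.bad5 v, p ^ #S = #(C.bad5 v) * p ^ 5 := by
    rw [sum_congr rfl fun S hS => by rw [(mem_filter.1 hS).2], sum_const, nsmul_eq_mul]
  rw [e3, e5, card_singleton, pow_one] at hsum
  have b3 := mul_le_mul_of_nonneg_right (C.card_bad3 hs v) (pow_nonneg h0 3)
  have b5 := mul_le_mul_of_nonneg_right (C.card_bad5 hs v) (pow_nonneg h0 5)
  linarith

/-! ### Double counting -/

open scoped Classical in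
/-- The contribution of the outcome `W` of the random set to the expectation of
`A * 1[v ∈ I] + (number of ordered pairs of I collinear with v)`, where `I` is a uniformly random
subset of `W` in general position. -/
noncomputable def contrib (A p : ℝ) (v : V) (W : Finset V) : ℝ :=
  wt p W / #(C.indSets W) *
    ∑ I ∈ C.indSets W, ((if v ∈ I then A else 0) + (pairCount (C.col v) I : ℝ))

theorem contrib_nonneg {A p : ℝ} (hA : 0 ≤ A) (h0 : 0 ≤ p) (h1 : p ≤ 1) (v : V) (W : Finset V) :
    0 ≤ C.contrib A p v W := by
  classical
  refine mul_nonneg (div_nonneg (wt_nonneg h0 h1 W) (Nat.cast_nonneg _))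
    (sum_nonneg fun I _ => add_nonneg ?_ (Nat.cast_nonneg _))
  split_ifs <;> simp [hA]

/-- The outcomes `W` and `insert v W` together. The former accounts for the pairs collinear with `v`;
the latter accounts for `v ∈ I`, with a loss of at most `2` because adding `v` at most doubles the
number of sets in general position. -/
theorem contrib_pair [DecidableEq V] {A p T : ℝ} (hA : 0 ≤ A) (h0 : 0 ≤ p) (h1 : p ≤ 1)
    (hT : ∀ m : ℕ, T ≤ 2 * A * p * (3 / 4) ^ m + m)
    {v : V} {W : Finset V} (hv : v ∉ W) (hg : C.Good v W) :
    T / 4 * wt p W ≤ C.contrib A p v W + C.contrib A p v (insert v W) := by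
  have hloc := C.local_bound hg (by positivity) hT
  rw [sum_add_distrib, ← mul_sum, ← sum_filter, sum_const, nsmul_eq_mul] at hloc
  set k := #{I ∈ C.indSets W | pairCount (C.col v) I = 0} with hk
  set X := ∑ I ∈ C.indSets W, (pairCount (C.col v) I : ℝ) with hX
  have hi : (0 : ℝ) < #(C.indSets W) := by exact_mod_cast C.card_indSets_pos W
  have hi' : (0 : ℝ) < #(C.indSets (insert v W)) := by
    exact_mod_cast C.card_indSets_pos (insert v W)
  have hii : (#(C.indSets (insert v W)) : ℝ) ≤ 2 * #(C.indSets W) := by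
    exact_mod_cast C.card_indSets_insert_le v W
  have hw := wt_nonneg h0 h1 W
  have hw' := wt_insert h0 h1 hv
  have c1 : wt p W / #(C.indSets W) * X ≤ C.contrib A p v W := by
    unfold contrib
    refine mul_le_mul_of_nonneg_left (sum_le_sum fun I _ => ?_) (div_nonneg hw hi.le)
    split_ifs <;> simp [hA]
  have c2 : (p * wt p W) / (2 * #(C.indSets W)) * (k * A) ≤ C.contrib A p v (insert v W) := by
    unfold contrib
    refine mul_le_mul (div_le_div₀ ((mul_nonneg h0 hw).trans hw') hw' hi' hii) ?_
      (by positivity) (div_nonneg ((mul_nonneg h0 hw).trans hw') hi'.le)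
    have hkl : (k : ℝ) ≤ #{I ∈ C.indSets (insert v W) | v ∈ I} := by
      exact_mod_cast C.card_pairCount_zero_le hv
    calc (k : ℝ) * A ≤ #{I ∈ C.indSets (insert v W) | v ∈ I} * A := by gcongr
      _ = ∑ I ∈ C.indSets (insert v W), (if v ∈ I then A else 0) := by
          rw [← sum_filter, sum_const, nsmul_eq_mul]
      _ ≤ _ := by
          refine sum_le_sum fun I _ => ?_
          split_ifs <;> simp
  refine le_trans ?_ (add_le_add c1 c2)
  have e : wt p W / #(C.indSets W) * X + (p * wt p W) / (2 * #(C.indSets W)) * (k * A)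
      = (wt p W / (4 * #(C.indSets W))) * (k * (2 * A * p) + 4 * X) := by
    field_simp
    ring
  rw [e]
  calc T / 4 * wt p W = (wt p W / (4 * #(C.indSets W))) * (T * #(C.indSets W)) := by
        field_simp
    _ ≤ _ := by gcongr

open scoped Classical in
theorem vertex_bound {A p T : ℝ} (hA : 0 ≤ A) (h0 : 0 ≤ p) (h1 : p ≤ 1)
    (hT : ∀ m : ℕ, T ≤ 2 * A * p * (3 / 4) ^ m + m) (v : V) :
    T / 4 * ∑ W : Finset V with v ∉ W ∧ C.Good v W, wt p W ≤ ∑ W, C.contrib A p v W := by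
  have hu : (univ : Finset (Finset V)) = (insert v (univ.erase v)).powerset := by
    rw [insert_erase (mem_univ v), powerset_univ]
  conv_rhs => rw [hu, sum_powerset_insert (notMem_erase v univ), ← sum_add_distrib]
  rw [mul_sum]
  calc ∑ W : Finset V with v ∉ W ∧ C.Good v W, T / 4 * wt p W
      ≤ ∑ W : Finset V with v ∉ W ∧ C.Good v W,
          (C.contrib A p v W + C.contrib A p v (insert v W)) := by
        refine sum_le_sum fun W hW => ?_
        obtain ⟨-, hv, hg⟩ := mem_filter.1 hW
        exact C.contrib_pair hA h0 h1 hT hv hg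
    _ ≤ _ := by
        refine sum_le_sum_of_subset_of_nonneg (fun W hW => ?_) fun W _ _ =>
          add_nonneg (C.contrib_nonneg hA h0 h1 v W) (C.contrib_nonneg hA h0 h1 v _)
        obtain ⟨-, hv, -⟩ := mem_filter.1 hW
        exact mem_powerset.2 fun x hx => mem_erase.2 ⟨fun h => hv (h ▸ hx), mem_univ _⟩

theorem sum_pairCount_le {s : ℝ} (hs : ∀ a b, (#(C.line a b) : ℝ) ≤ s) (I : Finset V) :
    ∑ v, (pairCount (C.col v) I : ℝ) ≤ #I ^ 2 * s := by
  classical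
  have h : ∑ v, pairCount (C.col v) I = ∑ q ∈ I ×ˢ I, #(C.line q.1 q.2) := by
    simp only [pairCount, line, card_filter]
    rw [sum_comm]
    refine sum_congr rfl fun q _ => sum_congr rfl fun v _ =>
      if_congr ⟨fun h => ?_, fun h => ?_⟩ rfl rfl
    · exact C.rot (C.swap h)
    · exact C.swap (C.rot h)
  calc ∑ v, (pairCount (C.col v) I : ℝ) = ∑ q ∈ I ×ˢ I, (#(C.line q.1 q.2) : ℝ) := by
        exact_mod_cast h
    _ ≤ ∑ _q ∈ I ×ˢ I, s := sum_le_sum fun q _ => hs _ _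
    _ = _ := by rw [sum_const, card_product, nsmul_eq_mul]; push_cast; ring

/-- Any two points of `I` are collinear with at most `s` points `v`, and `#I ≤ s`. -/
theorem sum_contrib_le {A p s : ℝ} (hA : 0 ≤ A) (h0 : 0 ≤ p) (h1 : p ≤ 1)
    (hs : ∀ a b, (#(C.line a b) : ℝ) ≤ s) (hα : ∀ I, C.Ind I → (#I : ℝ) ≤ s) (hs0 : 0 ≤ s) :
    ∑ v, ∑ W, C.contrib A p v W ≤ A * s + s ^ 3 := by
  classical
  rw [sum_comm]
  have hW : ∀ W : Finset V, ∑ v, C.contrib A p v W ≤ wt p W * (A * s + s ^ 3) := by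
    intro W
    have hi : (0 : ℝ) < #(C.indSets W) := by exact_mod_cast C.card_indSets_pos W
    have hw := wt_nonneg h0 h1 W
    unfold contrib
    rw [← mul_sum, sum_comm]
    have hI : ∀ I ∈ C.indSets W,
        ∑ v, ((if v ∈ I then A else 0) + (pairCount (C.col v) I : ℝ)) ≤ A * s + s ^ 3 := by
      intro I hI
      have hIs := hα I (C.mem_indSets.1 hI).2
      have hfil : ({v | v ∈ I} : Finset V) = I := by ext; simp
      rw [sum_add_distrib, ← sum_filter, sum_const, nsmul_eq_mul, hfil]
      have := C.sum_pairCount_le hs I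
      have h2 : (#I : ℝ) ^ 2 * s ≤ s ^ 2 * s := by gcongr
      have h3 : (#I : ℝ) * A ≤ s * A := by gcongr
      nlinarith
    calc wt p W / #(C.indSets W) * _
        ≤ wt p W / #(C.indSets W) * (∑ _I ∈ C.indSets W, (A * s + s ^ 3)) := by
          refine mul_le_mul_of_nonneg_left (sum_le_sum hI) (div_nonneg hw hi.le)
      _ = _ := by
          rw [sum_const, nsmul_eq_mul]
          field_simp
  calc _ ≤ ∑ W : Finset V, wt p W * (A * s + s ^ 3) := sum_le_sum fun W _ => hW W
    _ = _ := by rw [← sum_mul, sum_wt, one_mul]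

/-- Comparison of the lower bound for each `v` with the upper bound for the sum over all `v`. -/
theorem main_ineq {A p s T : ℝ} (hA : 0 ≤ A) (h0 : 0 ≤ p) (h1 : p ≤ 1) (hT0 : 0 ≤ T)
    (hT : ∀ m : ℕ, T ≤ 2 * A * p * (3 / 4) ^ m + m)
    (hs : ∀ a b, (#(C.line a b) : ℝ) ≤ s) (hα : ∀ I, C.Ind I → (#I : ℝ) ≤ s) (hs0 : 0 ≤ s)
    (hp : p + Fintype.card V * s ^ 2 * p ^ 3 + (Fintype.card V : ℝ) ^ 2 * s ^ 3 * p ^ 5 ≤ 1 / 2) :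
    Fintype.card V * T / 8 ≤ A * s + s ^ 3 := by
  classical
  refine le_trans ?_ (C.sum_contrib_le hA h0 h1 hs hα hs0)
  calc Fintype.card V * T / 8 = ∑ _v : V, T / 8 := by simp; ring
    _ ≤ _ := by
        refine sum_le_sum fun v _ => le_trans ?_ (C.vertex_bound hA h0 h1 hT v)
        have := C.prob_good hs h0 h1 v
        calc T / 8 = T / 4 * (1 / 2) := by ring
          _ ≤ _ := by gcongr; linarith

end Collinearity

/-! ### 3-graphs and the choice of parameters -/

/-- The non-edges of a 3-graph whose 4-sets span 0, 3 or 4 edges form a collinearity relation: if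
`abc` and `abd` are non-edges then `abcd` spans at most two edges, hence none. -/
def collinearityOfThreeGraph {n : ℕ} (E : Finset (Finset (Fin n)))
    (hE : ∀ e ∈ E, #e = 3)
    (h1 : ∀ S : Finset (Fin n), #S = 4 → #(E.filter (fun e => e ⊆ S)) ≠ 1)
    (h2 : ∀ S : Finset (Fin n), #S = 4 → #(E.filter (fun e => e ⊆ S)) ≠ 2) :
    Collinearity (Fin n) where
  col a b c := a ≠ b ∧ a ≠ c ∧ b ≠ c ∧ ({a, b, c} : Finset (Fin n)) ∉ E
  ne h := h.1
  swap := by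
    rintro a b c ⟨hab, hac, hbc, h⟩
    exact ⟨hab.symm, hbc, hac, by rwa [insert_comm]⟩
  rot := by
    rintro a b c ⟨hab, hac, hbc, h⟩
    exact ⟨hac, hab, hbc.symm, by rwa [pair_comm]⟩
  trans := by
    rintro a b c d ⟨hab, hac, hbc, habc⟩ ⟨-, had, hbd, habd⟩ hcd
    refine ⟨hac, had, hcd, fun hmem => ?_⟩
    have hS : #({a, b, c, d} : Finset (Fin n)) = 4 := by
      rw [card_insert_of_notMem, card_insert_of_notMem, card_pair hcd] <;> simp [*]
    have hsub : E.filter (fun e => e ⊆ {a, b, c, d}) ⊆ {{a, c, d}, {b, c, d}} := by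
      intro e he
      obtain ⟨heE, heS⟩ := mem_filter.1 he
      obtain ⟨x, hx, hxe⟩ : ∃ x ∈ ({a, b, c, d} : Finset (Fin n)), x ∉ e := by
        by_contra! hall
        have := card_le_card hall
        have := hE e heE
        omega
      have hxS : e = ({a, b, c, d} : Finset (Fin n)).erase x := by
        refine eq_of_subset_of_card_le (subset_erase.2 ⟨heS, hxe⟩) ?_
        rw [card_erase_of_mem hx, hS, hE e heE]
      simp only [mem_insert, mem_singleton] at hx ⊢
      rcases hx with rfl | rfl | rfl | rfl
      · right; rw [hxS]; ext y; simp; grind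
      · left; rw [hxS]; ext y; simp; grind
      · refine absurd (?_ : ({a, b, d} : Finset (Fin n)) ∈ E) habd
        convert heE using 1; rw [hxS]; ext y; simp; grind
      · refine absurd (?_ : ({a, b, c} : Finset (Fin n)) ∈ E) habc
        convert heE using 1; rw [hxS]; ext y; simp; grind
    have hle := (card_le_card hsub).trans card_le_two
    have hpos : 0 < #(E.filter (fun e => e ⊆ {a, b, c, d})) :=
      card_pos.2 ⟨{a, c, d}, mem_filter.2 ⟨hmem, by intro y; simp; tauto⟩⟩
    have := h1 _ hS
    have := h2 _ hS
    omega

theorem exp_threshold (T : ℝ) (m : ℕ) : T ≤ 2 * Real.exp T * (3 / 4) ^ m + m := by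
  rcases le_total T m with h | h
  · have : 0 ≤ 2 * Real.exp T * (3 / 4 : ℝ) ^ m := by positivity
    linarith
  · have h34 : Real.exp (-(1 / 2)) ≤ 3 / 4 := by
      rw [Real.exp_neg, inv_le_comm₀ (Real.exp_pos _) (by norm_num)]
      have := Real.add_one_le_exp (1 / 2 : ℝ)
      linarith
    have hm : Real.exp (-(T / 2)) ≤ (3 / 4 : ℝ) ^ m := by
      calc Real.exp (-(T / 2)) ≤ Real.exp (m * (-(1 / 2))) := Real.exp_le_exp.2 (by linarith)
        _ = Real.exp (-(1 / 2)) ^ m := Real.exp_nat_mul _ _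
        _ ≤ _ := by gcongr
    have h2 : Real.exp T * Real.exp (-(T / 2)) = Real.exp (T / 2) := by
      rw [← Real.exp_add]; ring_nf
    have h3 := Real.add_one_le_exp (T / 2)
    have h4 : Real.exp T * Real.exp (-(T / 2)) ≤ Real.exp T * (3 / 4 : ℝ) ^ m := by gcongr
    have : (0 : ℝ) ≤ m := Nat.cast_nonneg m
    linarith

/-- The parameters: with `x = n ^ (1 / 40)`, take sampling probability `p = x ^ (-25)`, weight
`A = x ^ 26` and `T = log x`. As `s ≤ x ^ 14`, configurations spoiling goodness are unlikely and
`A * s ≤ n`, so that `main_ineq` forces `s ^ 3` to be at least of order `n * log n`. -/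
theorem large_case {n : ℕ} (hn : 0 < n) (C : Collinearity (Fin n)) (hL : 400 ≤ Real.log n)
    {s : ℝ} (hs0 : 0 ≤ s) (hs3 : s ^ 3 ≤ n * Real.log n / 8000)
    (hs : ∀ a b, (#(C.line a b) : ℝ) ≤ s) (hα : ∀ I, C.Ind I → (#I : ℝ) ≤ s) : False := by
  set T := Real.log n / 40 with hT
  set x := Real.exp T with hx
  have hx11 : 11 ≤ x := by
    have := Real.add_one_le_exp T
    linarith
  have hTx : T ≤ x := by
    have := Real.add_one_le_exp T
    linarith
  have hx0 : 0 < x := by linarith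
  have hn40 : (n : ℝ) = x ^ 40 := by
    rw [hx, ← Real.exp_nat_mul, hT]
    push_cast
    rw [mul_div_cancel₀ _ (by norm_num), Real.exp_log (by exact_mod_cast hn)]
  have hlog : Real.log n = 40 * T := by rw [hT]; ring
  rw [hlog, hn40] at hs3
  have hs14 : s ≤ x ^ 14 := by
    refine le_of_pow_le_pow_left₀ (n := 3) (by norm_num) (by positivity) (hs3.trans ?_)
    calc x ^ 40 * (40 * T) / 8000 ≤ x ^ 40 * x ^ 2 := by
          rw [mul_div_assoc]
          gcongr
          nlinarith
      _ = _ := by ring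
  have hpow : ∀ k : ℕ, k ≠ 0 → (x ^ k)⁻¹ ≤ 1 / 6 := by
    intro k hk
    rw [one_div]
    refine inv_anti₀ (by norm_num) ?_
    have := le_self_pow₀ (by linarith : 1 ≤ x) hk
    linarith
  have key := C.main_ineq (A := x ^ 26) (p := (x ^ 25)⁻¹) (s := s) (T := T) (by positivity)
    (by positivity) ((hpow 25 (by norm_num)).trans (by norm_num)) (by linarith) (fun m => ?_)
    hs hα hs0 ?_
  · rw [Fintype.card_fin, hn40] at key
    have h26 : x ^ 26 * s ≤ x ^ 40 := by
      calc x ^ 26 * s ≤ x ^ 26 * x ^ 14 := by gcongr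
        _ = _ := by ring
    have hT10 : 10 ≤ T := by linarith
    have hx40 : 0 < x ^ 40 := by positivity
    nlinarith
  · have e : 2 * x ^ 26 * (x ^ 25)⁻¹ = 2 * x := by field_simp
    rw [e]
    exact exp_threshold T m
  · rw [Fintype.card_fin, hn40]
    have a1 := hpow 25 (by norm_num)
    have a2 : x ^ 40 * s ^ 2 * (x ^ 25)⁻¹ ^ 3 ≤ 1 / 6 := by
      calc x ^ 40 * s ^ 2 * (x ^ 25)⁻¹ ^ 3 ≤ x ^ 40 * (x ^ 14) ^ 2 * (x ^ 25)⁻¹ ^ 3 := by gcongr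
        _ = (x ^ 7)⁻¹ := by field_simp
        _ ≤ _ := hpow 7 (by norm_num)
    have a3 : (x ^ 40) ^ 2 * s ^ 3 * (x ^ 25)⁻¹ ^ 5 ≤ 1 / 6 := by
      calc (x ^ 40) ^ 2 * s ^ 3 * (x ^ 25)⁻¹ ^ 5
          ≤ (x ^ 40) ^ 2 * (x ^ 14) ^ 3 * (x ^ 25)⁻¹ ^ 5 := by gcongr
        _ = (x ^ 3)⁻¹ := by field_simp
        _ ≤ _ := hpow 3 (by norm_num)
    linarith

/-- There is `c > 0` such that for all `n ≥ 6`, every `n`-vertex 3-graph in which no 4-element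
vertex set spans exactly 1 edge and no 4-element vertex set spans exactly 2 edges has a
homogeneous set of size greater than `c * (n * log n)^(1/3)`. -/
theorem stmt_5 :
    ∃ c : ℝ, 0 < c ∧ ∀ n : ℕ, 6 ≤ n → ∀ E : Finset (Finset (Fin n)),
      (∀ e ∈ E, e.card = 3) →
      (∀ S : Finset (Fin n), S.card = 4 → (E.filter (fun e => e ⊆ S)).card ≠ 1) →
      (∀ S : Finset (Fin n), S.card = 4 → (E.filter (fun e => e ⊆ S)).card ≠ 2) →
      ∃ S : Finset (Fin n),
        ((∀ T ⊆ S, T.card = 3 → T ∈ E) ∨ (∀ T ⊆ S, T.card = 3 → T ∉ E)) ∧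
        c * ((n : ℝ) * Real.log n) ^ ((1 : ℝ) / 3) < (S.card : ℝ) := by
  set K : ℝ := Real.exp 400 * 400 with hK
  have hK400 : 400 ≤ K := by
    have := Real.one_le_exp (show (0 : ℝ) ≤ 400 by norm_num)
    linarith
  have hc : K⁻¹ ≤ 1 / 20 := by
    rw [one_div]; exact inv_anti₀ (by norm_num) (by linarith)
  have hc0 : 0 < K⁻¹ := by positivity
  refine ⟨K⁻¹, hc0, fun n hn E hE h1 h2 => ?_⟩
  have hn' : (6 : ℝ) ≤ n := by exact_mod_cast hn
  have hlog0 : 0 ≤ Real.log n := Real.log_nonneg (by linarith)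
  have hy0 : 0 ≤ (n : ℝ) * Real.log n := by positivity
  rcases lt_or_ge (Real.log n) 400 with hL | hL
  -- For bounded `n` any two vertices form a (vacuously) homogeneous set that is large enough.
  · obtain ⟨S, -, hS⟩ := exists_subset_card_eq (s := (univ : Finset (Fin n))) (n := 2)
      (by rw [card_fin]; omega)
    refine ⟨S, Or.inl fun T hT hT3 => ?_, ?_⟩
    · have := card_le_card hT
      omega
    · have hnK : (n : ℝ) * Real.log n ≤ K := by
        have : (n : ℝ) ≤ Real.exp 400 := by
          rw [← Real.log_le_iff_le_exp (by linarith)]; exact hL.le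
        exact mul_le_mul this hL.le hlog0 (Real.exp_pos _).le
      have : ((n : ℝ) * Real.log n) ^ ((1 : ℝ) / 3) ≤ K :=
        calc ((n : ℝ) * Real.log n) ^ ((1 : ℝ) / 3) ≤ K ^ ((1 : ℝ) / 3) :=
              Real.rpow_le_rpow hy0 hnK (by norm_num)
          _ ≤ K ^ (1 : ℝ) := Real.rpow_le_rpow_of_exponent_le (by linarith) (by norm_num)
          _ = K := Real.rpow_one K
      rw [hS]
      calc K⁻¹ * ((n : ℝ) * Real.log n) ^ ((1 : ℝ) / 3) ≤ K⁻¹ * K := by gcongr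
        _ = 1 := inv_mul_cancel₀ (by linarith)
        _ < _ := by norm_num
  · by_contra! hcon
    set s := K⁻¹ * ((n : ℝ) * Real.log n) ^ ((1 : ℝ) / 3) with hs
    have hs0 : 0 ≤ s := by positivity
    have hs3 : s ^ 3 ≤ n * Real.log n / 8000 := by
      have e : (((n : ℝ) * Real.log n) ^ ((1 : ℝ) / 3)) ^ 3 = n * Real.log n := by
        rw [← Real.rpow_natCast, ← Real.rpow_mul hy0]
        norm_num
      have hc3 : K⁻¹ ^ 3 ≤ (1 / 20) ^ 3 := by gcongr
      rw [hs, mul_pow, e]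
      nlinarith
    set C := collinearityOfThreeGraph E hE h1 h2 with hC
    refine large_case (by omega) C hL hs0 hs3 (fun a b => hcon _ (Or.inr fun T hT hT3 => ?_))
      fun I hI => hcon _ (Or.inl fun T hT hT3 => ?_)
    · obtain ⟨x, y, z, hxy, hxz, hyz, rfl⟩ := card_eq_three.1 hT3
      have hx := C.mem_line.1 (hT (by simp : x ∈ _))
      have hy := C.mem_line.1 (hT (by simp : y ∈ _))
      have hz := C.mem_line.1 (hT (by simp : z ∈ _))
      have hxyz : C.col x y z :=
        C.trans (C.swap (C.trans hx hy hxy)) (C.swap (C.trans hx hz hxz)) hyz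
      exact hxyz.2.2.2
    · obtain ⟨x, y, z, hxy, hxz, hyz, rfl⟩ := card_eq_three.1 hT3
      by_contra hmem
      exact hI x (hT (by simp)) y (hT (by simp)) z (hT (by simp)) ⟨hxy, hxz, hyz, hmem⟩
end

section
/- For all n ≥ 2, every n-vertex 3-graph in which no 4-element vertex set spans exactly 1 edge and no 4-element vertex set spans exactly 3 edges has a homogeneous set of size at least (1/2) · log₂ n. -/
/-!
A 3-graph all of whose 4-sets span 0, 2 or 4 edges is a two-graph, hence is determined by its link
at one vertex `v`: let `G` be the graph on the other vertices with `x ~ y` iff `{v, x, y}` is an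
edge. If `T` is a triple avoiding `v`, then the number of edges in `T ∪ {v}` is the number of
`G`-edges inside `T`, plus one if `T` itself is an edge. As this number is neither 1 nor 3, a
`G`-triangle is an edge (`mem_of_link_clique`) and a `G`-independent triple is not
(`notMem_of_link_coclique`), so homogeneous sets of `G` are homogeneous in the 3-graph.
The bound `R(a + 1, b + 1) ≤ 2 ^ (a + b)` for graph Ramsey numbers (`ramsey_two_pow`), applied to
`G` with `a = b = ⌈log₄ n⌉ - 1`, finishes the proof.
-/

/-- The Erdős–Szekeres type bound `R(a + 1, b + 1) ≤ 2 ^ (a + b)` for the graph Ramsey number,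
for the graph on `A` with the symmetric relation `G` as adjacency. -/
lemma ramsey_two_pow {α : Type*} [DecidableEq α] (G : α → α → Prop) (hG : ∀ x y, G x y → G y x)
    (m : ℕ) : ∀ (a b : ℕ) (A : Finset α), a + b = m → 2 ^ m ≤ A.card →
      (∃ S ⊆ A, S.card = a + 1 ∧ ∀ x ∈ S, ∀ y ∈ S, x ≠ y → G x y) ∨
      (∃ S ⊆ A, S.card = b + 1 ∧ ∀ x ∈ S, ∀ y ∈ S, x ≠ y → ¬ G x y) := by
  classical
  induction m with
  | zero =>
    intro a b A hab hA
    obtain ⟨v, hv⟩ : A.Nonempty := Finset.card_pos.mp (by simpa using hA)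
    refine Or.inl ⟨{v}, by simpa using hv, ?_, ?_⟩
    · simp; omega
    · simp
  | succ m ih =>
    intro a b A hab hA
    obtain ⟨v, hv⟩ : A.Nonempty := Finset.card_pos.mp (lt_of_lt_of_le (by positivity) hA)
    have hsum := Finset.card_filter_add_card_filter_not (s := A.erase v) (fun x => G v x)
    rw [Finset.card_erase_of_mem hv] at hsum
    rw [pow_succ] at hA
    rcases Nat.lt_or_ge ((A.erase v).filter (fun x => G v x)).card (2 ^ m) with hlt | hge
    · have hge : 2 ^ m ≤ ((A.erase v).filter (fun x => ¬ G v x)).card := by omega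
      cases b with
      | zero => exact Or.inr ⟨{v}, by simpa using hv, by simp, by simp⟩
      | succ b =>
        rcases ih a b _ (by omega) hge with ⟨S, hS, hc, h⟩ | ⟨S, hS, hc, h⟩
        · exact Or.inl ⟨S, fun x hx => by have := hS hx; simp_all, hc, h⟩
        · have hN : ∀ x ∈ S, (x ≠ v ∧ x ∈ A) ∧ ¬ G v x := fun x hx => by
            simpa using hS hx
          refine Or.inr ⟨insert v S, ?_, ?_, ?_⟩
          · intro x hx
            rcases Finset.mem_insert.mp hx with rfl | hx
            exacts [hv, (hN x hx).1.2]
          · rw [Finset.card_insert_of_notMem (fun hx => (hN v hx).1.1 rfl), hc]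
          · intro x hx y hy hxy
            rcases Finset.mem_insert.mp hx with hxv | hxS <;>
              rcases Finset.mem_insert.mp hy with hyv | hyS
            exacts [absurd (hxv.trans hyv.symm) hxy, hxv ▸ (hN y hyS).2,
              fun h' => (hN x hxS).2 (hyv ▸ hG _ _ h'), h x hxS y hyS hxy]
    · cases a with
      | zero => exact Or.inl ⟨{v}, by simpa using hv, by simp, by simp⟩
      | succ a =>
        rcases ih a b _ (by omega) hge with ⟨S, hS, hc, h⟩ | ⟨S, hS, hc, h⟩
        · have hN : ∀ x ∈ S, (x ≠ v ∧ x ∈ A) ∧ G v x := fun x hx => by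
            simpa using hS hx
          refine Or.inl ⟨insert v S, ?_, ?_, ?_⟩
          · intro x hx
            rcases Finset.mem_insert.mp hx with rfl | hx
            exacts [hv, (hN x hx).1.2]
          · rw [Finset.card_insert_of_notMem (fun hx => (hN v hx).1.1 rfl), hc]
          · intro x hx y hy hxy
            rcases Finset.mem_insert.mp hx with hxv | hxS <;>
              rcases Finset.mem_insert.mp hy with hyv | hyS
            exacts [absurd (hxv.trans hyv.symm) hxy, hxv ▸ (hN y hyS).2,
              hyv ▸ hG _ _ (hN x hxS).2, h x hxS y hyS hxy]
        · exact Or.inr ⟨S, fun x hx => by have := hS hx; simp_all, hc, h⟩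

/-- For a triple `T` avoiding `v`, a triple inside `T ∪ {v}` is either `T` or `(T ∪ {v}) \ {a}`
with `a ∈ T`. -/
lemma triple_cases {α : Type*} [DecidableEq α] {T e : Finset α} {v : α} (hT : T.card = 3)
    (hv : v ∉ T) (he : e.card = 3) (hsub : e ⊆ insert v T) :
    e = T ∨ ∃ a ∈ T, e = (insert v T).erase a := by
  have hc : (insert v T).card = 4 := by rw [Finset.card_insert_of_notMem hv, hT]
  obtain ⟨a, ha, hae⟩ := Finset.exists_mem_notMem_of_card_lt_card (s := e) (t := insert v T)
    (by omega)
  have heq : e = (insert v T).erase a :=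
    Finset.eq_of_subset_of_card_le (Finset.subset_erase.mpr ⟨hsub, hae⟩)
      (by rw [Finset.card_erase_of_mem ha, hc, he])
  rcases Finset.mem_insert.mp ha with rfl | ha
  · exact Or.inl (by rw [heq, Finset.erase_insert hv])
  · exact Or.inr ⟨a, ha, heq⟩

lemma erase_insert_eq_triple {α : Type*} [DecidableEq α] {T : Finset α} {v a : α}
    (hT : T.card = 3) (hv : v ∉ T) (ha : a ∈ T) :
    ∃ x ∈ T, ∃ y ∈ T, x ≠ y ∧ (insert v T).erase a = {v, x, y} := by
  have hc : (T.erase a).card = 2 := by rw [Finset.card_erase_of_mem ha, hT]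
  obtain ⟨x, y, hxy, hxyT⟩ := Finset.card_eq_two.mp hc
  refine ⟨x, Finset.mem_of_mem_erase (a := a) (by simp [hxyT]), y,
    Finset.mem_of_mem_erase (a := a) (by simp [hxyT]), hxy, ?_⟩
  rw [Finset.erase_insert_of_ne (show v ≠ a from fun h => hv (h ▸ ha)), hxyT]

lemma mem_of_link_clique {α : Type*} [DecidableEq α] {E : Finset (Finset α)}
    (hE : ∀ e ∈ E, e.card = 3)
    (h3 : ∀ S : Finset α, S.card = 4 → (E.filter (fun e => e ⊆ S)).card ≠ 3)
    {T : Finset α} {v : α} (hT : T.card = 3) (hv : v ∉ T)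
    (h : ∀ x ∈ T, ∀ y ∈ T, x ≠ y → {v, x, y} ∈ E) : T ∈ E := by
  by_contra hTE
  refine h3 (insert v T) (by rw [Finset.card_insert_of_notMem hv, hT]) ?_
  have key : E.filter (fun e => e ⊆ insert v T) = T.image (fun a => (insert v T).erase a) := by
    ext e
    simp only [Finset.mem_filter, Finset.mem_image]
    constructor
    · rintro ⟨he, hsub⟩
      rcases triple_cases hT hv (hE e he) hsub with rfl | ⟨a, ha, rfl⟩
      exacts [absurd he hTE, ⟨a, ha, rfl⟩]
    · rintro ⟨a, ha, rfl⟩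
      obtain ⟨x, hx, y, hy, hxy, heq⟩ := erase_insert_eq_triple hT hv ha
      exact ⟨heq ▸ h x hx y hy hxy, Finset.erase_subset _ _⟩
  rw [key, Finset.card_image_of_injOn, hT]
  intro a ha b hb hab
  exact (Finset.erase_injOn (insert v T)) (Finset.mem_insert_of_mem ha)
    (Finset.mem_insert_of_mem hb) hab

lemma notMem_of_link_coclique {α : Type*} [DecidableEq α] {E : Finset (Finset α)}
    (hE : ∀ e ∈ E, e.card = 3)
    (h1 : ∀ S : Finset α, S.card = 4 → (E.filter (fun e => e ⊆ S)).card ≠ 1)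
    {T : Finset α} {v : α} (hT : T.card = 3) (hv : v ∉ T)
    (h : ∀ x ∈ T, ∀ y ∈ T, x ≠ y → {v, x, y} ∉ E) : T ∉ E := by
  intro hTE
  refine h1 (insert v T) (by rw [Finset.card_insert_of_notMem hv, hT])
    (Finset.card_eq_one.mpr ⟨T, ?_⟩)
  ext e
  simp only [Finset.mem_filter, Finset.mem_singleton]
  constructor
  · rintro ⟨he, hsub⟩
    rcases triple_cases hT hv (hE e he) hsub with rfl | ⟨a, ha, rfl⟩
    · rfl
    · obtain ⟨x, hx, y, hy, hxy, heq⟩ := erase_insert_eq_triple hT hv ha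
      exact absurd (heq ▸ he) (h x hx y hy hxy)
  · rintro rfl
    exact ⟨hTE, Finset.subset_insert _ _⟩

/-- For all `n ≥ 2`, every `n`-vertex 3-graph in which no 4-element vertex set spans exactly 1
edge and no 4-element vertex set spans exactly 3 edges has a homogeneous set of size at least
`(1/2) * log₂ n`. -/
theorem stmt_6 (n : ℕ) (hn : 2 ≤ n) (E : Finset (Finset (Fin n)))
    (hE : ∀ e ∈ E, e.card = 3)
    (h1 : ∀ S : Finset (Fin n), S.card = 4 → (E.filter (fun e => e ⊆ S)).card ≠ 1)
    (h3 : ∀ S : Finset (Fin n), S.card = 4 → (E.filter (fun e => e ⊆ S)).card ≠ 3) :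
    ∃ S : Finset (Fin n),
      ((∀ T ⊆ S, T.card = 3 → T ∈ E) ∨ (∀ T ⊆ S, T.card = 3 → T ∉ E)) ∧
      (1 / 2 : ℝ) * Real.logb 2 n ≤ (S.card : ℝ) := by
  obtain ⟨k, hk, hlt⟩ : ∃ k, n ≤ 4 ^ (k + 1) ∧ 4 ^ k < n := by
    have hpos : 0 < Nat.clog 4 n := Nat.clog_pos (by norm_num) hn
    refine ⟨Nat.clog 4 n - 1, ?_, Nat.pow_pred_clog_lt_self (by norm_num) (by omega)⟩
    rw [Nat.sub_add_cancel hpos]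
    exact Nat.le_pow_clog (by norm_num) n
  have hlog : (1 / 2 : ℝ) * Real.logb 2 n ≤ ((k + 1 : ℕ) : ℝ) := by
    have h2 : Real.logb 2 n ≤ ((2 * (k + 1) : ℕ) : ℝ) := by
      rw [Real.logb_le_iff_le_rpow (by norm_num) (by positivity), Real.rpow_natCast, pow_mul]
      norm_num
      exact_mod_cast hk
    push_cast at h2 ⊢
    linarith
  let v : Fin n := ⟨0, by omega⟩
  have hcard : 2 ^ (k + k) ≤ (Finset.univ.erase v).card := by
    rw [Finset.card_erase_of_mem (Finset.mem_univ v), Finset.card_univ, Fintype.card_fin,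
      ← two_mul, pow_mul]
    norm_num
    omega
  rcases ramsey_two_pow (fun x y => ({v, x, y} : Finset (Fin n)) ∈ E)
    (fun x y h => by rwa [Finset.pair_comm y x]) (k + k) k k _ rfl hcard with
    ⟨S, hS, hc, h⟩ | ⟨S, hS, hc, h⟩
  · refine ⟨S, Or.inl fun T hTS hT => mem_of_link_clique hE h3 hT (v := v) ?_ ?_, hc ▸ hlog⟩
    · exact fun hv => by simpa using hS (hTS hv)
    · exact fun x hx y hy => h x (hTS hx) y (hTS hy)
  · refine ⟨S, Or.inr fun T hTS hT => notMem_of_link_coclique hE h1 hT (v := v) ?_ ?_, hc ▸ hlog⟩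
    · exact fun hv => by simpa using hS (hTS hv)
    · exact fun x hx y hy => h x (hTS hx) y (hTS hy)
end

section
/- Let χ be a red/blue coloring of the edges of the complete graph on an n-element vertex set V (n ≥ 1), and let H be the 3-graph on V whose edges are exactly the 3-element subsets of V spanning an odd number (one or three) of red edges under χ. Then: (a) every 4-element subset of V spans exactly 0, 2, or 4 edges of H; and (b) every homogeneous set S of H contains a subset of size at least √|S| that is a monochromatic clique under χ. In particular, if every monochromatic clique under χ has size at most 2·log₂ n, then h(H) ≤ 4·(log₂ n)². -/
/-!
For distinct `a, b, c` the triple `{a, b, c}` is an edge exactly when the exclusive or of the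
colors of its three pairs is `true` (`mem_edges_iff_xor`).

For (a), each of the six pairs of a 4-set lies in exactly two of its four triples, so the four
exclusive ors cancel and the number of edges is even.

For (b), let `t` be the common value of the exclusive or on the triples of a homogeneous set `S`
and fix `v ∈ S`. Split `S` into `v` together with the vertices joined to `v` in color `t`, and the
vertices joined to `v` in the other color. For `a, b` in the same part the colors of `va` and `vb`
cancel, so `ab` has color `t`: both parts are monochromatic (`exists_mono_half`). The larger part
has at least `|S| / 2` vertices, hence at least `√|S|` unless `|S| = 2`, and a 2-element set is
itself monochromatic. The last claim follows by squaring.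
-/

/-- Membership in the 3-graph of odd red triples, as an exclusive or of the three colors. -/
lemma mem_edges_iff_xor {n : ℕ} {χ : Finset (Fin n) → Bool} {E : Finset (Finset (Fin n))}
    (hE : ∀ T : Finset (Fin n), T ∈ E ↔ T.card = 3 ∧
      Odd ((T.powersetCard 2).filter (fun p => χ p = true)).card)
    {a b c : Fin n} (hab : a ≠ b) (hac : a ≠ c) (hbc : b ≠ c) :
    ({a, b, c} : Finset (Fin n)) ∈ E ↔ (χ {a, b} ^^ χ {a, c} ^^ χ {b, c}) = true := by
  have hcard : ({a, b, c} : Finset (Fin n)).card = 3 :=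
    Finset.card_eq_three.2 ⟨a, b, c, hab, hac, hbc, rfl⟩
  have n1 : ({a, b} : Finset (Fin n)) ≠ {a, c} := fun h => by
    have : b ∈ ({a, c} : Finset (Fin n)) := h ▸ by simp
    grind
  have n2 : ({a, b} : Finset (Fin n)) ≠ {b, c} := fun h => by
    have : a ∈ ({b, c} : Finset (Fin n)) := h ▸ by simp
    grind
  have n3 : ({a, c} : Finset (Fin n)) ≠ {b, c} := fun h => by
    have : a ∈ ({b, c} : Finset (Fin n)) := h ▸ by simp
    grind
  have hps : ({a, b, c} : Finset (Fin n)).powersetCard 2 = {{a, b}, {a, c}, {b, c}} := by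
    symm
    apply Finset.eq_of_subset_of_card_le
    · intro p hp
      simp only [Finset.mem_insert, Finset.mem_singleton] at hp
      rw [Finset.mem_powersetCard]
      rcases hp with rfl | rfl | rfl
      · exact ⟨by grind, Finset.card_pair hab⟩
      · exact ⟨by grind, Finset.card_pair hac⟩
      · exact ⟨by grind, Finset.card_pair hbc⟩
    · rw [Finset.card_powersetCard, hcard,
        Finset.card_eq_three.2 ⟨_, _, _, n1, n2, n3, rfl⟩]
      decide
  rw [hE, hps, Finset.card_filter, Finset.sum_insert (by simp [n1, n2]),
    Finset.sum_pair n3]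
  simp only [hcard, true_and]
  cases χ {a, b} <;> cases χ {a, c} <;> cases χ {b, c} <;> decide

/-- The number of edges in a 4-set is even and at most 4. -/
lemma card_edges_four {n : ℕ} {χ : Finset (Fin n) → Bool} {E : Finset (Finset (Fin n))}
    (hE : ∀ T : Finset (Fin n), T ∈ E ↔ T.card = 3 ∧
      Odd ((T.powersetCard 2).filter (fun p => χ p = true)).card)
    (S : Finset (Fin n)) (hS : S.card = 4) :
    (E.filter (fun e => e ⊆ S)).card = 0 ∨ (E.filter (fun e => e ⊆ S)).card = 2 ∨
      (E.filter (fun e => e ⊆ S)).card = 4 := by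
  have h1 : E.filter (fun e => e ⊆ S) = (S.powersetCard 3).filter (fun e => e ∈ E) := by
    ext e
    simp only [Finset.mem_filter, Finset.mem_powersetCard]
    have := hE e
    tauto
  -- the triples of a 4-set are the complements of its points
  have h2 : S.powersetCard 3 = S.image S.erase := by
    symm
    apply Finset.eq_of_subset_of_card_le
    · intro p hp
      obtain ⟨x, hx, rfl⟩ := Finset.mem_image.1 hp
      rw [Finset.mem_powersetCard, Finset.card_erase_of_mem hx, hS]
      exact ⟨Finset.erase_subset _ _, rfl⟩
    · rw [Finset.card_powersetCard, Finset.card_image_of_injOn (Finset.erase_injOn S), hS]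
      decide
  rw [h1, h2, Finset.card_filter, Finset.sum_image (Finset.erase_injOn S)]
  obtain ⟨a, b, c, d, hab, hac, had, hbc, hbd, hcd, rfl⟩ := Finset.card_eq_four.1 hS
  have ea : ({a, b, c, d} : Finset (Fin n)).erase a = {b, c, d} := by grind
  have eb : ({a, b, c, d} : Finset (Fin n)).erase b = {a, c, d} := by grind
  have ec : ({a, b, c, d} : Finset (Fin n)).erase c = {a, b, d} := by grind
  have ed : ({a, b, c, d} : Finset (Fin n)).erase d = {a, b, c} := by grind
  rw [Finset.sum_insert (by simp [hab, hac, had]), Finset.sum_insert (by simp [hbc, hbd]),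
    Finset.sum_pair hcd, ea, eb, ec, ed]
  simp only [mem_edges_iff_xor hE hbc hbd hcd, mem_edges_iff_xor hE hac had hcd,
    mem_edges_iff_xor hE hab had hbd, mem_edges_iff_xor hE hab hac hbc]
  generalize χ {a, b} = x₁, χ {a, c} = x₂, χ {a, d} = x₃, χ {b, c} = x₄, χ {b, d} = x₅,
    χ {c, d} = x₆
  revert x₁ x₂ x₃ x₄ x₅ x₆
  decide

/-- If the exclusive or of the three colors is constant on the triples of `S`, then `S` contains
a monochromatic clique on at least half of its vertices. -/
lemma exists_mono_half {n : ℕ} {χ : Finset (Fin n) → Bool} (S : Finset (Fin n)) (t : Bool)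
    (ht : ∀ a ∈ S, ∀ b ∈ S, ∀ c ∈ S, a ≠ b → a ≠ c → b ≠ c →
      (χ {a, b} ^^ χ {a, c} ^^ χ {b, c}) = t) :
    ∃ M ⊆ S, (∀ p ⊆ M, p.card = 2 → χ p = t) ∧ S.card ≤ 2 * M.card := by
  rcases S.eq_empty_or_nonempty with rfl | ⟨v, hv⟩
  · refine ⟨∅, by simp, fun p hp h2 => ?_, by simp⟩
    rw [Finset.subset_empty.1 hp] at h2
    simp at h2
  have hsum := Finset.card_filter_add_card_filter_not (s := S)
    (fun x => x = v ∨ χ {v, x} = t)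
  rcases le_total (S.filter (fun x => x = v ∨ χ {v, x} = t)).card
    (S.filter (fun x => ¬ (x = v ∨ χ {v, x} = t))).card with h | h
  · refine ⟨S.filter (fun x => ¬ (x = v ∨ χ {v, x} = t)), Finset.filter_subset _ _,
      fun p hp h2 => ?_, by omega⟩
    obtain ⟨a, b, hab, rfl⟩ := Finset.card_eq_two.1 h2
    have ha := Finset.mem_filter.1 (hp (by simp : a ∈ ({a, b} : Finset (Fin n))))
    have hb := Finset.mem_filter.1 (hp (by simp : b ∈ ({a, b} : Finset (Fin n))))
    obtain ⟨ha1, ha2⟩ := not_or.1 ha.2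
    obtain ⟨hb1, hb2⟩ := not_or.1 hb.2
    have := ht v hv a ha.1 b hb.1 (Ne.symm ha1) (Ne.symm hb1) hab
    revert this ha2 hb2
    generalize χ {v, a} = x, χ {v, b} = y, χ {a, b} = z
    clear ht hsum h hp ha hb
    revert x y z t
    decide
  · refine ⟨S.filter (fun x => x = v ∨ χ {v, x} = t), Finset.filter_subset _ _,
      fun p hp h2 => ?_, by omega⟩
    obtain ⟨a, b, hab, rfl⟩ := Finset.card_eq_two.1 h2
    have ha := Finset.mem_filter.1 (hp (by simp : a ∈ ({a, b} : Finset (Fin n))))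
    have hb := Finset.mem_filter.1 (hp (by simp : b ∈ ({a, b} : Finset (Fin n))))
    by_cases hav : a = v
    · subst hav
      exact hb.2.resolve_left (Ne.symm hab)
    by_cases hbv : b = v
    · subst hbv
      rw [Finset.pair_comm]
      exact ha.2.resolve_left hab
    have ha2 := ha.2.resolve_left hav
    have hb2 := hb.2.resolve_left hbv
    have := ht v hv a ha.1 b hb.1 (Ne.symm hav) (Ne.symm hbv) hab
    rw [ha2, hb2] at this
    simpa using this

/-- A homogeneous set `S` contains a monochromatic clique of size at least `√|S|`. -/
lemma exists_mono_sqrt {n : ℕ} {χ : Finset (Fin n) → Bool} {E : Finset (Finset (Fin n))}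
    (hE : ∀ T : Finset (Fin n), T ∈ E ↔ T.card = 3 ∧
      Odd ((T.powersetCard 2).filter (fun p => χ p = true)).card)
    (S : Finset (Fin n))
    (hS : (∀ T ⊆ S, T.card = 3 → T ∈ E) ∨ (∀ T ⊆ S, T.card = 3 → T ∉ E)) :
    ∃ M ⊆ S,
      ((∀ p ⊆ M, p.card = 2 → χ p = true) ∨ (∀ p ⊆ M, p.card = 2 → χ p = false)) ∧
      Real.sqrt S.card ≤ (M.card : ℝ) := by
  have key : ∃ M ⊆ S,
      ((∀ p ⊆ M, p.card = 2 → χ p = true) ∨ (∀ p ⊆ M, p.card = 2 → χ p = false)) ∧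
      S.card ≤ M.card ^ 2 := by
    by_cases h2 : S.card = 2
    · refine ⟨S, subset_rfl, ?_, by rw [h2]; norm_num⟩
      have hp : ∀ p ⊆ S, p.card = 2 → p = S := fun p hp hc =>
        Finset.eq_of_subset_of_card_le hp (by omega)
      cases hc : χ S
      · exact Or.inr fun p h h' => by rw [hp p h h', hc]
      · exact Or.inl fun p h h' => by rw [hp p h h', hc]
    · have hhalf : ∀ m : ℕ, S.card ≤ 2 * m → S.card ≤ m ^ 2 := by
        intro m hm
        rcases Nat.lt_or_ge m 2 with h | h
        · interval_cases m <;> omega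
        · nlinarith
      have hcard : ∀ a b c : Fin n, a ≠ b → a ≠ c → b ≠ c →
          ({a, b, c} : Finset (Fin n)).card = 3 := fun a b c hab hac hbc =>
        Finset.card_eq_three.2 ⟨a, b, c, hab, hac, hbc, rfl⟩
      rcases hS with hS | hS
      · obtain ⟨M, hM, hmono, hle⟩ := exists_mono_half (χ := χ) S true
          fun a ha b hb c hc hab hac hbc => (mem_edges_iff_xor hE hab hac hbc).1
            (hS _ (by grind) (hcard a b c hab hac hbc))
        exact ⟨M, hM, Or.inl hmono, hhalf _ hle⟩
      · obtain ⟨M, hM, hmono, hle⟩ := exists_mono_half (χ := χ) S false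
          fun a ha b hb c hc hab hac hbc => Bool.eq_false_iff.2 fun h =>
            hS _ (by grind) (hcard a b c hab hac hbc) ((mem_edges_iff_xor hE hab hac hbc).2 h)
        exact ⟨M, hM, Or.inr hmono, hhalf _ hle⟩
  obtain ⟨M, hM, hmono, hle⟩ := key
  exact ⟨M, hM, hmono, Real.sqrt_le_iff.2 ⟨by positivity, by exact_mod_cast hle⟩⟩

/-- Let `χ` be a red/blue coloring of the 2-element subsets of an `n`-element vertex set
(`red` = `true`), and let `H` be the 3-graph whose edges are exactly the 3-element subsets
spanning an odd number of red edges. Then (a) every 4-element subset spans exactly 0, 2 or 4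
edges of `H`; (b) every homogeneous set `S` of `H` contains a monochromatic clique of size at
least `√|S|`; in particular, if every monochromatic clique has size at most `2 log₂ n`, then
every homogeneous set of `H` has size at most `4 (log₂ n)²`. -/
theorem stmt_7 (n : ℕ) (hn : 1 ≤ n) (χ : Finset (Fin n) → Bool)
    (E : Finset (Finset (Fin n)))
    (hE : ∀ T : Finset (Fin n), T ∈ E ↔ T.card = 3 ∧
      Odd ((T.powersetCard 2).filter (fun p => χ p = true)).card) :
    (∀ S : Finset (Fin n), S.card = 4 →
      (E.filter (fun e => e ⊆ S)).card = 0 ∨ (E.filter (fun e => e ⊆ S)).card = 2 ∨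
        (E.filter (fun e => e ⊆ S)).card = 4) ∧
    (∀ S : Finset (Fin n),
      ((∀ T ⊆ S, T.card = 3 → T ∈ E) ∨ (∀ T ⊆ S, T.card = 3 → T ∉ E)) →
      ∃ M ⊆ S,
        ((∀ p ⊆ M, p.card = 2 → χ p = true) ∨ (∀ p ⊆ M, p.card = 2 → χ p = false)) ∧
        Real.sqrt S.card ≤ (M.card : ℝ)) ∧
    ((∀ M : Finset (Fin n),
        ((∀ p ⊆ M, p.card = 2 → χ p = true) ∨ (∀ p ⊆ M, p.card = 2 → χ p = false)) →
        (M.card : ℝ) ≤ 2 * Real.logb 2 n) →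
      ∀ S : Finset (Fin n),
        ((∀ T ⊆ S, T.card = 3 → T ∈ E) ∨ (∀ T ⊆ S, T.card = 3 → T ∉ E)) →
        (S.card : ℝ) ≤ 4 * (Real.logb 2 n) ^ 2) := by
  refine ⟨card_edges_four hE, exists_mono_sqrt hE, fun hM S hS => ?_⟩
  obtain ⟨M, -, hmono, hle⟩ := exists_mono_sqrt hE S hS
  have h := (Real.sqrt_le_iff.1 (hle.trans (hM M hmono))).2
  linarith [mul_pow 2 (Real.logb 2 n) 2]
end
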